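/- Let Φ be of type B_n, C_n, or D_n, let I, J ⊆ Δ with I standard, and let λ be an integral Φ_I-regular weight with Φ_{λ̄} = Φ_J. Let 1 ≤ i, j ≤ q_{m−1} with λ_iλ_j ≠ 0 and suppose s_{e_i}s_{e_j}λ is Φ_I-regular. If λ ⟷̸ s_{e_i}s_{e_j}λ, then (Φ, Φ_I, Φ_J) is strongly separable. -/

import Mathlib

namespace JantzenBlocks

open scoped Classical

/-- The three classical types `B`, `C`, `D`. -/
inductive CType : Type
  | B | C | D
deriving DecidableEq

/-- The weight space `ℝ^n`. -/
abbrev V (n : ℕ) := Fin n → ℝ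

noncomputable section

/-- The standard inner product on `ℝ^n`. -/
def inn {n : ℕ} (x y : V n) : ℝ := ∑ i, x i * y i

/-- The standard basis vector `e i`. -/
def ee {n : ℕ} (i : Fin n) : V n := Pi.single i 1

/-- The reflection `s_v` in the vector `v`. -/
def sRefl {n : ℕ} (v x : V n) : V n := x - (2 * inn x v / inn v v) • v

/-- The roots `±e_i ± e_j` (`i ≠ j`), i.e. the root system of type `D_n`. -/
def DRoots (n : ℕ) : Set (V n) :=
  {v | ∃ i j : Fin n, i ≠ j ∧ (v = ee i + ee j ∨ v = ee i - ee j ∨ v = -ee i - ee j)}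

/-- The ambient root system `Φ` of type `B_n`, `C_n` or `D_n`. -/
def Phi (n : ℕ) : CType → Set (V n)
  | CType.B => DRoots n ∪ {v | ∃ i : Fin n, v = ee i ∨ v = -ee i}
  | CType.C => DRoots n ∪ {v | ∃ i : Fin n, v = (2:ℝ) • ee i ∨ v = -((2:ℝ) • ee i)}
  | CType.D => DRoots n

/-- The standard positive system `Φ⁺`: roots whose first nonzero coordinate is positive. -/
def PhiPos (n : ℕ) (ct : CType) : Set (V n) :=
  {v | v ∈ Phi n ct ∧ ∃ i : Fin n, 0 < v i ∧ ∀ j : Fin n, j < i → v j = 0}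

/-- The simple root `α_{i+1}` (`0`-based index `i`). -/
def alphaR (n : ℕ) (ct : CType) (i : Fin n) : V n :=
  if h : i.1 + 1 < n then ee i - ee ⟨i.1 + 1, h⟩
  else
    match ct with
    | CType.B => ee i
    | CType.C => (2:ℝ) • ee i
    | CType.D => ee ⟨n - 2, Nat.sub_lt i.pos (by norm_num)⟩ + ee i

/-- The subsystem `Φ_I` generated by the simple roots indexed by `I`. -/
def PhiI (n : ℕ) (ct : CType) (I : Finset (Fin n)) : Set (V n) :=
  Phi n ct ∩ (Submodule.span ℝ (alphaR n ct '' (I : Set (Fin n))) : Set (V n))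

/-- `λ` is `Φ_I`-regular. -/
def RegI (n : ℕ) (ct : CType) (I : Finset (Fin n)) (lam : V n) : Prop :=
  ∀ β ∈ PhiI n ct I, inn lam β ≠ 0

/-- `λ` is integral. -/
def IntegralW (n : ℕ) (ct : CType) (lam : V n) : Prop :=
  ∀ β ∈ Phi n ct, ∃ k : ℤ, 2 * inn lam β / inn β β = (k : ℝ)

/-- `λ` is dominant. -/
def DominantW (n : ℕ) (ct : CType) (lam : V n) : Prop :=
  ∀ i : Fin n, 0 ≤ inn lam (alphaR n ct i)

/-- `μ` lies in the `W_I`-orbit of `λ` (`W_I` generated by the reflections `s_α`, `α ∈ I`). -/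
def WIOrb (n : ℕ) (ct : CType) (I : Finset (Fin n)) : V n → V n → Prop :=
  Relation.ReflTransGen (fun x y => ∃ i ∈ I, y = sRefl (alphaR n ct i) x)

/-- `μ` lies in the `W`-orbit of `λ`. -/
def WOrb (n : ℕ) (ct : CType) : V n → V n → Prop := WIOrb n ct Finset.univ

/-- `λ ∈ Λ_I⁺`. -/
def LamIPlus (n : ℕ) (ct : CType) (I : Finset (Fin n)) (lam : V n) : Prop :=
  IntegralW n ct lam ∧ ∀ i ∈ I, 0 < inn lam (alphaR n ct i)

/-- The sorted list `q_1 < q_2 < … < q_{m-1}` (`1`-based values) of indices of `Δ∖I`. -/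
def Qlist (n : ℕ) (I : Finset (Fin n)) : List ℕ :=
  ((Finset.univ \ I).sort (· ≤ ·)).map (fun j => j.1 + 1)

/-- The number `m` of segments determined by `I`. -/
def mval (n : ℕ) (I : Finset (Fin n)) : ℕ := (Qlist n I).length + 1

/-- `q_s`, with the conventions `q_0 = 0` and `q_m = n`. -/
def qval (n : ℕ) (I : Finset (Fin n)) (s : ℕ) : ℕ :=
  if s = 0 then 0 else if s < mval n I then (Qlist n I).getD (s - 1) 0 else n

/-- `I` is standard (automatic in types `B`, `C`). -/
def StandardI (n : ℕ) (ct : CType) (I : Finset (Fin n)) : Prop :=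
  ct = CType.D → ∀ h : 2 ≤ n,
    ((⟨n - 2, by omega⟩ : Fin n) ∈ I ∨ (⟨n - 1, by omega⟩ : Fin n) ∉ I)

/-- `q_s`, corrected for nonstandard `I` (where `q_{m-1}` is replaced by `n`,
so that the `(m-1)`-st segment is `(q_{m-2}, n]` and the `m`-th segment is empty). -/
def qv (n : ℕ) (ct : CType) (I : Finset (Fin n)) (s : ℕ) : ℕ :=
  if ¬ StandardI n ct I ∧ s = mval n I - 1 then n else qval n I s

/-- The segment length `n_s`. -/
def nsval (n : ℕ) (ct : CType) (I : Finset (Fin n)) (s : ℕ) : ℕ :=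
  qv n ct I s - qv n ct I (s - 1)

/-- The (`0`-based) index `i` lies in the `s`-th segment, i.e. `q_{s-1} < i+1 ≤ q_s`. -/
def InSeg (n : ℕ) (ct : CType) (I : Finset (Fin n)) (s : ℕ) (i : Fin n) : Prop :=
  qv n ct I (s - 1) < i.1 + 1 ∧ i.1 + 1 ≤ qv n ct I s

/-- `n_s^λ(a)`: the number of entries of the `s`-th segment of `λ` with absolute value `a`. -/
def nsl (n : ℕ) (ct : CType) (I : Finset (Fin n)) (lam : V n) (s : ℕ) (a : ℝ) : ℕ :=
  (Finset.univ.filter (fun i : Fin n => InSeg n ct I s i ∧ |lam i| = a)).card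

/-- `a_t = λ̄_{q̄_t}` for `1 ≤ t < m̄`, and `a_{m̄} = 0`. -/
def aval (n : ℕ) (ct : CType) (J : Finset (Fin n)) (lbar : V n) (t : ℕ) : ℝ :=
  if t < mval n J then
    (if h : qv n ct J t - 1 < n then lbar ⟨qv n ct J t - 1, h⟩ else 0)
  else 0

/-- `n_s^λ(a)` is maximal among all `Φ_I`-regular weights in the orbit of `λ`. -/
def IsMaxN (n : ℕ) (ct : CType) (I : Finset (Fin n)) (lam : V n) (s : ℕ) (a : ℝ) : Prop :=
  ∀ mu : V n, WOrb n ct lam mu → RegI n ct I mu →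
    nsl n ct I mu s a ≤ nsl n ct I lam s a

/-- The exceptional configurations of Proposition 4.7 (types `B` and `C`, with
`shortR i` the short/long root `e_i` resp. `2e_i`). -/
def ExcBC (n : ℕ) (ct : CType) (I : Finset (Fin n)) (shortR : Fin n → V n)
    (lam β : V n) : Prop :=
  ∃ s : ℕ, 1 ≤ s ∧ s < mval n I ∧ ∃ a : ℝ, 0 < a ∧
    nsl n ct I lam s a = 1 ∧
    nsl n ct I lam s 0 + nsl n ct I lam (mval n I) a = 1 ∧
    ((∃ i j : Fin n, InSeg n ct I s i ∧ InSeg n ct I s j ∧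
        |lam i| = a ∧ lam j = 0 ∧ (β = shortR i ∨ β = ee i + ee j)) ∨
     (∃ i j : Fin n, InSeg n ct I s i ∧ InSeg n ct I (mval n I) j ∧
        ((lam i = a ∧ lam j = a) ∨ (lam i = -a ∧ lam j = -a)) ∧
        (β = shortR i ∨ β = ee i + ee j)) ∨
     (∃ i j : Fin n, InSeg n ct I s i ∧ InSeg n ct I (mval n I) j ∧
        ((lam i = a ∧ lam j = -a) ∨ (lam i = -a ∧ lam j = a)) ∧
        (β = shortR i ∨ β = ee i - ee j)))

/-- The exceptional configurations of Proposition 4.7 (type `D`). -/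
def ExcD (n : ℕ) (I : Finset (Fin n)) (lam β : V n) : Prop :=
  ∃ s : ℕ, 1 ≤ s ∧ s < mval n I ∧ ∃ a : ℝ, 0 < a ∧
    nsl n CType.D I lam s a = 1 ∧ nsl n CType.D I lam (mval n I) a = 1 ∧
    nsl n CType.D I lam s 0 = 1 ∧ nsl n CType.D I lam (mval n I) 0 = 1 ∧
    ∃ i j k l : Fin n, InSeg n CType.D I s i ∧ InSeg n CType.D I s j ∧
      InSeg n CType.D I (mval n I) k ∧ InSeg n CType.D I (mval n I) l ∧
      lam j = 0 ∧ lam l = 0 ∧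
      ((((lam i = a ∧ lam k = a) ∨ (lam i = -a ∧ lam k = -a)) ∧
          (β = ee i + ee j ∨ β = ee i + ee k)) ∨
       (((lam i = a ∧ lam k = -a) ∨ (lam i = -a ∧ lam k = a)) ∧
          (β = ee i + ee j ∨ β = ee i - ee k)))

/-- The exceptional configurations in which `β` fails to be a linked root. -/
def Exc (n : ℕ) (ct : CType) (I : Finset (Fin n)) (lam β : V n) : Prop :=
  match ct with
  | CType.B => ExcBC n CType.B I (fun i => ee i) lam β
  | CType.C => ExcBC n CType.C I (fun i => (2:ℝ) • ee i) lam β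
  | CType.D => ExcD n I lam β

/-- `β` is a linked root of the `Φ_I`-regular weight `λ` (for standard `I`). -/
def PlainLinked (n : ℕ) (ct : CType) (I : Finset (Fin n)) (lam β : V n) : Prop :=
  RegI n ct I lam ∧ β ∈ PhiPos n ct ∧ β ∉ PhiI n ct I ∧
  RegI n ct I (sRefl β lam) ∧ sRefl β lam ≠ lam ∧ ¬ Exc n ct I lam β

/-- The transposition of the last two indices. -/
def swapLast (n : ℕ) (j : Fin n) : Fin n :=
  if j.1 = n - 1 then ⟨n - 2, Nat.sub_lt j.pos (by norm_num)⟩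
  else if j.1 = n - 2 then ⟨n - 1, Nat.sub_lt j.pos (by norm_num)⟩
  else j

/-- The isomorphism `φ = s_{e_n}` (negating the last coordinate). -/
def phiW {n : ℕ} (x : V n) : V n := fun j => if j.1 = n - 1 then -x j else x j

/-- The image `φ(I)` of an index set under `φ` (interchanging `α_{n-1}` and `α_n`). -/
def phiIdx (n : ℕ) (I : Finset (Fin n)) : Finset (Fin n) := I.image (swapLast n)

/-- `β` is a linked root of `λ`; for nonstandard `I` the notion is transported along `φ`. -/
def LinkedRoot (n : ℕ) (ct : CType) (I : Finset (Fin n)) (lam β : V n) : Prop :=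
  if StandardI n ct I then PlainLinked n ct I lam β
  else PlainLinked n ct (phiIdx n I) (phiW lam) (phiW β)

/-- One step in a connecting chain: `y ∈ W_I x`, or `y = w s_β x` for a linked root `β` of `x`. -/
def ConnStep (n : ℕ) (ct : CType) (I : Finset (Fin n)) (x y : V n) : Prop :=
  RegI n ct I x ∧ RegI n ct I y ∧
  (WIOrb n ct I x y ∨ ∃ β : V n, LinkedRoot n ct I x β ∧ WIOrb n ct I (sRefl β x) y)

/-- `λ ⟷ μ`: `λ` and `μ` are connected by a chain of linked roots. -/
def Conn (n : ℕ) (ct : CType) (I : Finset (Fin n)) (lam mu : V n) : Prop :=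
  RegI n ct I lam ∧ RegI n ct I mu ∧
  Relation.ReflTransGen (ConnStep n ct I) lam mu

/-- The set `^IW^Jλ̄ = Wλ̄ ∩ Λ_I⁺` of weights parametrizing the simple modules. -/
def IWJset (n : ℕ) (ct : CType) (I : Finset (Fin n)) (lbar : V n) : Set (V n) :=
  {mu | WOrb n ct lbar mu ∧ LamIPlus n ct I mu}

/-- `(S, S̄)` is a separable pair for the weight `λ`. -/
def IsSepPair (n : ℕ) (ct : CType) (I J : Finset (Fin n)) (lbar lam : V n)
    (S Sb : Finset ℕ) : Prop :=
  S.Nonempty ∧ Sb.Nonempty ∧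
  S ⊆ Finset.Icc 1 (mval n I) ∧ Sb ⊆ Finset.Icc 1 (mval n J) ∧
  1 < mval n I ∧ 1 < mval n J ∧
  (∀ s ∈ S, ∀ t ∈ Sb, IsMaxN n ct I lam s (aval n ct J lbar t)) ∧
  (∀ s ∈ Finset.Icc 1 (mval n I), s ∉ S →
     ∀ t ∈ Finset.Icc 1 (mval n J), t ∉ Sb →
       nsl n ct I lam s (aval n ct J lbar t) = 0) ∧
  (match ct with
   | CType.B => (mval n I ∈ S ↔ mval n J ∉ Sb)
   | CType.C => (mval n I ∈ S ↔ mval n J ∉ Sb)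
   | CType.D => (mval n I ∈ S ↔ mval n J ∈ Sb))

/-- `𝒟`: the set of separable pairs of the system `(Φ, Φ_I, Φ_J)`. -/
def DSet (n : ℕ) (ct : CType) (I J : Finset (Fin n)) (lbar : V n) :
    Set (Finset ℕ × Finset ℕ) :=
  {p | ∀ lam ∈ IWJset n ct I lbar, IsSepPair n ct I J lbar lam p.1 p.2}

/-- The four weakly separable pairs. -/
def IsWeakPair (n : ℕ) (I J : Finset (Fin n)) (p : Finset ℕ × Finset ℕ) : Prop :=
  p = (Finset.Icc 1 (mval n I - 1), {mval n J}) ∨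
  p = (Finset.Icc 1 (mval n I), {mval n J}) ∨
  p = ({mval n I}, Finset.Icc 1 (mval n J - 1)) ∨
  p = ({mval n I}, Finset.Icc 1 (mval n J))

/-- The system `(Φ, Φ_I, Φ_J)` is separable. -/
def SepSys (n : ℕ) (ct : CType) (I J : Finset (Fin n)) (lbar : V n) : Prop :=
  (DSet n ct I J lbar).Nonempty

/-- The system `(Φ, Φ_I, Φ_J)` is strongly separable. -/
def StronglySepSys (n : ℕ) (ct : CType) (I J : Finset (Fin n)) (lbar : V n) : Prop :=
  ∃ p ∈ DSet n ct I J lbar, ¬ IsWeakPair n I J p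

/-- The system `(Φ, Φ_I, Φ_J)` is weakly separable. -/
def WeaklySepSys (n : ℕ) (ct : CType) (I J : Finset (Fin n)) (lbar : V n) : Prop :=
  SepSys n ct I J lbar ∧ ∀ p ∈ DSet n ct I J lbar, IsWeakPair n I J p

/-- The partial ordering on separable pairs: `(S₁,S̄₁) ≤ (S₂,S̄₂)` iff `S₁ ⊆ S₂`, `S̄₁ ⊇ S̄₂`. -/
def pairLE (p q : Finset ℕ × Finset ℕ) : Prop := p.1 ⊆ q.1 ∧ q.2 ⊆ p.2

/-- Strict version of `pairLE`. -/
def pairLT (p q : Finset ℕ × Finset ℕ) : Prop := pairLE p q ∧ p ≠ q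

/-- The generating relations of the equivalence `∼` on `𝒟`. -/
def PairRel (D : Set (Finset ℕ × Finset ℕ)) (p q : Finset ℕ × Finset ℕ) : Prop :=
  p ∈ D ∧ q ∈ D ∧ ((p.2 = q.2 ∧ p.1 ⊆ q.1) ∨ (p.1 = q.1 ∧ p.2 ⊆ q.2))

/-- The equivalence relation `∼` on separable pairs. -/
def PairEquiv (D : Set (Finset ℕ × Finset ℕ)) :
    Finset ℕ × Finset ℕ → Finset ℕ × Finset ℕ → Prop :=
  Relation.EqvGen (PairRel D)

/-- A trivial separable pair. -/
def TrivialPair (n : ℕ) (ct : CType) (I J : Finset (Fin n)) (lbar : V n)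
    (p : Finset ℕ × Finset ℕ) : Prop :=
  match ct with
  | CType.B | CType.C =>
    (∃ s0 : ℕ, 1 ≤ s0 ∧ s0 < mval n I ∧
       PairEquiv (DSet n ct I J lbar) p ({s0}, Finset.Icc 1 (mval n J))) ∨
    (∃ t0 : ℕ, 1 ≤ t0 ∧ t0 < mval n J ∧
       PairEquiv (DSet n ct I J lbar) p (Finset.Icc 1 (mval n I), {t0}))
  | CType.D =>
    (∃ s0 : ℕ, 1 ≤ s0 ∧ s0 < mval n I ∧
       PairEquiv (DSet n ct I J lbar) p ({s0}, Finset.Icc 1 (mval n J - 1))) ∨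
    (∃ t0 : ℕ, 1 ≤ t0 ∧ t0 < mval n J ∧
       PairEquiv (DSet n ct I J lbar) p (Finset.Icc 1 (mval n I - 1), {t0}))

/-- The set of blocks: equivalence classes of `^IW^Jλ̄` under `⟷`. -/
def BlockSet (n : ℕ) (ct : CType) (I : Finset (Fin n)) (lbar : V n) : Set (Set (V n)) :=
  {Cl | ∃ lam ∈ IWJset n ct I lbar,
     Cl = {mu | mu ∈ IWJset n ct I lbar ∧ Conn n ct I lam mu}}

/-- The parity `P(λ)` of the number of negative entries of `λ`. -/
def Pfun (n : ℕ) (lam : V n) : ℕ :=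
  (Finset.univ.filter (fun i : Fin n => lam i < 0)).card % 2

/-- A fundamental chain `c 1 ∼ c 2 ∼ … ∼ c k` in `𝒟`. -/
def IsFundChain (D : Set (Finset ℕ × Finset ℕ)) (c : ℕ → Finset ℕ × Finset ℕ)
    (k : ℕ) : Prop :=
  1 ≤ k ∧ (∀ i, 1 ≤ i → i ≤ k → c i ∈ D) ∧
  (∀ i, 1 ≤ i → i < k →
     ((c i).1 = (c (i+1)).1 ∨ (c i).2 = (c (i+1)).2) ∧
     (pairLT (c i) (c (i+1)) ∨ pairLT (c (i+1)) (c i)))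

/-- The list of parts of the partition `π_I`. -/
def piParts (n : ℕ) (ct : CType) (I : Finset (Fin n)) : List ℕ :=
  (List.range (mval n I - 1)).map (fun s => nsval n ct I (s+1)) ++
  (List.range (mval n I - 1)).map (fun s => nsval n ct I (s+1)) ++
  (match ct with
   | CType.B => [2 * nsval n ct I (mval n I) + 1]
   | CType.C => [2 * nsval n ct I (mval n I)]
   | CType.D => if nsval n ct I (mval n I) = 0 then []
                else [2 * nsval n ct I (mval n I) - 1, 1])

/-- The `i`-th part (`1`-based) of the partition with list of parts `L`. -/
def partAt (L : List ℕ) (i : ℕ) : ℕ :=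
  (L.mergeSort (fun a b => decide (b ≤ a))).getD (i - 1) 0

/-- The `i`-th part (`1`-based) of the dual partition `π^t`: the number of parts `≥ i`. -/
def dualAt (L : List ℕ) (i : ℕ) : ℕ :=
  (L.filter (fun x => decide (i ≤ x))).length

/-- `k` is compatible with the system `(Φ, Φ_I, Φ_J)`. -/
def CompatibleK (n : ℕ) (ct : CType) (I J : Finset (Fin n)) (k : ℕ) : Prop :=
  1 ≤ k ∧ k ≤ 2 * mval n I - 1 ∧
  (match ct with
   | CType.B =>
     (Odd k ∧ k ≤ partAt (piParts n CType.B J) 2 ∧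
        2 * nsval n CType.B J (mval n J) + 1 ≤ k ∧
        partAt (piParts n CType.B I) k ≤ 2 * nsval n CType.B I (mval n I) + 1) ∨
     (Even k ∧ k ≤ 2 * nsval n CType.B J (mval n J) ∧
        2 * nsval n CType.B I (mval n I) + 1 ≤ partAt (piParts n CType.B I) k)
   | CType.C =>
     (Odd k ∧ k ≤ partAt (piParts n CType.C J) 2 ∧
        2 * nsval n CType.C J (mval n J) + 1 ≤ k ∧
        partAt (piParts n CType.C I) k ≤ 2 * nsval n CType.C I (mval n I)) ∨
     (Even k ∧ k ≤ 2 * nsval n CType.C J (mval n J) ∧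
        2 * nsval n CType.C I (mval n I) + 1 ≤ partAt (piParts n CType.C I) k)
   | CType.D =>
     (Even k ∧ k ≤ partAt (piParts n CType.D J) 2 ∧
        2 * nsval n CType.D J (mval n J) ≤ k ∧
        2 * nsval n CType.D I (mval n I) ≤ partAt (piParts n CType.D I) k) ∨
     (Odd k ∧ k ≤ 2 * nsval n CType.D J (mval n J) - 1 ∧
        partAt (piParts n CType.D I) k ≤ 2 * nsval n CType.D I (mval n I) - 1))

/-- `s_{e_{k_1}}^{ε_1} ⋯ s_{e_{k_r}}^{ε_r} μ`. -/
def applyFlips (n : ℕ) (ks : ℕ → Fin n) (eps : ℕ → Bool) : ℕ → V n → V n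
  | 0, v => v
  | (r+1), v =>
      if eps (r+1) then sRefl (ee (ks (r+1))) (applyFlips n ks eps r v)
      else applyFlips n ks eps r v

end

section
variable {n : ℕ}

/-- negate entry `i` -/
def ng (i : Fin n) (x : V n) : V n := fun k => if k = i then -x k else x k
/-- swap entries -/
def sw (i j : Fin n) (x : V n) : V n := fun k => if k = i then x j else if k = j then x i else x k
/-- swap entries and negate both -/
def nsw (i j : Fin n) (x : V n) : V n := fun k => if k = i then -x j else if k = j then -x i else x k

/-- abstract system -/
structure Sys (n : ℕ) where
  seg : Fin n → ℕ
  m : ℕ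
  isD : Prop
  C : V n → V n → Prop

namespace Sys
/-- explicit regularity -/
def Reg (S : Sys n) (x : V n) : Prop :=
  (∀ i j, i ≠ j → S.seg i = S.seg j → x i ≠ x j ∧ (S.seg i = S.m → x i ≠ -x j)) ∧
  (¬ S.isD → ∀ i, S.seg i = S.m → x i ≠ 0)
/-- the value occurs in the segment -/
def has (S : Sys n) (w : V n) (s : ℕ) (a : ℝ) : Prop := ∃ i, S.seg i = s ∧ w i = a
/-- occurs twice -/
def two (S : Sys n) (w : V n) (s : ℕ) (a : ℝ) : Prop :=
  ∃ i j, i ≠ j ∧ S.seg i = s ∧ S.seg j = s ∧ w i = a ∧ w j = a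
/-- saturated -/
def full (S : Sys n) (w : V n) (s : ℕ) (a : ℝ) : Prop :=
  if s = S.m ∨ a = 0 then S.has w s a else S.two w s a
/-- occurs alone in an ordinary segment with nonzero value -/
def odd (S : Sys n) (w : V n) (p : Fin n) : Prop :=
  S.seg p ≠ S.m ∧ w p ≠ 0 ∧ ∀ q, q ≠ p → S.seg q = S.seg p → w q ≠ w p
end Sys

/-- entrywise absolute value -/
def va (x : V n) : V n := fun k => |x k|

/-- the moves -/
structure Ax (S : Sys n) : Prop where
  refl : ∀ x, S.Reg x → S.C x x
  symm : ∀ x y, S.C x y → S.C y x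
  trans : ∀ x y z, S.C x y → S.C y z → S.C x z
  w1 : ∀ x i j, S.Reg x → S.seg i = S.seg j → S.seg i ≠ S.m → S.C x (sw i j x)
  w2 : ∀ x k, ¬ S.isD → S.Reg x → S.seg k = S.m → S.C x (ng k x)
  w3 : ∀ x k l, S.isD → S.Reg x → k ≠ l → S.seg k = S.m → S.seg l = S.m →
    S.C x (ng k (ng l x))
  M1 : ∀ x i j, S.Reg x → S.Reg (sw i j x) → S.seg i ≠ S.seg j →
    (|x i| ≠ |x j| ∨ (S.seg i ≠ S.m ∧ S.seg j ≠ S.m)) → S.C x (sw i j x)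
  M1' : ∀ x i j, S.Reg x → S.Reg (nsw i j x) → S.seg i ≠ S.seg j →
    (|x i| ≠ |x j| ∨ (S.seg i ≠ S.m ∧ S.seg j ≠ S.m)) → S.C x (nsw i j x)
  M2 : ∀ x i j, S.Reg x → S.Reg (ng i (ng j x)) → i ≠ j → S.seg i = S.seg j → S.seg i ≠ S.m →
    x i ≠ 0 → x j ≠ 0 → S.C x (ng i (ng j x))
  F1 : ∀ x i, ¬ S.isD → S.Reg x → S.Reg (ng i x) → S.seg i ≠ S.m → x i ≠ 0 →
    (S.has (va x) (S.seg i) 0 ↔ S.has (va x) S.m |x i|) → S.C x (ng i x)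
  F2 : ∀ x i j, S.isD → S.Reg x → S.Reg (ng i x) → S.seg i = S.seg j → S.seg i ≠ S.m →
    x j = 0 → x i ≠ 0 → ¬ (S.has (va x) S.m |x i| ∧ S.has (va x) S.m 0) → S.C x (ng i x)
  F3 : ∀ x i k, S.isD → S.Reg x → S.Reg (ng i (ng k x)) → S.seg i ≠ S.m → S.seg k = S.m →
    |x i| = |x k| → x i ≠ 0 → ¬ (S.has (va x) (S.seg i) 0 ∧ S.has (va x) S.m 0) →
    S.C x (ng i (ng k x))

end

section
variable {n : ℕ} {S : Sys n}

theorem reg_ng {x : V n} {p : Fin n} (h : S.Reg x) (hp : S.odd (va x) p) : S.Reg (ng p x) := by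
  simp only [Sys.odd, va, abs_eq_abs, abs_eq_zero, ne_eq, not_or] at *
  obtain ⟨r1, r2⟩ := h
  exact ⟨by intro a b hab hs; simp only [ng]; grind, by intro hd a ha; simp only [ng]; grind⟩

theorem reg_ngm {x : V n} {p : Fin n} (h : S.Reg x) (hp : S.seg p = S.m) : S.Reg (ng p x) := by
  obtain ⟨r1, r2⟩ := h
  exact ⟨by intro a b hab hs; simp only [ng]; grind, by intro hd a ha; simp only [ng]; grind⟩

theorem va_ng (x : V n) (p : Fin n) : va (ng p x) = va x := by
  funext k; simp only [va, ng]; split_ifs <;> simp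

theorem reg_ng2 {x : V n} {p q : Fin n} (h : S.Reg x) (hp : S.odd (va x) p)
    (hq : S.odd (va x) q) : S.Reg (ng p (ng q x)) :=
  reg_ng (reg_ng h hq) (by rwa [va_ng])

theorem reg_sw1 {x : V n} {i j : Fin n} (h : S.Reg x) (hs : S.seg i = S.seg j) :
    S.Reg (sw i j x) := by
  obtain ⟨r1, r2⟩ := h
  exact ⟨by intro a b hab hs; simp only [sw]; grind, by intro hd a ha; simp only [sw]; grind⟩

theorem reg_sw2 {x : V n} {i j : Fin n} (h : S.Reg x) (hs : S.seg i ≠ S.seg j)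
    (him : S.seg i ≠ S.m) (hjm : S.seg j ≠ S.m)
    (h1 : ∀ q, q ≠ i → S.seg q = S.seg i → x q ≠ x j)
    (h2 : ∀ q, q ≠ j → S.seg q = S.seg j → x q ≠ x i) :
    S.Reg (sw i j x) := by
  obtain ⟨r1, r2⟩ := h
  exact ⟨by intro a b hab hs; simp only [sw]; grind, by intro hd a ha; simp only [sw]; grind⟩

theorem reg_nsw2 {x : V n} {i j : Fin n} (h : S.Reg x) (hs : S.seg i ≠ S.seg j)
    (him : S.seg i ≠ S.m) (hjm : S.seg j ≠ S.m)
    (h1 : ∀ q, q ≠ i → S.seg q = S.seg i → x q ≠ -x j)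
    (h2 : ∀ q, q ≠ j → S.seg q = S.seg j → x q ≠ -x i) :
    S.Reg (nsw i j x) := by
  obtain ⟨r1, r2⟩ := h
  exact ⟨by intro a b hab hs; simp only [nsw]; grind, by intro hd a ha; simp only [nsw]; grind⟩

theorem loc_row (A : Ax S) {x : V n} {i j : Fin n} (h : S.Reg x) (hi : S.odd (va x) i)
    (hj : S.odd (va x) j) (hij : i ≠ j) (hs : S.seg i = S.seg j) : S.C x (ng i (ng j x)) := by
  refine A.M2 x i j h (reg_ng2 h hi hj) hij hs hi.1 ?_ ?_
  · exact abs_ne_zero.1 hi.2.1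
  · exact abs_ne_zero.1 hj.2.1

theorem loc_col (A : Ax S) {x : V n} {i j : Fin n} (h : S.Reg x) (hi : S.odd (va x) i)
    (hj : S.odd (va x) j) (hs : S.seg i ≠ S.seg j) (hab : |x i| = |x j|) :
    S.C x (ng i (ng j x)) := by
  have r := reg_ng2 h hi hj
  rcases abs_eq_abs.1 hab with e | e
  · have e : ng i (ng j x) = nsw i j x := by
      funext k; simp only [ng, nsw]; grind
    rw [e] at r ⊢
    exact A.M1' x i j h r hs (Or.inr ⟨hi.1, hj.1⟩)
  · have e : ng i (ng j x) = sw i j x := by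
      funext k; simp only [ng, sw]; grind
    rw [e] at r ⊢
    exact A.M1 x i j h r hs (Or.inr ⟨hi.1, hj.1⟩)

theorem loc_opp0 (A : Ax S) {x : V n} {i j : Fin n} (h : S.Reg x) (hi : S.odd (va x) i)
    (hj : S.odd (va x) j) (hs : S.seg i ≠ S.seg j) 
    (h1 : ¬ S.has (va x) (S.seg i) |x j|) (h2 : ¬ S.has (va x) (S.seg j) |x i|) :
    S.C x (ng i (ng j x)) := by
  have hr2 := reg_ng2 h hi hj
  have hab : |x i| ≠ |x j| := fun e => h1 ⟨i, rfl, e⟩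
  have hi1 := hi.1
  have hj1 := hj.1
  simp only [Sys.odd, Sys.has, va, abs_eq_abs, abs_eq_zero, ne_eq, not_or, not_exists, not_and]
    at h1 h2 hi hj
  have hr : S.Reg (sw i j x) := by
    obtain ⟨r1, r2⟩ := h
    exact ⟨by intro a b hab hs; simp only [sw]; grind, by intro hd a ha; simp only [sw]; grind⟩
  have e : ng i (ng j x) = nsw i j (sw i j x) := by
    funext k; simp only [ng, nsw, sw]; grind
  rw [e] at hr2 ⊢
  exact A.trans _ _ _ (A.M1 x i j h hr hs (Or.inl hab)) (A.M1' _ i j hr hr2 hs (Or.inr ⟨hi1, hj1⟩))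

theorem loc_L5II (A : Ax S) {x : V n} {i k : Fin n} (h : S.Reg x) (hi : S.odd (va x) i)
    (hk : S.seg k = S.m)
    (h1 : ¬ S.has (va x) (S.seg i) |x k|) (h2 : ¬ S.has (va x) S.m |x i|) :
    S.C x (ng i (ng k x)) := by
  have hr2 : S.Reg (ng i (ng k x)) := reg_ng (reg_ngm h hk) (by rwa [va_ng])
  have hab : |x i| ≠ |x k| := fun e => h1 ⟨i, rfl, e⟩
  have hi1 := hi.1
  have hs : S.seg i ≠ S.seg k := by rw [hk]; exact hi1
  simp only [Sys.odd, Sys.has, va, abs_eq_abs, abs_eq_zero, ne_eq, not_or, not_exists, not_and]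
    at h1 h2 hi
  have hr : S.Reg (sw i k x) := by
    obtain ⟨r1, r2⟩ := h
    exact ⟨by intro a b hab hs; simp only [sw]; grind, by intro hd a ha; simp only [sw]; grind⟩
  have e : ng i (ng k x) = nsw i k (sw i k x) := by
    funext k; simp only [ng, nsw, sw]; grind
  rw [e] at hr2 ⊢
  refine A.trans _ _ _ (A.M1 x i k h hr hs (Or.inl hab)) (A.M1' _ i k hr hr2 hs (Or.inl ?_))
  simp only [sw]; grind

theorem loc_L6II (A : Ax S) {x : V n} {i k : Fin n} (h : S.Reg x) (hi : S.odd (va x) i)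
    (hk : S.seg k ≠ S.m) (hk0 : x k = 0)
    (h1 : ¬ S.has (va x) (S.seg i) 0) (h2 : ¬ S.has (va x) (S.seg k) |x i|) :
    S.C x (ng i x) := by
  have hr2 : S.Reg (ng i x) := reg_ng h hi
  have hi1 := hi.1
  have hs : S.seg i ≠ S.seg k := by
    intro e; exact h1 ⟨k, e.symm, by simp [va, hk0]⟩
  simp only [Sys.odd, Sys.has, va, abs_eq_abs, abs_eq_zero, ne_eq, not_or, not_exists, not_and]
    at h1 h2 hi
  have hr : S.Reg (sw i k x) := by
    obtain ⟨r1, r2⟩ := h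
    exact ⟨by intro a b hab hs; simp only [sw]; grind, by intro hd a ha; simp only [sw]; grind⟩
  have e : ng i x = nsw i k (sw i k x) := by
    funext k; simp only [ng, nsw, sw]; grind
  rw [e] at hr2 ⊢
  exact A.trans _ _ _ (A.M1 x i k h hr hs (Or.inr ⟨hi1, hk⟩))
    (A.M1' _ i k hr hr2 hs (Or.inr ⟨hi1, hk⟩))

theorem pair_vals {x : V n} (h : S.Reg x) {l l' : Fin n} (hl : l ≠ l') (hs : S.seg l = S.seg l')
    {y : ℝ} (h1 : |x l| = |y|) (h2 : |x l'| = |y|) :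
    ∃ k k' : Fin n, k ≠ k' ∧ S.seg k = S.seg l ∧ S.seg k' = S.seg l ∧ x k = -y ∧ x k' = y := by
  have := (h.1 l l' hl hs).1
  rw [abs_eq_abs] at h1 h2
  rcases h1 with h1 | h1 <;> rcases h2 with h2 | h2
  · exact absurd (h1.trans h2.symm) this
  · exact ⟨l', l, hl.symm, hs.symm, rfl, h2, h1⟩
  · exact ⟨l, l', hl, rfl, hs.symm, h1, h2⟩
  · exact absurd (h1.trans h2.symm) this

theorem loc_L6I (A : Ax S) {x : V n} {i k l l' : Fin n} (h : S.Reg x) (hi : S.odd (va x) i)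
    (hk : S.seg k = S.seg i) (hk0 : x k = 0) (hl : l ≠ l') (hll : S.seg l = S.seg l')
    (hlm : S.seg l ≠ S.m) (hs : S.seg l ≠ S.seg i) (e1 : |x l| = |x i|) (e2 : |x l'| = |x i|)
    (h1 : ¬ S.has (va x) (S.seg l) 0) :
    S.C x (ng i x) := by
  obtain ⟨l, l', hl, q1, q2, e1, e2⟩ := pair_vals h hl hll e1 e2
  rw [← q1] at h1 hlm hs
  clear q1
  have hr3 : S.Reg (ng i x) := reg_ng h hi
  have hi1 := hi.1
  simp only [Sys.odd, Sys.has, va, abs_eq_abs, abs_eq_zero, ne_eq, not_or, not_exists, not_and]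
    at h1 hi
  have hr : S.Reg (sw k l x) := by
    obtain ⟨r1, r2⟩ := h
    exact ⟨by intro a b hab hs; simp only [sw]; grind, by intro hd a ha; simp only [sw]; grind⟩
  have hr2 : S.Reg (nsw i l (sw k l x)) := by
    obtain ⟨r1, r2⟩ := h
    exact ⟨by intro a b hab hs; simp only [sw, nsw]; grind, by intro hd a ha; simp only [sw, nsw]; grind⟩
  have e : ng i x = sw i k (nsw i l (sw k l x)) := by
    funext k; simp only [ng, nsw, sw]; grind
  rw [e] at hr3 ⊢
  refine A.trans _ _ _ (A.M1 x k l h hr (by grind) (Or.inr ⟨by grind, hlm⟩)) ?_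
  refine A.trans _ _ _ (A.M1' _ i l hr hr2 (by grind) (Or.inr ⟨hi1, hlm⟩)) ?_
  exact A.w1 _ i k hr2 hk.symm hi1

theorem loc_L5I (A : Ax S) {x : V n} {i k k' l : Fin n} (h : S.Reg x) (hi : S.odd (va x) i)
    (hk : S.seg k = S.seg i) (hk' : S.seg k' = S.seg i) (hkk : k ≠ k') (hxk : |x k'| = |x k|)
    (hl : S.seg l = S.m) (e1 : |x l| = |x i|) 
    (h1 : ¬ S.has (va x) S.m |x k|) :
    S.C x (ng i (ng l x)) := by
  have hr3 : S.Reg (ng i (ng l x)) := reg_ng (reg_ngm h hl) (by rwa [va_ng])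
  have hi1 := hi.1
  have hkv : x k' = - x k := by
    have := (h.1 k k' hkk (hk.trans hk'.symm)).1
    rcases abs_eq_abs.1 hxk with e | e
    · exact absurd e.symm this
    · exact e
  have hab : |x k| ≠ |x l| := fun e => h1 ⟨l, hl, e.symm⟩
  simp only [Sys.odd, Sys.has, va, abs_eq_abs, abs_eq_zero, ne_eq, not_or, not_exists, not_and]
    at h1 hi
  rcases abs_eq_abs.1 e1 with e1 | e1
  · have hr : S.Reg (nsw k l x) := by
      obtain ⟨r1, r2⟩ := h
      exact ⟨by intro a b hab hs; simp only [nsw]; grind, by intro hd a ha; simp only [nsw]; grind⟩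
    have hr2 : S.Reg (nsw i l (nsw k l x)) := by
      obtain ⟨r1, r2⟩ := h
      exact ⟨by intro a b hab hs; simp only [nsw]; grind, by intro hd a ha; simp only [nsw]; grind⟩
    have e : ng i (ng l x) = sw i k (nsw i l (nsw k l x)) := by
      funext k; simp only [ng, nsw, sw]; grind
    rw [e] at hr3 ⊢
    refine A.trans _ _ _ (A.M1' x k l h hr (by grind) (Or.inl hab)) ?_
    refine A.trans _ _ _ (A.M1' _ i l hr hr2 (by grind) (Or.inl ?_)) ?_
    · simp only [nsw]; grind
    exact A.w1 _ i k hr2 hk.symm hi1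
  · have hr : S.Reg (sw k l x) := by
      obtain ⟨r1, r2⟩ := h
      exact ⟨by intro a b hab hs; simp only [sw]; grind, by intro hd a ha; simp only [sw]; grind⟩
    have hr2 : S.Reg (sw i l (sw k l x)) := by
      obtain ⟨r1, r2⟩ := h
      exact ⟨by intro a b hab hs; simp only [sw]; grind, by intro hd a ha; simp only [sw]; grind⟩
    have e : ng i (ng l x) = sw i k (sw i l (sw k l x)) := by
      funext k; simp only [ng, sw]; grind
    rw [e] at hr3 ⊢
    refine A.trans _ _ _ (A.M1 x k l h hr (by grind) (Or.inl hab)) ?_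
    refine A.trans _ _ _ (A.M1 _ i l hr hr2 (by grind) (Or.inl ?_)) ?_
    · simp only [sw]; grind
    exact A.w1 _ i k hr2 hk.symm hi1

theorem loc_opp2 (A : Ax S) {x : V n} {i j k k' l l' : Fin n} (h : S.Reg x) (hi : S.odd (va x) i)
    (hj : S.odd (va x) j) (hs : S.seg i ≠ S.seg j) 
    (hk : S.seg k = S.seg i) (hk' : S.seg k' = S.seg i) (hkk : k ≠ k')
    (hl : S.seg l = S.seg j) (hl' : S.seg l' = S.seg j) (hll : l ≠ l')
    (e1_ : |x k| = |x j|) (e2_ : |x k'| = |x j|) (e3_ : |x l| = |x i|) (e4_ : |x l'| = |x i|) :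
    S.C x (ng i (ng j x)) := by
  obtain ⟨k, k', hkk, q1, q2, e1, e2⟩ := pair_vals h hkk (hk.trans hk'.symm) e1_ e2_
  obtain ⟨l, l', hll, q3, q4, e3, e4⟩ := pair_vals h hll (hl.trans hl'.symm) e3_ e4_
  rw [hk] at q1 q2
  rw [hl] at q3 q4
  clear hk hk' hl hl'
  have hi1 := hi.1
  have hj1 := hj.1
  simp only [Sys.odd, va, abs_eq_abs, abs_eq_zero, ne_eq, not_or]
    at hi hj
  clear e1_ e2_ e3_ e4_
  have hik : i ≠ k := by rintro rfl; have := hj.2.2; grind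
  have hik' : i ≠ k' := by rintro rfl; have := hj.2.2; grind
  have hjl : j ≠ l := by rintro rfl; grind
  have hjl' : j ≠ l' := by rintro rfl; grind
  have hr : S.Reg (sw k l x) := by
    refine reg_sw2 h (by grind) (by grind) (by grind) ?_ ?_
    · intro q; have := h.1 q k; have := hi.2.2 q; grind
    · intro q; have := h.1 q l; have := hj.2.2 q; grind
  have hr2 : S.Reg (nsw i j (sw k l x)) := by
    refine reg_nsw2 hr hs hi1 hj1 ?_ ?_
    · intro q; have := h.1 q k; have := hi.2.2 q; simp only [sw]; grind
    · intro q; have := h.1 q l; have := hj.2.2 q; simp only [sw]; grind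
  have hr3 : S.Reg (sw i k (nsw i j (sw k l x))) := reg_sw1 hr2 q1.symm
  have e : ng i (ng j x) = sw j l (sw i k (nsw i j (sw k l x))) := by
    funext k; simp only [ng, nsw, sw]; grind
  rw [e]
  refine A.trans _ _ _ (A.M1 x k l h hr (by grind) (Or.inr ⟨by grind, by grind⟩)) ?_
  refine A.trans _ _ _ (A.M1' _ i j hr hr2 hs (Or.inr ⟨hi1, hj1⟩)) ?_
  refine A.trans _ _ _ (A.w1 _ i k hr2 q1.symm hi1) ?_
  exact A.w1 _ j l hr3 q3.symm hj1
end

section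
variable {n : ℕ} {S : Sys n}

namespace Sys
/-- flipping both is possible -/
def Good (S : Sys n) (w : V n) (p q : Fin n) : Prop :=
  ∀ x, S.Reg x → va x = w → S.C x (ng p (ng q x))
/-- flipping one is possible -/
def Free (S : Sys n) (w : V n) (p : Fin n) : Prop :=
  ∀ x, S.Reg x → va x = w → S.C x (ng p x)
/-- flipping together with some last entry -/
def MF (S : Sys n) (w : V n) (p : Fin n) : Prop :=
  ∃ k, S.seg k = S.m ∧ ∀ x, S.Reg x → va x = w → S.C x (ng p (ng k x))
/-- flipping together with any last entry -/
def Semi (S : Sys n) (w : V n) (p : Fin n) : Prop :=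
  (∃ k, S.seg k = S.m) ∧
    ∀ k, S.seg k = S.m → ∀ x, S.Reg x → va x = w → S.C x (ng p (ng k x))
end Sys

theorem ng_comm (p q : Fin n) (x : V n) : ng p (ng q x) = ng q (ng p x) := by
  funext k; simp only [ng]; grind

theorem ng_ng (p : Fin n) (x : V n) : ng p (ng p x) = x := by
  funext k; simp only [ng]; grind

theorem ng_zero (p : Fin n) (x : V n) (h : x p = 0) : ng p x = x := by
  funext k; simp only [ng]; grind

theorem good_refl (A : Ax S) (w : V n) (p : Fin n) : S.Good w p p := by
  intro x hx _; rw [ng_ng]; exact A.refl x hx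

theorem good_symm {w : V n} {p q : Fin n} (h : S.Good w p q) : S.Good w q p := by
  intro x hx e; rw [ng_comm]; exact h x hx e

theorem good_trans (A : Ax S) {w : V n} {p q r : Fin n} (hp : S.odd w p) (hq : S.odd w q)
    (h : S.Good w p q) (h' : S.Good w q r) : S.Good w p r := by
  intro x hx e
  subst e
  have e : ng p (ng r x) = ng q (ng r (ng p (ng q x))) := by
    rw [ng_comm r p, ng_comm q p, ng_comm r q, ng_ng]
  rw [e]
  exact A.trans _ _ _ (h x hx rfl) (h' _ (reg_ng2 hx hp hq) (by rw [va_ng, va_ng]))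

theorem good_of_free (A : Ax S) {w : V n} {p q : Fin n} (hq : S.odd w q)
    (h : S.Free w p) (h' : S.Free w q) : S.Good w p q := by
  intro x hx e
  subst e
  exact A.trans _ _ _ (h' x hx rfl) (h _ (reg_ng hx hq) (by rw [va_ng]))

theorem free_of_good (A : Ax S) {w : V n} {p q : Fin n} (hp : S.odd w p) (hq : S.odd w q)
    (h : S.Good w p q) (h' : S.Free w q) : S.Free w p := by
  intro x hx e
  subst e
  have e : ng p x = ng q (ng p (ng q x)) := by rw [ng_comm q p, ng_ng]
  rw [e]
  exact A.trans _ _ _ (h x hx rfl) (h' _ (reg_ng2 hx hp hq) (by rw [va_ng, va_ng]))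

theorem semi_of_good (A : Ax S) {w : V n} {p q : Fin n} (hp : S.odd w p) (hq : S.odd w q)
    (h : S.Good w p q) (h' : S.Semi w q) : S.Semi w p := by
  refine ⟨h'.1, fun k hk x hx e => ?_⟩
  subst e
  have e : ng p (ng k x) = ng q (ng k (ng p (ng q x))) := by
    rw [ng_comm k p, ng_comm q p, ng_comm k q, ng_ng]
  rw [e]
  exact A.trans _ _ _ (h x hx rfl) (h'.2 k hk _ (reg_ng2 hx hp hq) (by rw [va_ng, va_ng]))

theorem good_of_semi (A : Ax S) {w : V n} {p q : Fin n} (hq : S.odd w q)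
    (h : S.Semi w p) (h' : S.Semi w q) : S.Good w p q := by
  obtain ⟨⟨k, hk⟩, h⟩ := h
  intro x hx e
  subst e
  have e : ng p (ng q x) = ng p (ng k (ng q (ng k x))) := by
    rw [ng_comm q k, ng_ng]
  rw [e]
  exact A.trans _ _ _ (h'.2 k hk x hx rfl) (h k hk _ (reg_ng (reg_ngm hx hk) (by rwa [va_ng]))
    (by rw [va_ng, va_ng]))

/-- a free and a semi index with the same class make everything semi free -/
theorem free_of_semi (A : Ax S) {w : V n} {p q : Fin n} (hq : S.odd w q) (hp : S.odd w p)
    (h : S.Free w q) (h1 : S.Semi w q) (h2 : S.Semi w p) : S.Free w p :=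
  free_of_good A hp hq (good_of_semi A hq h2 h1) h

theorem semi_of_MF (A : Ax S) {w : V n} {p : Fin n} (hp : S.odd w p) (hD : S.isD)
    (h : S.MF w p) : S.Semi w p := by
  obtain ⟨k, hk, h⟩ := h
  refine ⟨⟨k, hk⟩, fun l hl x hx e => ?_⟩
  subst e
  by_cases hkl : k = l
  · subst hkl; exact h x hx rfl
  have e : ng p (ng l x) = ng k (ng l (ng p (ng k x))) := by
    rw [ng_comm l p, ng_comm k p, ng_comm l k, ng_ng]
  rw [e]
  exact A.trans _ _ _ (h x hx rfl)
    (A.w3 _ k l hD (reg_ng (reg_ngm hx hk) (by rwa [va_ng])) hkl hk hl)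

theorem free_of_MF (A : Ax S) {w : V n} {p : Fin n} (hp : S.odd w p)
    (hD : ¬ S.isD ∨ S.has w S.m 0) (h : S.MF w p) : S.Free w p := by
  obtain ⟨k, hk, h⟩ := h
  intro x hx e
  subst e
  have hr : S.Reg (ng p (ng k x)) := reg_ng (reg_ngm hx hk) (by rwa [va_ng])
  have e : ng p x = ng k (ng p (ng k x)) := by rw [ng_comm k p, ng_ng]
  by_cases hd : S.isD
  · rcases hD with hD | ⟨z, hz, hz0⟩
    · exact absurd hd hD
    have hz0 : x z = 0 := abs_eq_zero.1 hz0
    by_cases hkz : k = z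
    · subst hkz
      have := h x hx rfl
      rwa [ng_zero k x hz0] at this
    have hzz : ng p (ng k x) z = 0 := by
      simp only [ng]; grind
    have := A.w3 _ k z hd hr hkz hk hz
    rw [ng_zero z _ hzz, ← e] at this
    exact A.trans _ _ _ (h x hx rfl) this
  · rw [e]
    exact A.trans _ _ _ (h x hx rfl) (A.w2 _ k hd hr hk)

theorem good_row (A : Ax S) {w : V n} {i j : Fin n} (hi : S.odd w i)
    (hj : S.odd w j) (hs : S.seg i = S.seg j) : S.Good w i j := by
  by_cases hij : i = j
  · subst hij; exact good_refl A w i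
  intro x hx e; subst e
  exact loc_row A hx hi hj hij hs

theorem good_col (A : Ax S) {w : V n} {i j : Fin n} (hi : S.odd w i)
    (hj : S.odd w j) (hs : w i = w j) : S.Good w i j := by
  by_cases hij : S.seg i = S.seg j
  · exact good_row A hi hj hij
  intro x hx e; subst e
  exact loc_col A hx hi hj hij hs

theorem good_opp0 (A : Ax S) {w : V n} {i j : Fin n} (hi : S.odd w i)
    (hj : S.odd w j) (h1 : ¬ S.has w (S.seg i) (w j)) (h2 : ¬ S.has w (S.seg j) (w i)) :
    S.Good w i j := by
  intro x hx e; subst e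
  exact loc_opp0 A hx hi hj (fun e => h1 ⟨j, e.symm, rfl⟩) h1 h2

theorem good_opp2 (A : Ax S) {w : V n} {i j : Fin n} (hi : S.odd w i)
    (hj : S.odd w j) (h1 : S.two w (S.seg i) (w j)) (h2 : S.two w (S.seg j) (w i)) :
    S.Good w i j := by
  by_cases hij : S.seg i = S.seg j
  · exact good_row A hi hj hij
  obtain ⟨k, k', hk, a1, a2, a3, a4⟩ := h1
  obtain ⟨l, l', hl, b1, b2, b3, b4⟩ := h2
  intro x hx e; subst e
  exact loc_opp2 A hx hi hj hij a1 a2 hk b1 b2 hl a3 a4 b3 b4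

theorem mf_5II {w : V n} (A : Ax S) {i : Fin n} (hi : S.odd w i) {b : ℝ}
    (h0 : S.has w S.m b) (h1 : ¬ S.has w (S.seg i) b) (h2 : ¬ S.has w S.m (w i)) : S.MF w i := by
  obtain ⟨k, hk, rfl⟩ := h0
  exact ⟨k, hk, fun x hx e => by subst e; exact loc_L5II A hx hi hk h1 h2⟩

theorem mf_5I {w : V n} (A : Ax S) {i : Fin n} (hi : S.odd w i) {b : ℝ}
    (h0 : S.two w (S.seg i) b) (h1 : ¬ S.has w S.m b) (h2 : S.has w S.m (w i)) : S.MF w i := by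
  obtain ⟨l, hl, h2⟩ := h2
  obtain ⟨k, k', hk, a1, a2, rfl, a4⟩ := h0
  exact ⟨l, hl, fun x hx e => by subst e; exact loc_L5I A hx hi a1 a2 hk a4 hl h2 h1⟩

theorem mf_F3 {w : V n} (A : Ax S) {i : Fin n} (hi : S.odd w i) (hD : S.isD)
    (h1 : ¬ (S.has w (S.seg i) 0 ∧ S.has w S.m 0)) (h2 : S.has w S.m (w i)) : S.MF w i := by
  obtain ⟨k, hk, h2⟩ := h2
  refine ⟨k, hk, fun x hx e => ?_⟩
  subst e
  exact A.F3 x i k hD hx (reg_ng (reg_ngm hx hk) (by rwa [va_ng])) hi.1 hk h2.symm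
    (abs_ne_zero.1 hi.2.1) h1

theorem free_F1 {w : V n} (A : Ax S) {i : Fin n} (hi : S.odd w i) (hD : ¬ S.isD)
    (h : S.has w (S.seg i) 0 ↔ S.has w S.m (w i)) : S.Free w i := by
  intro x hx e
  subst e
  exact A.F1 x i hD hx (reg_ng hx hi) hi.1 (abs_ne_zero.1 hi.2.1) h

theorem free_F2 {w : V n} (A : Ax S) {i : Fin n} (hi : S.odd w i) (hD : S.isD)
    (h : S.has w (S.seg i) 0) (h1 : ¬ (S.has w S.m (w i) ∧ S.has w S.m 0)) : S.Free w i := by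
  obtain ⟨j, hj, h⟩ := h
  intro x hx e
  subst e
  exact A.F2 x i j hD hx (reg_ng hx hi) hj.symm hi.1 (abs_eq_zero.1 h) (abs_ne_zero.1 hi.2.1) h1

theorem free_6II {w : V n} (A : Ax S) {i : Fin n} (hi : S.odd w i) {s : ℕ} (hs : s ≠ S.m)
    (h0 : S.has w s 0) (h1 : ¬ S.has w (S.seg i) 0) (h2 : ¬ S.has w s (w i)) : S.Free w i := by
  obtain ⟨k, rfl, h0⟩ := h0
  intro x hx e
  subst e
  exact loc_L6II A hx hi hs (abs_eq_zero.1 h0) h1 h2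

theorem free_6I {w : V n} (A : Ax S) {i : Fin n} (hi : S.odd w i) {s : ℕ} (hs : s ≠ S.m)
    (h0 : S.has w (S.seg i) 0) (h1 : ¬ S.has w s 0) (h2 : S.two w s (w i)) : S.Free w i := by
  obtain ⟨k, hk, h0⟩ := h0
  obtain ⟨l, l', hl, rfl, b2, b3, b4⟩ := h2
  intro x hx e
  subst e
  exact loc_L6I A hx hi hk (abs_eq_zero.1 h0) hl b2.symm hs (fun e => h1 ⟨k, hk.trans e.symm, h0⟩)
    b3 b4 h1
end

section
variable {n : ℕ} {S : Sys n}

/-- counterexample to connectedness -/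
def Sys.Cex (S : Sys n) (w : V n) (p p' : Fin n) : Prop :=
  S.odd w p ∧ S.odd w p' ∧ ∃ x, S.Reg x ∧ va x = w ∧ ¬ S.C x (ng p (ng p' x))

/-- the ordered pairs of equal entries -/
noncomputable def Sys.pr (S : Sys n) (w : V n) : Finset (Fin n × Fin n) :=
  Finset.univ.filter (fun u => u.1 ≠ u.2 ∧ S.seg u.1 = S.seg u.2 ∧ w u.1 = w u.2)

theorem mem_pr {w : V n} {u v : Fin n} :
    (u, v) ∈ S.pr w ↔ u ≠ v ∧ S.seg u = S.seg v ∧ w u = w v := by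
  simp [Sys.pr]

theorem va_sw (i k : Fin n) (x : V n) : va (sw i k x) = sw i k (va x) := by
  funext q; simp only [va, sw]; grind

theorem sw_ng (i k p : Fin n) (x : V n) :
    sw i k (ng p x) = ng (Equiv.swap i k p) (sw i k x) := by
  funext q; simp only [ng, sw, Equiv.swap_apply_def]; grind

theorem cex_symm {w : V n} {p p' : Fin n} (h : S.Cex w p p') : S.Cex w p' p := by
  obtain ⟨h1, h2, x, hx, e, h⟩ := h
  exact ⟨h2, h1, x, hx, e, by rwa [ng_comm]⟩

theorem pair_ne0 {x : V n} (hx : S.Reg x) {k k' : Fin n} (hkk : k ≠ k')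
    (hs : S.seg k = S.seg k') (hw : va x k' = va x k) : va x k ≠ 0 := by
  have := (hx.1 k k' hkk hs).1
  intro e
  rw [e] at hw
  exact this ((abs_eq_zero.1 e).trans (abs_eq_zero.1 hw).symm)

theorem tr_sw (A : Ax S) {w : V n} {i k p p' : Fin n} (h : S.Cex w p p')
    (hs : S.seg i ≠ S.seg k) (hv : w i ≠ w k)
    (hreg : ∀ x, S.Reg x → va x = w → S.Reg (sw i k x))
    (h1 : S.odd (sw i k w) (Equiv.swap i k p)) (h2 : S.odd (sw i k w) (Equiv.swap i k p')) :
    S.Cex (sw i k w) (Equiv.swap i k p) (Equiv.swap i k p') := by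
  obtain ⟨o1, o2, x, hx, rfl, h⟩ := h
  refine ⟨h1, h2, sw i k x, hreg x hx rfl, va_sw i k x, fun hC => h ?_⟩
  rw [← sw_ng, ← sw_ng] at hC
  have hr := reg_ng2 hx o1 o2
  have e : va (ng p (ng p' x)) = va x := by rw [va_ng, va_ng]
  have c1 := A.M1 x i k hx (hreg x hx rfl) hs (Or.inl hv)
  have c2 := A.M1 _ i k hr (hreg _ hr e) hs (Or.inl (by
    have := congrFun e i; have h' := congrFun e k
    simp only [va] at this h' hv
    rwa [this, h']))
  exact A.trans _ _ _ c1 (A.trans _ _ _ hC (A.symm _ _ c2))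

theorem tr_II (A : Ax S) {w : V n} {p p' i k k' : Fin n} (h : S.Cex w p p')
    (hi : S.odd w i) (hkm : S.seg k ≠ S.m) (hkk : k ≠ k')
    (hk' : S.seg k' = S.seg k) (hw : w k' = w k) (h1 : ¬ S.has w (S.seg i) (w k))
    (h2 : ¬ S.has w (S.seg k) (w i)) :
    S.Cex (sw i k w) (Equiv.swap i k p) (Equiv.swap i k p') ∧ S.pr (sw i k w) ⊂ S.pr w := by
  have hs : S.seg i ≠ S.seg k := fun e => h1 ⟨k, e.symm, rfl⟩
  have hik : i ≠ k := fun e => hs (by rw [e])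
  have hv : w i ≠ w k := fun e => h1 ⟨i, rfl, e⟩
  have hwk : w k ≠ 0 := by
    obtain ⟨-, -, x, hx, rfl, -⟩ := h
    exact pair_ne0 hx hkk hk'.symm hw
  simp only [Sys.has, not_exists, not_and] at h1 h2
  have hodd : ∀ q, S.odd w q → S.odd (sw i k w) (Equiv.swap i k q) := by
    rintro q ⟨q1, q2, q3⟩
    have hqk : q ≠ k := by rintro rfl; exact q3 k' (Ne.symm hkk) hk' hw
    obtain ⟨i1, i2, i3⟩ := hi
    by_cases hqi : q = i
    · subst hqi
      rw [Equiv.swap_apply_left]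
      refine ⟨hkm, by simp only [sw]; grind, ?_⟩
      intro r; simp only [sw]; grind
    · rw [Equiv.swap_apply_of_ne_of_ne hqi hqk]
      refine ⟨q1, by simp only [sw]; grind, ?_⟩
      intro r; simp only [sw]; grind
  refine ⟨tr_sw A h hs hv ?_ (hodd p h.1) (hodd p' h.2.1), ?_⟩
  · rintro x hx rfl
    refine reg_sw2 hx hs hi.1 hkm ?_ ?_
    · intro q _ hq e; exact h1 q hq (by simp only [va]; rw [e])
    · intro q _ hq e; exact h2 q hq (by simp only [va]; rw [e])
  · rw [Finset.ssubset_iff_of_subset]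
    · refine ⟨(k, k'), ?_, ?_⟩
      · simp [Sys.pr, hkk, hk', hw]
      · simp only [Sys.pr, sw]; grind
    · rintro ⟨u, v⟩
      simp only [Sys.pr, Finset.mem_filter, Finset.mem_univ, true_and, sw]
      grind

theorem reg_swm {x : V n} {k l : Fin n} (h : S.Reg x) (hkm : S.seg k ≠ S.m) (hl : S.seg l = S.m)
    (h1 : ¬ S.has (va x) (S.seg k) (va x l)) (h2 : ¬ S.has (va x) S.m (va x k))
    (h3 : S.isD ∨ va x k ≠ 0) :
    S.Reg (sw k l x) := by
  simp only [Sys.has, va, abs_eq_abs, abs_eq_zero, ne_eq, not_or, not_exists, not_and]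
    at h1 h2 h3
  obtain ⟨r1, r2⟩ := h
  constructor
  · intro a b hab hs
    have ha := r1 a b hab hs
    have h1a := h1 a
    have h1b := h1 b
    have h2a := h2 a
    have h2b := h2 b
    clear r1 r2 h1 h2 h3
    simp only [sw]; grind
  · intro hd a ha; simp only [sw]
    have := r2 hd a
    clear r1 r2 h1 h2
    grind

theorem tr_9 (A : Ax S) {w : V n} {p p' l k k' : Fin n} (h : S.Cex w p p')
    (hkm : S.seg k ≠ S.m) (hkk : k ≠ k')
    (hk' : S.seg k' = S.seg k) (hw : w k' = w k) (hl : S.seg l = S.m)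
    (h1 : ¬ S.has w (S.seg k) (w l)) (h2 : ¬ S.has w S.m (w k)) :
    S.Cex (sw k l w) (Equiv.swap k l p) (Equiv.swap k l p') ∧ S.pr (sw k l w) ⊂ S.pr w := by
  have hs : S.seg k ≠ S.seg l := by rw [hl]; exact hkm
  have hik : k ≠ l := fun e => hs (by rw [e])
  have hv : w k ≠ w l := fun e => h1 ⟨k, rfl, e⟩
  have hwk : w k ≠ 0 := by
    obtain ⟨-, -, x, hx, rfl, -⟩ := h
    exact pair_ne0 hx hkk hk'.symm hw
  have g1 := h1
  have g2 := h2
  simp only [Sys.has, not_exists, not_and] at h1 h2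
  have hodd : ∀ q, S.odd w q → S.odd (sw k l w) (Equiv.swap k l q) := by
    rintro q ⟨q1, q2, q3⟩
    have hqk : q ≠ k := by rintro rfl; exact q3 k' (Ne.symm hkk) hk' hw
    have hql : q ≠ l := by rintro rfl; exact q1 hl
    rw [Equiv.swap_apply_of_ne_of_ne hqk hql]
    refine ⟨q1, by simp only [sw]; grind, ?_⟩
    intro r; simp only [sw]; grind
  refine ⟨tr_sw A h hs hv ?_ (hodd p h.1) (hodd p' h.2.1), ?_⟩
  · rintro x hx rfl
    exact reg_swm hx hkm hl g1 g2 (Or.inr hwk)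
  · rw [Finset.ssubset_iff_of_subset]
    · refine ⟨(k, k'), ?_, ?_⟩
      · simp [Sys.pr, hkk, hk', hw]
      · simp only [Sys.pr, sw]; grind
    · rintro ⟨u, v⟩
      simp only [Sys.pr, Finset.mem_filter, Finset.mem_univ, true_and, sw]
      grind

theorem tr_8 (A : Ax S) {w : V n} {p p' l k : Fin n} (h : S.Cex w p p') (hD : S.isD)
    (hkm : S.seg k ≠ S.m) (hw : w k = 0) (hl : S.seg l = S.m)
    (h1 : ¬ S.has w (S.seg k) (w l)) (h2 : ¬ S.has w S.m 0) :
    S.Cex (sw k l w) (Equiv.swap k l p) (Equiv.swap k l p') ∧ S.pr (sw k l w) ⊆ S.pr w ∧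
      S.has (sw k l w) S.m 0 := by
  have hs : S.seg k ≠ S.seg l := by rw [hl]; exact hkm
  have hik : k ≠ l := fun e => hs (by rw [e])
  have hv : w k ≠ w l := fun e => h1 ⟨k, rfl, e⟩
  have g1 := h1
  have g2 := h2
  simp only [Sys.has, not_exists, not_and] at h1 h2
  have hodd : ∀ q, S.odd w q → S.odd (sw k l w) (Equiv.swap k l q) := by
    rintro q ⟨q1, q2, q3⟩
    have hqk : q ≠ k := by rintro rfl; exact q2 hw
    have hql : q ≠ l := by rintro rfl; exact q1 hl
    rw [Equiv.swap_apply_of_ne_of_ne hqk hql]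
    refine ⟨q1, by simp only [sw]; grind, ?_⟩
    intro r; simp only [sw]; grind
  refine ⟨tr_sw A h hs hv ?_ (hodd p h.1) (hodd p' h.2.1), ?_, ?_⟩
  · rintro x hx rfl
    exact reg_swm hx hkm hl g1 (by rwa [hw]) (Or.inl hD)
  · rintro ⟨u, v⟩
    simp only [Sys.pr, Finset.mem_filter, Finset.mem_univ, true_and, sw]
    grind
  · exact ⟨l, hl, by simp only [sw]; grind⟩

end

section
variable {n : ℕ} {S : Sys n}

theorem trI_E (A : Ax S) {x : V n} {i k k' l : Fin n} (hx : S.Reg x) (hi : S.odd (va x) i)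
    (hk : S.seg k = S.seg i) (hk' : S.seg k' = S.seg i) 
    (hlm : S.seg l ≠ S.m) (hs : S.seg l ≠ S.seg i)
    (vl : x l = - x i) (h1 : ¬ S.has (va x) (S.seg l) (va x k)) :
    S.C x (sw i k' (sw k l x)) ∧ S.Reg (sw i k' (sw k l x)) := by
  have hi1 := hi.1
  have hr : S.Reg (sw k l x) := by
    simp only [Sys.odd, Sys.has, va, abs_eq_abs, abs_eq_zero, ne_eq, not_or, not_exists, not_and]
      at hi h1
    refine reg_sw2 hx (by grind) (by grind) hlm ?_ ?_
    · intro q; have := hi.2.2 q; grind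
    · intro q; have := h1 q; grind
  have hr2 : S.Reg (sw i k' (sw k l x)) := reg_sw1 hr hk'.symm
  refine ⟨A.trans _ _ _ (A.M1 x k l hx hr (by grind) (Or.inr ⟨by grind, hlm⟩)) ?_, hr2⟩
  exact A.w1 _ i k' hr hk'.symm hi1

theorem trI_E' (A : Ax S) {x : V n} {i k k' l l' : Fin n} (hx : S.Reg x) (hi : S.odd (va x) i)
    (hk : S.seg k = S.seg i) (hk' : S.seg k' = S.seg i) (hkk : k ≠ k') (hll : l ≠ l')
    (hl' : S.seg l' = S.seg l) (hik : i ≠ k) (hik' : i ≠ k')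
    (hlm : S.seg l ≠ S.m) (hs : S.seg l ≠ S.seg i)
    (vl : x l = - x i) (vl' : x l' = x i) (h1 : ¬ S.has (va x) (S.seg l) (va x k)) :
    S.C (ng i x) (ng l' (sw i k' (sw k l x))) := by
  have hE := trI_E A (x := ng i x) (i := i) (k := k) (k' := k') (l := l') (reg_ng hx hi)
    (by rwa [va_ng]) hk hk' (by rw [hl']; exact hlm) (by rw [hl']; exact hs)
    (by simp only [ng]; grind) (by rw [va_ng, hl']; exact h1)
  have e : ng l' (sw i k' (sw k l x)) = sw k k' (sw l l' (sw i k' (sw k l' (ng i x)))) := by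
    have : i ≠ l := by rintro rfl; exact hs rfl
    have : i ≠ l' := by rintro rfl; exact hs hl'.symm
    have : k ≠ l := by rintro rfl; exact hs hk
    have : k ≠ l' := by rintro rfl; exact hs (hl'.symm.trans hk)
    have : k' ≠ l := by rintro rfl; exact hs hk'
    have : k' ≠ l' := by rintro rfl; exact hs (hl'.symm.trans hk')
    clear hE h1 hi hx hk hk'
    funext q
    simp only [sw, ng]
    grind
  rw [e]
  refine A.trans _ _ _ hE.1 ?_
  refine A.trans _ _ _ (A.w1 _ l l' hE.2 hl'.symm hlm) ?_
  exact A.w1 _ k k' (reg_sw1 hE.2 hl'.symm) (hk.trans hk'.symm) (by rw [hk]; exact hi.1)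

theorem tr_I (A : Ax S) {w : V n} {p p' i k k' l l' : Fin n} (h : S.Cex w p p')
    (hi : S.odd w i) (hkk : k ≠ k') (hk : S.seg k = S.seg i) (hk' : S.seg k' = S.seg i)
    (hw : w k' = w k)
    (hll : l ≠ l') (hl' : S.seg l' = S.seg l) (hlm : S.seg l ≠ S.m)
    (hwl : w l = w i) (hwl' : w l' = w i)
    (h1 : ¬ S.has w (S.seg l) (w k)) :
    ∃ (w' : V n) (r r' : Fin n) (σ : Equiv.Perm (Fin n)), S.Cex w' r r' ∧ S.pr w' ⊂ S.pr w ∧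
      w' = w ∘ σ := by
  wlog hpi : p' ≠ i generalizing p p'
  · push Not at hpi
    refine this (cex_symm h) ?_
    rintro rfl
    obtain ⟨-, -, x, hx, rfl, h⟩ := h
    rw [hpi, ng_ng] at h
    exact h (A.refl x hx)
  have hs : S.seg l ≠ S.seg i := fun e => h1 ⟨k, hk.trans e.symm, rfl⟩
  obtain ⟨o1, o2, x, hx, rfl, h⟩ := h
  have hk0 := pair_ne0 hx hkk (hk.trans hk'.symm) hw
  obtain ⟨l, l', hll, q1, q2, vl, vl'⟩ := pair_vals hx hll hl'.symm hwl hwl'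
  rw [← q1] at hs h1 hlm q2
  have w1 : va x l = va x i := by simp [va, vl]
  have w2 : va x l' = va x i := by simp [va, vl']
  clear q1 hl' hwl hwl'
  have hik : i ≠ k := by rintro rfl; exact hi.2.2 k' (Ne.symm hkk) hk' hw
  have hik' : i ≠ k' := by rintro rfl; exact hi.2.2 k hkk hk hw.symm
  have hE := trI_E A hx hi hk hk' hlm hs vl h1
  have d1 : i ≠ l := by rintro rfl; exact hs rfl
  have d2 : i ≠ l' := by rintro rfl; exact hs q2.symm
  have d3 : k ≠ l := by rintro rfl; exact hs hk
  have d4 : k ≠ l' := by rintro rfl; exact hs (q2.symm.trans hk)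
  have d5 : k' ≠ l := by rintro rfl; exact hs hk'
  have d6 : k' ≠ l' := by rintro rfl; exact hs (q2.symm.trans hk')
  have ek : ∀ q, S.odd (va x) q → q ≠ k ∧ q ≠ k' ∧ q ≠ l ∧ q ≠ l' := by
    intro q hq
    refine ⟨?_, ?_, ?_, ?_⟩
    · rintro rfl; exact hq.2.2 k' (Ne.symm hkk) (hk'.trans hk.symm) hw
    · rintro rfl; exact hq.2.2 k hkk (hk.trans hk'.symm) hw.symm
    · rintro rfl; exact hq.2.2 l' (Ne.symm hll) q2 (w2.trans w1.symm)
    · rintro rfl; exact hq.2.2 l hll q2.symm (w1.trans w2.symm)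
  have ev : va (sw i k' (sw k l x)) = sw i k' (sw k l (va x)) := by rw [va_sw, va_sw]
  set w := va x with hwdef
  have hodd : ∀ q, S.odd w q → q ≠ i → S.odd (sw i k' (sw k l w)) q := by
    intro q hq hqi
    obtain ⟨e1, e2, e3, e4⟩ := ek q hq
    obtain ⟨q1, q2, q3⟩ := hq
    have g3 := q3 i (Ne.symm hqi)
    have g4 := q3 k (Ne.symm e1)
    have g5 := q3 k' (Ne.symm e2)
    simp only [Sys.has, not_exists, not_and] at h1
    have g6 := h1 q
    refine ⟨q1, by simp only [sw]; grind, ?_⟩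
    intro r
    have g7 := q3 r
    clear q3 h1 ek hE ev h hx
    simp only [sw]; grind
  have hl2 : S.odd (sw i k' (sw k l w)) l' := by
    have hu : ∀ q, S.seg q = S.seg l → q ≠ l → q ≠ l' → w q ≠ w i := by
      intro q hq hql hql' e
      have a1 := (hx.1 q l hql hq).1
      have a2 := (hx.1 q l' hql' (hq.trans q2.symm)).1
      rcases abs_eq_abs.1 e with e | e
      · exact a2 (e.trans vl'.symm)
      · exact a1 (e.trans vl.symm)
    have i2 := hi.2.1
    have hn : w k ≠ w i := fun e => hi.2.2 k (Ne.symm hik) hk e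
    refine ⟨by rw [q2]; exact hlm, by simp only [sw]; grind, ?_⟩
    intro r
    have g7 := hu r
    clear hu h1 ek hE ev h hx hodd
    simp only [sw]; grind
  have hpr : S.pr (sw i k' (sw k l w)) ⊂ S.pr w := by
    rw [Finset.ssubset_iff_of_subset]
    · refine ⟨(l, l'), ?_, ?_⟩
      · simp [Sys.pr, hll, q2, w1, w2]
      · have := hl2.2.2 l hll q2.symm
        simp only [Sys.pr]; grind
    · rintro ⟨u, v⟩
      have hn : w k ≠ w i := fun e => hi.2.2 k (Ne.symm hik) hk e
      simp only [Sys.has, not_exists, not_and] at h1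
      have j1 := hi.2.2 u
      have j2 := hi.2.2 v
      have j3 := h1 u
      have j4 := h1 v
      have hu : ∀ q, S.seg q = S.seg i → q ≠ k → q ≠ k' → w q ≠ w k := by
        intro q hq hqk hqk' e
        have a1 := (hx.1 q k hqk (hq.trans hk.symm)).1
        have a2 := (hx.1 q k' hqk' (hq.trans hk'.symm)).1
        have a3 := (hx.1 k k' hkk (hk.trans hk'.symm)).1
        rcases abs_eq_abs.1 e with e | e
        · exact a1 e
        · rcases abs_eq_abs.1 hw with e' | e'
          · exact a3 e'.symm
          · exact a2 (e.trans e'.symm)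
      have j5 := hu u
      have j6 := hu v
      clear hu
      clear h1 ek hE ev h hx hodd hl2 hi
      clear vl vl'
      simp only [mem_pr, sw]
      clear_value w
      clear hwdef
      rintro ⟨c1, c2, c3⟩
      refine ⟨c1, c2, ?_⟩
      simp only [hik, Ne.symm hkk, d1, d5, if_false] at c3
      grind
  have hperm : sw i k' (sw k l w) = w ∘ ⇑(Equiv.swap i k' * Equiv.swap k l : Equiv.Perm (Fin n)) ∨
     sw i k' (sw k l w) = w ∘ ⇑(Equiv.swap k l * Equiv.swap i k' : Equiv.Perm (Fin n)) := by
    right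
    funext q
    simp only [sw, Function.comp, Equiv.Perm.mul_apply, Equiv.swap_apply_def]
    clear h1 ek hE ev h hx hodd hl2 hi hpr
    grind
  obtain ⟨σ, hσ⟩ : ∃ σ : Equiv.Perm (Fin n), sw i k' (sw k l w) = w ∘ ⇑σ := by
    rcases hperm with h | h
    · exact ⟨_, h⟩
    · exact ⟨_, h⟩
  obtain ⟨f1, f2, f3, f4⟩ := ek p' o2
  have hr' := reg_ng hx o2
  have hv' : va (ng p' x) = w := va_ng x p'
  have vn : ∀ q, q ≠ p' → ng p' x q = x q := by
    intro q hq; simp [ng, hq]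
  have ec : ∀ (r : Fin n) (y : V n), r ≠ i → r ≠ k → r ≠ k' → r ≠ l →
      sw i k' (sw k l (ng r y)) = ng r (sw i k' (sw k l y)) := by
    intro r y a1 a2 a3 a4
    rw [sw_ng, Equiv.swap_apply_of_ne_of_ne a2 a4, sw_ng, Equiv.swap_apply_of_ne_of_ne a1 a3]
  by_cases hp : p = i
  · refine ⟨_, l', p', σ, ⟨hl2, hodd p' o2 hpi, sw i k' (sw k l x), hE.2, ev, ?_⟩, hpr, hσ⟩
    intro hC
    apply h
    rw [hp]
    have := trI_E' A hr' (by rwa [hv']) hk hk' hkk hll q2 hik hik' hlm hs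
      (by rw [vn _ (Ne.symm f3), vn _ (Ne.symm hpi)]; exact vl)
      (by rw [vn _ (Ne.symm f4), vn _ (Ne.symm hpi)]; exact vl') (by rwa [hv'])
    rw [ec p' x hpi f1 f2 f3] at this
    exact A.trans _ _ _ hE.1 (A.trans _ _ _ hC (A.symm _ _ this))
  · refine ⟨_, p, p', σ, ⟨hodd p o1 hp, hodd p' o2 hpi, sw i k' (sw k l x), hE.2, ev, ?_⟩, hpr, hσ⟩
    intro hC
    apply h
    obtain ⟨e1, e2, e3, e4⟩ := ek p o1
    have vn2 : ∀ q, q ≠ p → q ≠ p' → ng p (ng p' x) q = x q := by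
      intro q hq hq'; simp [ng, hq, hq']
    have hv2 : va (ng p (ng p' x)) = w := by rw [va_ng, va_ng]
    have := (trI_E A (x := ng p (ng p' x)) (reg_ng2 hx o1 o2) (by rwa [hv2]) hk hk' hlm hs
      (by rw [vn2 _ (Ne.symm e3) (Ne.symm f3), vn2 _ (Ne.symm hp) (Ne.symm hpi)]; exact vl)
      (by rwa [hv2])).1
    rw [ec p _ hp e1 e2 e3, ec p' x hpi f1 f2 f3] at this
    exact A.trans _ _ _ hE.1 (A.trans _ _ _ hC (A.symm _ _ this))
end

section
variable {n : ℕ} {S : Sys n}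

/-- reduced configurations -/
structure Sys.Mini (S : Sys n) (w : V n) : Prop where
  reg : ∃ x, S.Reg x ∧ va x = w
  satII : ∀ i s b, S.odd w i → s ≠ S.m → S.two w s b → ¬ S.has w (S.seg i) b → S.has w s (w i)
  satI : ∀ i s b, S.odd w i → s ≠ S.m → S.two w s (w i) → S.two w (S.seg i) b → S.has w s b
  sat8 : ∀ s d, S.isD → ¬ S.has w S.m 0 → s ≠ S.m → S.has w s 0 → S.has w S.m d → S.has w s d
  sat9 : ∀ s b d, s ≠ S.m → S.two w s b → S.has w S.m d → ¬ S.has w S.m b → S.has w s d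

/-- the separating cut -/
def Sys.Cut (S : Sys n) (w : V n) : Prop :=
  ∃ (R : ℕ → Prop) (T : ℝ → Prop),
    (∀ s a, R s → ¬ T a → S.full w s a) ∧
    (∀ s a, ¬ R s → T a → ¬ S.has w s a) ∧
    ((¬ S.isD ∧ (R S.m ↔ T 0)) ∨ (S.isD ∧ (R S.m ↔ ¬ T 0))) ∧
    (∃ u, w u ≠ 0 ∧ ¬ T (w u)) ∧ (∃ z, S.seg z ≠ S.m ∧ R (S.seg z))

theorem full_m {w : V n} {a : ℝ} : S.full w S.m a ↔ S.has w S.m a := by simp [Sys.full]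
theorem full_0 {w : V n} {s : ℕ} : S.full w s 0 ↔ S.has w s 0 := by simp [Sys.full]
theorem full_2 {w : V n} {s : ℕ} {a : ℝ} (hs : s ≠ S.m) (ha : a ≠ 0) :
    S.full w s a ↔ S.two w s a := by simp [Sys.full, hs, ha]
theorem has_of_two {w : V n} {s : ℕ} {a : ℝ} (h : S.two w s a) : S.has w s a := by
  obtain ⟨i, j, _, h, _, h', _⟩ := h; exact ⟨i, h, h'⟩
theorem has_of_full {w : V n} {s : ℕ} {a : ℝ} (h : S.full w s a) : S.has w s a := by
  unfold Sys.full at h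
  split_ifs at h
  · exact h
  · exact has_of_two h
theorem odd_of {w : V n} {s : ℕ} {a : ℝ} (h : S.has w s a) (h' : ¬ S.full w s a) :
    ∃ k, S.odd w k ∧ S.seg k = s ∧ w k = a ∧ s ≠ S.m ∧ a ≠ 0 := by
  unfold Sys.full at h'
  split_ifs at h' with hc
  · exact absurd h h'
  · push Not at hc
    obtain ⟨k, rfl, rfl⟩ := h
    refine ⟨k, ⟨hc.1, hc.2, fun q hq hs he => h' ⟨q, k, hq, hs, rfl, he, rfl⟩⟩, rfl, rfl, hc⟩
theorem two_ne {w : V n} (hw : ∃ x, S.Reg x ∧ va x = w) {s : ℕ} {a : ℝ} (h : S.two w s a) :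
    s ≠ S.m ∧ a ≠ 0 := by
  obtain ⟨x, hx, rfl⟩ := hw
  obtain ⟨i, j, hij, rfl, hs, rfl, hv⟩ := h
  refine ⟨fun e => ?_, pair_ne0 hx hij hs.symm hv⟩
  have := hx.1 i j hij hs.symm
  rcases abs_eq_abs.1 hv with e' | e'
  · exact this.1 e'.symm
  · exact this.2 e (by rw [e', neg_neg])
theorem odd_full {w : V n} {i : Fin n} (hi : S.odd w i) : ¬ S.full w (S.seg i) (w i) := by
  rw [full_2 hi.1 hi.2.1]
  rintro ⟨a, b, hab, h1, h2, h3, h4⟩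
  by_cases ha : a = i
  · exact hi.2.2 b (fun e => hab (ha.trans e.symm)) h2 h4
  · exact hi.2.2 a ha h1 h3

/-- the generating relation -/
def Sys.Rel (S : Sys n) (w : V n) (i k : Fin n) : Prop :=
  S.odd w k ∧ (S.seg k = S.seg i ∨ w k = w i ∨
    (¬ S.has w (S.seg i) (w k) ∧ ¬ S.has w (S.seg k) (w i)) ∨
    (S.two w (S.seg i) (w k) ∧ S.two w (S.seg k) (w i)))

theorem rel_good (A : Ax S) {w : V n} {i k : Fin n} (hi : S.odd w i) (h : S.Rel w i k) :
    S.Good w i k := by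
  obtain ⟨hk, h | h | h | h⟩ := h
  · exact good_row A hi hk h.symm
  · exact good_col A hi hk h.symm
  · exact good_opp0 A hi hk h.1 h.2
  · exact good_opp2 A hi hk h.1 h.2

/-- closed sets of odd indices -/
structure Sys.Cl (S : Sys n) (w : V n) (A : Fin n → Prop) : Prop where
  ne : ∃ i, A i
  od : ∀ i, A i → S.odd w i
  cl : ∀ i k, A i → S.Rel w i k → A k
  fr : (∃ z, S.seg z ≠ S.m ∧ w z = 0) → ∀ i, A i → ¬ S.Free w i

theorem Sys.Cl.row {w : V n} {A : Fin n → Prop} (hA : S.Cl w A) {i k : Fin n} (hi : A i)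
    (hk : S.odd w k) (h : S.seg k = S.seg i) : A k := hA.cl i k hi ⟨hk, Or.inl h⟩
theorem Sys.Cl.col {w : V n} {A : Fin n → Prop} (hA : S.Cl w A) {i k : Fin n} (hi : A i)
    (hk : S.odd w k) (h : w k = w i) : A k := hA.cl i k hi ⟨hk, Or.inr (Or.inl h)⟩

theorem lem_I (X : Ax S) {w : V n} (hw : S.Mini w) {A : Fin n → Prop} (hA : S.Cl w A) {s : ℕ}
    {b : ℝ} (hm : s = S.m → ∀ i, A i → ¬ S.MF w i) {i : Fin n} (hi : A i) (h1 : S.full w s (w i))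
    (h2 : S.full w (S.seg i) b) (h3 : ¬ S.full w s b) (h4 : ¬ (s = S.m ∧ b = 0)) :
    ∃ k, A k ∧ S.seg k = s ∧ w k = b := by
  have oi := hA.od i hi
  by_cases hs : s = S.m
  · subst hs
    have hb : b ≠ 0 := fun e => h4 ⟨rfl, e⟩
    rw [full_m] at h1 h3
    rw [full_2 oi.1 hb] at h2
    exact absurd (mf_5I X oi h2 h3 h1) (hm rfl i hi)
  · rw [full_2 hs oi.2.1] at h1
    by_cases hb : b = 0
    · subst hb
      rw [full_0] at h2 h3
      obtain ⟨z, hz, hz0⟩ := h2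
      exact absurd (free_6I X oi hs ⟨z, hz, hz0⟩ h3 h1)
        (hA.fr ⟨z, by rw [hz]; exact oi.1, hz0⟩ i hi)
    · rw [full_2 oi.1 hb] at h2
      obtain ⟨k, ok, rfl, rfl, -, -⟩ := odd_of (hw.satI i s b oi hs h1 h2) h3
      exact ⟨k, hA.cl i k hi ⟨ok, Or.inr (Or.inr (Or.inr ⟨h2, h1⟩))⟩, rfl, rfl⟩

theorem lem_II (X : Ax S) {w : V n} (hw : S.Mini w) {A : Fin n → Prop} (hA : S.Cl w A) {s : ℕ}
    {b : ℝ} (hm : s = S.m → ∀ i, A i → ¬ S.MF w i) {i : Fin n} (hi : A i)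
    (h1 : ¬ S.has w (S.seg i) b)
    (h2 : ¬ S.has w s (w i)) (h3 : S.has w s b) :
    ∃ k, A k ∧ S.seg k = s ∧ w k = b := by
  have oi := hA.od i hi
  by_cases hs : s = S.m
  · subst hs
    exact absurd (mf_5II X oi h3 h1 h2) (hm rfl i hi)
  · by_cases hb : b = 0
    · subst hb
      obtain ⟨z, hz, hz0⟩ := h3
      exact absurd (free_6II X oi hs ⟨z, hz, hz0⟩ h1 h2)
        (hA.fr ⟨z, by rw [hz]; exact hs, hz0⟩ i hi)
    · have h4 : ¬ S.full w s b := by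
        rw [full_2 hs hb]
        exact fun h => h2 (hw.satII i s b oi hs h h1)
      obtain ⟨k, ok, rfl, rfl, -, -⟩ := odd_of h3 h4
      exact ⟨k, hA.cl i k hi ⟨ok, Or.inr (Or.inr (Or.inl ⟨h1, h2⟩))⟩, rfl, rfl⟩

theorem out_c1 (X : Ax S) {w : V n} (hw : S.Mini w) {A : Fin n → Prop} (hA : S.Cl w A) {s : ℕ}
    {b : ℝ} (hm : s = S.m → ∀ i, A i → ¬ S.MF w i) (h0 : s = S.m → b = 0 → S.full w s b)
    (h1 : ∀ i, A i → S.full w s (w i)) {i : Fin n} (hi : A i) (h2 : S.has w (S.seg i) b) :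
    S.full w s b := by
  by_contra hc
  by_cases h3 : S.full w (S.seg i) b
  · obtain ⟨k, hk, -, rfl⟩ := lem_I X hw hA hm hi (h1 i hi) h3 hc (fun h => hc (h0 h.1 h.2))
    exact hc (h1 k hk)
  · obtain ⟨k, ok, hk, rfl, -, -⟩ := odd_of h2 h3
    exact hc (h1 k (hA.row hi ok hk))

theorem out_c2 (X : Ax S) {w : V n} (hw : S.Mini w) {A : Fin n → Prop} (hA : S.Cl w A) {s : ℕ}
    {b : ℝ} (hm : s = S.m → ∀ i, A i → ¬ S.MF w i)
    (h1 : ∀ i, A i → ¬ S.has w (S.seg i) b) (h2 : S.has w s b) {i : Fin n} (hi : A i) :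
    S.full w s (w i) := by
  by_contra hc
  by_cases h3 : S.has w s (w i)
  · obtain ⟨k, ok, hk, hk', -, -⟩ := odd_of h3 hc
    exact h1 k (hA.col hi ok hk') (by rwa [hk])
  · obtain ⟨k, hk, e, -⟩ := lem_II X hw hA hm hi (h1 i hi) h3 h2
    exact h1 k hk (by rwa [e])

theorem in_c1 (X : Ax S) {w : V n} (hw : S.Mini w) {A : Fin n → Prop} (hA : S.Cl w A) {s : ℕ}
    {b : ℝ} (hm : s = S.m → ∀ i, A i → ¬ S.MF w i) (h0 : s = S.m → b = 0 → S.full w s b)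
    (h1 : ∀ i, A i → S.full w (S.seg i) b) {i : Fin n} (hi : A i) (h2 : S.has w s (w i)) :
    S.full w s b := by
  by_contra hc
  by_cases h3 : S.full w s (w i)
  · obtain ⟨k, hk, e, -⟩ := lem_I X hw hA hm hi h3 (h1 i hi) hc (fun h => hc (h0 h.1 h.2))
    exact hc (by rw [← e]; exact h1 k hk)
  · obtain ⟨k, ok, hk, hk', -, -⟩ := odd_of h2 h3
    exact hc (by rw [← hk]; exact h1 k (hA.col hi ok hk'))

theorem in_c2 (X : Ax S) {w : V n} (hw : S.Mini w) {A : Fin n → Prop} (hA : S.Cl w A) {s : ℕ}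
    {b : ℝ} (hm : s = S.m → ∀ i, A i → ¬ S.MF w i)
    (h1 : ∀ i, A i → ¬ S.has w s (w i)) {i : Fin n} (hi : A i) (h2 : ¬ S.full w (S.seg i) b) :
    ¬ S.has w s b := by
  intro hc
  by_cases h3 : S.has w (S.seg i) b
  · obtain ⟨k, ok, hk, rfl, -, -⟩ := odd_of h3 h2
    exact h1 k (hA.row hi ok hk) hc
  · obtain ⟨k, hk, -, rfl⟩ := lem_II X hw hA hm hi h3 (h1 i hi) hc
    exact h1 k hk hc

/-- orientation -/
theorem orient {w : V n} (hw : S.Mini w) {A : Fin n → Prop} (hA : S.Cl w A) {p j : Fin n}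
    (hgen : ∀ k, A k → Relation.ReflTransGen (S.Rel w) p k) (hp : A p) (hj : S.odd w j)
    (hjA : ¬ A j) :
    (∀ i, A i → S.two w (S.seg j) (w i) ∧ ¬ S.has w (S.seg i) (w j)) ∨
    (∀ i, A i → ¬ S.has w (S.seg j) (w i) ∧ S.two w (S.seg i) (w j)) := by
  have key : ∀ i, A i → (S.two w (S.seg j) (w i) ∧ ¬ S.has w (S.seg i) (w j)) ∨
      (¬ S.has w (S.seg j) (w i) ∧ S.two w (S.seg i) (w j)) := by
    intro i hi
    have oi := hA.od i hi
    have a1 : S.has w (S.seg j) (w i) → S.two w (S.seg j) (w i) := by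
      intro h
      rw [← full_2 hj.1 oi.2.1]
      by_contra hc
      obtain ⟨k, ok, hk, hk', -, -⟩ := odd_of h hc
      exact hjA (hA.row (hA.col hi ok hk') hj hk.symm)
    have a2 : S.has w (S.seg i) (w j) → S.two w (S.seg i) (w j) := by
      intro h
      rw [← full_2 oi.1 hj.2.1]
      by_contra hc
      obtain ⟨k, ok, hk, hk', -, -⟩ := odd_of h hc
      exact hjA (hA.col (hA.row hi ok hk) hj hk'.symm)
    by_cases b1 : S.has w (S.seg j) (w i)
    · by_cases b2 : S.has w (S.seg i) (w j)
      · exact absurd (hA.cl i j hi ⟨hj, Or.inr (Or.inr (Or.inr ⟨a2 b2, a1 b1⟩))⟩) hjA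
      · exact Or.inl ⟨a1 b1, b2⟩
    · by_cases b2 : S.has w (S.seg i) (w j)
      · exact Or.inr ⟨b1, a2 b2⟩
      · exact absurd (hA.cl i j hi ⟨hj, Or.inr (Or.inr (Or.inl ⟨b2, b1⟩))⟩) hjA
  have step : ∀ i k, A i → S.Rel w i k →
      ((S.two w (S.seg j) (w i) ∧ ¬ S.has w (S.seg i) (w j)) ↔
       (S.two w (S.seg j) (w k) ∧ ¬ S.has w (S.seg k) (w j))) := by
    intro i k hi hr
    have hk := hA.cl i k hi hr
    have oi := hA.od i hi
    obtain ⟨ok, hr | hr | hr | hr⟩ := hr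
    · have ki := key i hi
      have kk := key k hk
      rw [hr] at kk ⊢
      have := @has_of_two n S w (S.seg i) (w j)
      tauto
    · have ki := key i hi
      have kk := key k hk
      rw [hr] at kk ⊢
      have := @has_of_two n S w (S.seg j) (w i)
      tauto
    · have s1 := hw.satII k (S.seg j) (w i) ok hj.1
      have s2 := hw.satII i (S.seg j) (w k) oi hj.1
      have ki := key i hi
      have kk := key k hk
      tauto
    · have s1 := hw.satI k (S.seg i) (w j) ok oi.1 hr.1
      have s2 := hw.satI i (S.seg k) (w j) oi ok.1 hr.2
      have ki := key i hi
      have kk := key k hk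
      tauto
  have all : ∀ k, Relation.ReflTransGen (S.Rel w) p k → A k ∧
      ((S.two w (S.seg j) (w p) ∧ ¬ S.has w (S.seg p) (w j)) ↔
       (S.two w (S.seg j) (w k) ∧ ¬ S.has w (S.seg k) (w j))) := by
    intro k h
    induction h with
    | refl => exact ⟨hp, Iff.rfl⟩
    | tail _ h2 ih => exact ⟨hA.cl _ _ ih.1 h2, ih.2.trans (step _ _ ih.1 h2)⟩
  by_cases hO : S.two w (S.seg j) (w p) ∧ ¬ S.has w (S.seg p) (w j)
  · left
    intro i hi
    exact (all i (hgen i hi)).2.1 hO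
  · right
    intro i hi
    rcases key i hi with h | h
    · exact absurd ((all i (hgen i hi)).2.2 h) hO
    · exact h
end

section
variable {n : ℕ} {S : Sys n}

theorem cut_gen (X : Ax S) {w : V n} (hw : S.Mini w) {A : Fin n → Prop} (hA : S.Cl w A)
    {p j : Fin n}
    (hgen : ∀ k, A k → Relation.ReflTransGen (S.Rel w) p k) (hp : A p) (hj : S.odd w j)
    (hjA : ¬ A j) (hMF : ∀ i, A i → ¬ S.MF w i)
    (H : (¬ S.isD ∧ ∀ i, A i → (S.has w (S.seg i) 0 ↔ ¬ S.has w S.m (w i))) ∨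
      (S.isD ∧ S.has w S.m 0 ∧ ∀ i, A i → (S.has w (S.seg i) 0 ∧ S.has w S.m (w i))) ∨
      (S.isD ∧ ∀ i, A i → (¬ S.has w (S.seg i) 0 ∧ ¬ S.has w S.m (w i)))) : S.Cut w := by
  rcases orient hw hA hgen hp hj hjA with ho | ho
  · have hm : ((¬ S.isD ∧ ((∀ i, A i → S.full w S.m (w i)) ↔ ∀ i, A i → ¬ S.has w (S.seg i) 0)) ∨
        (S.isD ∧ ((∀ i, A i → S.full w S.m (w i)) ↔ ¬ ∀ i, A i → ¬ S.has w (S.seg i) 0))) := by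
      simp only [full_m]
      rcases H with ⟨h, H⟩ | ⟨h, h0, H⟩ | ⟨h, H⟩
      · left
        refine ⟨h, ⟨fun g i hi hc => (H i hi).1 hc (g i hi), fun g i hi => ?_⟩⟩
        by_contra hc
        exact g i hi ((H i hi).2 hc)
      · right
        exact ⟨h, fun _ hc => hc p hp (H p hp).1, fun _ i hi => (H i hi).2⟩
      · right
        exact ⟨h, fun g => absurd (g p hp) (H p hp).2, fun hc => absurd (fun i hi => (H i hi).1) hc⟩
    refine ⟨fun s => ∀ i, A i → S.full w s (w i), fun b => ∀ i, A i → ¬ S.has w (S.seg i) b,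
      ?_, ?_, hm, ⟨p, (hA.od p hp).2.1, fun h => h p hp ⟨p, rfl, rfl⟩⟩, j, hj.1, ?_⟩
    · intro s b h1 h2
      push Not at h2
      obtain ⟨i, hi, h2⟩ := h2
      refine out_c1 X hw hA (fun _ => hMF) ?_ h1 hi h2
      rintro rfl rfl
      rcases H with ⟨h, H⟩ | ⟨h, h0, H⟩ | ⟨h, H⟩
      · exact absurd (full_m.1 (h1 i hi)) ((H i hi).1 h2)
      · exact full_m.2 h0
      · exact absurd h2 (H i hi).1
    · intro s b h1 h2 hc
      exact h1 fun i hi => out_c2 X hw hA (fun _ => hMF) h2 hc hi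
    · intro i hi
      rw [full_2 hj.1 (hA.od i hi).2.1]
      exact (ho i hi).1
  · have hm : ((¬ S.isD ∧ ((∃ i, A i ∧ S.has w S.m (w i)) ↔
          ∃ i, A i ∧ ¬ S.full w (S.seg i) 0)) ∨
        (S.isD ∧ ((∃ i, A i ∧ S.has w S.m (w i)) ↔ ¬ ∃ i, A i ∧ ¬ S.full w (S.seg i) 0))) := by
      simp only [full_0]
      rcases H with ⟨h, H⟩ | ⟨h, h0, H⟩ | ⟨h, H⟩
      · left
        refine ⟨h, ⟨?_, ?_⟩⟩
        · rintro ⟨i, hi, g⟩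
          exact ⟨i, hi, fun hc => (H i hi).1 hc g⟩
        · rintro ⟨i, hi, g⟩
          refine ⟨i, hi, ?_⟩
          by_contra hc
          exact g ((H i hi).2 hc)
      · right
        refine ⟨h, fun _ => ?_, fun _ => ⟨p, hp, (H p hp).2⟩⟩
        rintro ⟨i, hi, g⟩
        exact g (H i hi).1
      · right
        refine ⟨h, ?_, fun g => absurd ⟨p, hp, (H p hp).1⟩ g⟩
        rintro ⟨i, hi, g⟩
        exact absurd g (H i hi).2
    refine ⟨fun s => ∃ i, A i ∧ S.has w s (w i), fun b => ∃ i, A i ∧ ¬ S.full w (S.seg i) b,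
      ?_, ?_, hm, ⟨j, hj.2.1, ?_⟩, p, (hA.od p hp).1, p, hp, p, rfl, rfl⟩
    · rintro s b ⟨i, hi, h1⟩ h2
      have h2 : ∀ i, A i → S.full w (S.seg i) b := by
        intro k hk
        by_contra hc
        exact h2 ⟨k, hk, hc⟩
      refine in_c1 X hw hA (fun _ => hMF) ?_ h2 hi h1
      rintro rfl rfl
      rcases H with ⟨h, H⟩ | ⟨h, h0, H⟩ | ⟨h, H⟩
      · exact absurd h1 ((H i hi).1 (full_0.1 (h2 i hi)))
      · exact full_m.2 h0
      · exact absurd h1 (H i hi).2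
    · rintro s b h1 ⟨i, hi, h2⟩
      exact in_c2 X hw hA (fun _ => hMF) (fun k hk hc => h1 ⟨k, hk, hc⟩) hi h2
    · rintro ⟨i, hi, h⟩
      exact h ((full_2 (hA.od i hi).1 hj.2.1).2 (ho i hi).2)

theorem cls_good (X : Ax S) {w : V n} {p : Fin n} (hp : S.odd w p) {k : Fin n}
    (h : Relation.ReflTransGen (S.Rel w) p k) : S.odd w k ∧ S.Good w p k := by
  induction h with
  | refl => exact ⟨hp, good_refl X w p⟩
  | tail _ h2 ih => exact ⟨h2.1, good_trans X hp ih.1 ih.2 (rel_good X ih.1 h2)⟩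

theorem cut_cls (X : Ax S) {w : V n} (hw : S.Mini w) {p j : Fin n} (hp : S.odd w p)
    (hj : S.odd w j) (hg : ¬ S.Good w p j)
    (hf : (∃ z, S.seg z ≠ S.m ∧ w z = 0) → ¬ S.Free w p)
    (H : ∀ i, S.odd w i → S.Good w p i → ¬ S.MF w i)
    (H' : (¬ S.isD ∧ ∀ i, S.odd w i → S.Good w p i → (S.has w (S.seg i) 0 ↔ ¬ S.has w S.m (w i))) ∨
      (S.isD ∧ S.has w S.m 0 ∧
        ∀ i, S.odd w i → S.Good w p i → (S.has w (S.seg i) 0 ∧ S.has w S.m (w i))) ∨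
      (S.isD ∧
        ∀ i, S.odd w i → S.Good w p i → (¬ S.has w (S.seg i) 0 ∧ ¬ S.has w S.m (w i)))) :
    S.Cut w := by
  have g := fun k => cls_good X hp (k := k)
  refine cut_gen X hw (A := fun k => Relation.ReflTransGen (S.Rel w) p k) (p := p) (j := j) ?_
    (fun _ h => h) Relation.ReflTransGen.refl hj (fun h => hg (g j h).2)
    (fun i hi => H i (g i hi).1 (g i hi).2) ?_
  · refine ⟨⟨p, Relation.ReflTransGen.refl⟩, fun i hi => (g i hi).1, fun i k hi h => hi.tail h, ?_⟩
    intro hz i hi h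
    exact hf hz (free_of_good X hp (g i hi).1 (g i hi).2 h)
  · rcases H' with ⟨h, H⟩ | ⟨h, h0, H⟩ | ⟨h, H⟩
    · exact Or.inl ⟨h, fun i hi => H i (g i hi).1 (g i hi).2⟩
    · exact Or.inr (Or.inl ⟨h, h0, fun i hi => H i (g i hi).1 (g i hi).2⟩)
    · exact Or.inr (Or.inr ⟨h, fun i hi => H i (g i hi).1 (g i hi).2⟩)

theorem cut_BC (X : Ax S) {w : V n} (hw : S.Mini w) {p j : Fin n} (hp : S.odd w p)
    (hj : S.odd w j) (hg : ¬ S.Good w p j) (hD : ¬ S.isD) (hf : ¬ S.Free w p) : S.Cut w := by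
  refine cut_cls X hw hp hj hg (fun _ => hf)
    (fun i oi gi h => hf (free_of_good X hp oi gi (free_of_MF X oi (Or.inl hD) h)))
    (Or.inl ⟨hD, fun i oi gi => ?_⟩)
  have : ¬ (S.has w (S.seg i) 0 ↔ S.has w S.m (w i)) :=
    fun h => hf (free_of_good X hp oi gi (free_F1 X oi hD h))
  tauto

theorem cut_D1 (X : Ax S) {w : V n} (hw : S.Mini w) {p j : Fin n} (hp : S.odd w p)
    (hj : S.odd w j) (hg : ¬ S.Good w p j) (hD : S.isD) (h0 : S.has w S.m 0)
    (hf : ¬ S.Free w p) : S.Cut w := by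
  have hM : ∀ i, S.odd w i → S.Good w p i → ¬ S.MF w i :=
    fun i oi gi h => hf (free_of_good X hp oi gi (free_of_MF X oi (Or.inr h0) h))
  refine cut_cls X hw hp hj hg (fun _ => hf) hM
    (Or.inr (Or.inl ⟨hD, h0, fun i oi gi => ?_⟩))
  have h1 := fun h h' => hf (free_of_good X hp oi gi (free_F2 X oi hD h h'))
  have h2 := fun h1 h2 => hM i oi gi (mf_5II X oi h0 h1 h2)
  have h3 := fun h1 h2 => hM i oi gi (mf_F3 X oi hD h1 h2)
  tauto

theorem cut_D0a (X : Ax S) {w : V n} (hw : S.Mini w) {p j : Fin n} (hp : S.odd w p)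
    (hj : S.odd w j) (hg : ¬ S.Good w p j) (hD : S.isD) (h0 : ¬ S.has w S.m 0)
    (hs : ¬ S.Semi w p)
    (hf : (∃ z, S.seg z ≠ S.m ∧ w z = 0) → ¬ S.Free w p) : S.Cut w := by
  have hM : ∀ i, S.odd w i → S.Good w p i → ¬ S.MF w i :=
    fun i oi gi h => hs (semi_of_good X hp oi gi (semi_of_MF X oi hD h))
  refine cut_cls X hw hp hj hg hf hM
    (Or.inr (Or.inr ⟨hD, fun i oi gi => ⟨fun h => ?_, fun h => ?_⟩⟩))
  · have h1 := free_of_good X hp oi gi (free_F2 X oi hD h (fun h => h0 h.2))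
    obtain ⟨z, hz, hz0⟩ := h
    exact hf ⟨z, by rw [hz]; exact oi.1, hz0⟩ h1
  · exact hM i oi gi (mf_F3 X oi hD (fun h => h0 h.2) h)

theorem cut_D0b (X : Ax S) {w : V n} (hw : S.Mini w) {p : Fin n} (hp : S.odd w p)
    (hD : S.isD) (h0 : ¬ S.has w S.m 0) (hs : S.Semi w p) (hf : ¬ S.Free w p)
    (hz : ∃ z, S.seg z ≠ S.m ∧ w z = 0) : S.Cut w := by
  have hA : S.Cl w (fun i => S.odd w i ∧ S.Semi w i) := by
    refine ⟨⟨p, hp, hs⟩, fun i h => h.1, ?_, ?_⟩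
    · rintro i k ⟨h1, h2⟩ h
      exact ⟨h.1, semi_of_good X h.1 h1 (good_symm (rel_good X h1 h)) h2⟩
    · rintro - i ⟨h1, h2⟩ h
      exact hf (free_of_semi X h1 hp h h2 hs)
  have hfr := hA.fr hz
  have hmf : ∀ i, S.odd w i → S.MF w i → S.odd w i ∧ S.Semi w i :=
    fun i oi h => ⟨oi, semi_of_MF X oi hD h⟩
  have hT0 : ∀ i, S.odd w i ∧ S.Semi w i → ¬ S.has w (S.seg i) 0 := by
    intro i hi h
    exact hfr i hi (free_F2 X hi.1 hD h (fun h => h0 h.2))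
  have c2 : ∀ s b, (∀ i, S.odd w i ∧ S.Semi w i → ¬ S.has w (S.seg i) b) → ¬ S.has w S.m b →
      S.has w s b → s ≠ S.m ∧ (∀ i, S.odd w i ∧ S.Semi w i → S.full w s (w i)) ∧
        (∀ k, S.seg k = S.m → S.full w s (w k)) := by
    intro s b h1 h2 h3
    have hsm : s ≠ S.m := by rintro rfl; exact h2 h3
    refine ⟨hsm, fun i hi => out_c2 X hw hA (fun e => absurd e hsm) h1 h3 hi, ?_⟩
    intro k hk
    by_contra hc
    by_cases hd : S.has w s (w k)
    · obtain ⟨k2, ok, e1, e2, -, -⟩ := odd_of hd hc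
      refine h1 k2 (hmf k2 ok (mf_F3 X ok hD (fun h => h0 h.2) ⟨k, hk, e2.symm⟩)) ?_
      rwa [e1]
    · by_cases hb : b = 0
      · subst hb
        exact hd (hw.sat8 s (w k) hD h0 hsm h3 ⟨k, hk, rfl⟩)
      · by_cases ht : S.full w s b
        · rw [full_2 hsm hb] at ht
          exact hd (hw.sat9 s b (w k) hsm ht ⟨k, hk, rfl⟩ h2)
        · obtain ⟨k2, ok, rfl, rfl, -, -⟩ := odd_of h3 ht
          exact h1 k2 (hmf k2 ok (mf_5II X ok ⟨k, hk, rfl⟩ hd h2)) h3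
  refine ⟨fun s => s ≠ S.m ∧ (∀ i, S.odd w i ∧ S.Semi w i → S.full w s (w i)) ∧
        (∀ k, S.seg k = S.m → S.full w s (w k)),
      fun b => (∀ i, S.odd w i ∧ S.Semi w i → ¬ S.has w (S.seg i) b) ∧ ¬ S.has w S.m b,
      ?_, ?_, Or.inr ⟨hD, ?_⟩, ⟨p, hp.2.1, fun h => h.1 p ⟨hp, hs⟩ ⟨p, rfl, rfl⟩⟩, ?_⟩
  · rintro s b ⟨hsm, h1, h2⟩ h3
    by_cases hm : S.has w S.m b
    · obtain ⟨k, hk, rfl⟩ := hm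
      exact h2 k hk
    · have : ∃ i, (S.odd w i ∧ S.Semi w i) ∧ S.has w (S.seg i) b := by
        by_contra hc
        exact h3 ⟨fun i hi h => hc ⟨i, hi, h⟩, hm⟩
      obtain ⟨i, hi, h4⟩ := this
      exact out_c1 X hw hA (fun e => absurd e hsm) (fun e => absurd e hsm) h1 hi h4
  · rintro s b h1 ⟨h2, h3⟩ h4
    exact h1 (c2 s b h2 h3 h4)
  · exact ⟨fun h => absurd rfl h.1, fun h => absurd ⟨hT0, h0⟩ h⟩
  · obtain ⟨z, hz, hz0⟩ := hz
    exact ⟨z, hz, c2 (S.seg z) 0 hT0 h0 ⟨z, rfl, hz0⟩⟩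

theorem cut_mini (X : Ax S) {w : V n} (hw : S.Mini w) {p j : Fin n} (h : S.Cex w p j) :
    S.Cut w := by
  obtain ⟨hp, hj, x, hx, e, h⟩ := h
  have hg : ¬ S.Good w p j := fun g => h (g x hx e)
  have hg' : ¬ S.Good w j p := fun g => hg (good_symm g)
  have hF : ¬ (S.Free w p ∧ S.Free w j) := fun h => hg (good_of_free X hj h.1 h.2)
  have hS : ¬ (S.Semi w p ∧ S.Semi w j) := fun h => hg (good_of_semi X hj h.1 h.2)
  by_cases hD : S.isD
  · by_cases h0 : S.has w S.m 0
    · by_cases f : S.Free w p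
      · exact cut_D1 X hw hj hp hg' hD h0 (fun h => hF ⟨f, h⟩)
      · exact cut_D1 X hw hp hj hg hD h0 f
    · have a1 := cut_D0a X hw hp hj hg hD h0
      have a2 := cut_D0a X hw hj hp hg' hD h0
      have b1 := cut_D0b X hw hp hD h0
      have b2 := cut_D0b X hw hj hD h0
      by_cases E : ∃ z, S.seg z ≠ S.m ∧ w z = 0
      · simp only [E, true_imp_iff] at a1 a2 b1 b2
        clear hg hg' h hw hx
        by_cases s1 : S.Semi w p <;> by_cases f1 : S.Free w p <;> by_cases s2 : S.Semi w j <;>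
          by_cases f2 : S.Free w j <;> simp_all
      · simp only [E, false_imp_iff] at a1 a2
        clear hg hg' h hw hx
        by_cases s1 : S.Semi w p
        · exact a2 (fun h => hS ⟨s1, h⟩) trivial
        · exact a1 s1 trivial
  · by_cases f : S.Free w p
    · exact cut_BC X hw hj hp hg' hD (fun h => hF ⟨f, h⟩)
    · exact cut_BC X hw hp hj hg hD f

theorem sw_comp (i k : Fin n) (w : V n) : sw i k w = w ∘ Equiv.swap i k := by
  funext a
  simp only [sw, Function.comp, Equiv.swap_apply_def]
  grind

theorem cut_main_aux (X : Ax S) : ∀ (N : ℕ) (w : V n) (p j : Fin n),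
    2 * (S.pr w).card + (if S.has w S.m 0 then 0 else 1) < N → S.Cex w p j →
    ∃ (w' : V n) (σ : Equiv.Perm (Fin n)), w' = w ∘ σ ∧ (∃ x, S.Reg x ∧ va x = w') ∧ S.Cut w' := by
  intro N
  induction N with
  | zero => intro w p j h; omega
  | succ N ih =>
    intro w p j hN h
    have key : ∀ (w' : V n) (r r' : Fin n) (σ : Equiv.Perm (Fin n)), S.Cex w' r r' →
        S.pr w' ⊂ S.pr w → w' = w ∘ σ → ∃ (w' : V n) (σ : Equiv.Perm (Fin n)), w' = w ∘ σ ∧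
          (∃ x, S.Reg x ∧ va x = w') ∧ S.Cut w' := by
      intro w' r r' σ h1 h2 h3
      have hc := Finset.card_lt_card h2
      obtain ⟨w'', τ, e, h4, h5⟩ := ih w' r r' (by split_ifs at hN ⊢ <;> omega) h1
      refine ⟨w'', τ.trans σ, ?_, h4, h5⟩
      rw [e, h3]; rfl
    have hreg : ∃ x, S.Reg x ∧ va x = w := by
      obtain ⟨_, _, x, hx, e, _⟩ := h; exact ⟨x, hx, e⟩
    by_cases a1 : ∀ i s b, S.odd w i → s ≠ S.m → S.two w s b → ¬ S.has w (S.seg i) b →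
        S.has w s (w i)
    swap
    · push Not at a1
      obtain ⟨i, s, b, oi, hs, ⟨k, k', hk, rfl, e2, rfl, e4⟩, h1, h2⟩ := a1
      obtain ⟨g1, g2⟩ := tr_II X h oi hs hk e2 e4 h1 h2
      exact key _ _ _ (Equiv.swap i k) g1 g2 (sw_comp _ _ _)
    by_cases a2 : ∀ i s b, S.odd w i → s ≠ S.m → S.two w s (w i) → S.two w (S.seg i) b →
        S.has w s b
    swap
    · push Not at a2
      obtain ⟨i, s, b, oi, hs, ⟨l, l', hl, rfl, f2, f3, f4⟩, ⟨k, k', hk, e1, e2, rfl, e4⟩, h1⟩ := a2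
      obtain ⟨w', r, r', σ, g1, g2, g3⟩ := tr_I X h oi hk e1 e2 e4 hl f2 hs f3 f4 h1
      exact key _ _ _ σ g1 g2 g3
    by_cases a4 : ∀ s b d, s ≠ S.m → S.two w s b → S.has w S.m d → ¬ S.has w S.m b →
        S.has w s d
    swap
    · push Not at a4
      obtain ⟨s, b, d, hs, ⟨k, k', hk, rfl, e2, rfl, e4⟩, ⟨l, hl, rfl⟩, h1, h2⟩ := a4
      obtain ⟨g1, g2⟩ := tr_9 X h hs hk e2 e4 hl h2 h1
      exact key _ _ _ (Equiv.swap k l) g1 g2 (sw_comp _ _ _)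
    by_cases a3 : ∀ s d, S.isD → ¬ S.has w S.m 0 → s ≠ S.m → S.has w s 0 → S.has w S.m d →
        S.has w s d
    swap
    · push Not at a3
      obtain ⟨s, d, hD, h0, hs, ⟨k, rfl, hk⟩, ⟨l, hl, rfl⟩, h1⟩ := a3
      obtain ⟨g1, g2, g3⟩ := tr_8 X h hD hs hk hl h1 h0
      have hc := Finset.card_le_card g2
      obtain ⟨w'', τ, e, h4, h5⟩ := ih _ _ _ (by rw [if_pos g3]; rw [if_neg h0] at hN; omega) g1
      refine ⟨w'', τ.trans (Equiv.swap k l), ?_, h4, h5⟩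
      rw [e, sw_comp]; rfl
    exact ⟨w, Equiv.refl _, rfl, hreg, cut_mini X ⟨hreg, a1, a2, a3, a4⟩ h⟩

theorem cut_main (X : Ax S) {w : V n} {p j : Fin n} (h : S.Cex w p j) :
    ∃ (w' : V n) (σ : Equiv.Perm (Fin n)), w' = w ∘ σ ∧ (∃ x, S.Reg x ∧ va x = w') ∧ S.Cut w' :=
  cut_main_aux X _ w p j (Nat.lt_succ_self _) h
end

section
variable {n : ℕ}

/-- the segment of an index -/
noncomputable def sg (I : Finset (Fin n)) (i : Fin n) : ℕ :=
  1 + ((Finset.univ \ I).filter (fun k => k < i)).card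

theorem mval_eq (I : Finset (Fin n)) : mval n I = (Finset.univ \ I).card + 1 := by
  simp [mval, Qlist]

theorem sg_le (I : Finset (Fin n)) (i : Fin n) : 1 ≤ sg I i ∧ sg I i ≤ mval n I := by
  rw [mval_eq, sg]
  have := Finset.card_filter_le (Finset.univ \ I) (fun k => k < i)
  omega

theorem sg_mono (I : Finset (Fin n)) {i j : Fin n} (h : i ≤ j) : sg I i ≤ sg I j := by
  unfold sg
  have : ((Finset.univ \ I).filter (fun k => k < i)).card ≤
      ((Finset.univ \ I).filter (fun k => k < j)).card := by
    apply Finset.card_le_card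
    intro k hk
    simp only [Finset.mem_filter] at hk ⊢
    exact ⟨hk.1, lt_of_lt_of_le hk.2 h⟩
  omega

theorem sg_eq_iff (I : Finset (Fin n)) {i j : Fin n} (h : i ≤ j) :
    sg I i = sg I j ↔ ∀ k, i ≤ k → k < j → k ∈ I := by
  have hsub : ((Finset.univ \ I).filter (fun k => k < i)) ⊆
      ((Finset.univ \ I).filter (fun k => k < j)) := by
    intro k hk
    simp only [Finset.mem_filter] at hk ⊢
    exact ⟨hk.1, lt_of_lt_of_le hk.2 h⟩
  constructor
  · intro e k h1 h2
    by_contra hc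
    have := Finset.eq_of_subset_of_card_le hsub (by unfold sg at e; omega)
    have hk : k ∈ ((Finset.univ \ I).filter (fun k => k < j)) := by simp [hc, h2]
    rw [← this] at hk
    simp only [Finset.mem_filter] at hk
    exact absurd hk.2 (not_lt.2 h1)
  · intro H
    unfold sg
    congr 2
    ext k
    simp only [Finset.mem_filter, Finset.mem_sdiff, Finset.mem_univ, true_and]
    constructor
    · rintro ⟨a, b⟩; exact ⟨a, lt_of_lt_of_le b h⟩
    · rintro ⟨a, b⟩
      refine ⟨a, ?_⟩
      by_contra hc
      exact a (H k (not_lt.1 hc) b)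

theorem sg_m_iff (I : Finset (Fin n)) {i : Fin n} :
    sg I i = mval n I ↔ ∀ k, i ≤ k → k ∈ I := by
  rw [mval_eq]
  have hsub : ((Finset.univ \ I).filter (fun k => k < i)) ⊆ (Finset.univ \ I) :=
    Finset.filter_subset _ _
  constructor
  · intro e k h1
    by_contra hc
    have := Finset.eq_of_subset_of_card_le hsub (by unfold sg at e; omega)
    have hk : k ∈ (Finset.univ \ I) := by simp [hc]
    rw [← this] at hk
    simp only [Finset.mem_filter] at hk
    exact absurd hk.2 (not_lt.2 h1)
  · intro H
    have : ((Finset.univ \ I).filter (fun k => k < i)) = (Finset.univ \ I) := by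
      ext k
      simp only [Finset.mem_filter, Finset.mem_sdiff, Finset.mem_univ, true_and]
      refine ⟨fun h => h.1, fun a => ⟨a, ?_⟩⟩
      by_contra hc
      exact a (H k (not_lt.1 hc))
    unfold sg; rw [this]; omega

theorem list_aux (i : Fin n) : ∀ (l : List (Fin n)), l.Pairwise (· < ·) → ∀ t (h : t < l.length),
    (l[t] < i ↔ t < (l.filter (fun k => k < i)).length) := by
  intro l
  induction l with
  | nil => intro _ t h; simp at h
  | cons a r ih =>
    intro hp t h
    rw [List.pairwise_cons] at hp
    by_cases ha : a < i
    · rw [List.filter_cons_of_pos (by simpa using ha)]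
      cases t with
      | zero => simp [ha]
      | succ t => simpa using ih hp.2 t (by simpa using h)
    · have : (a :: r).filter (fun k => k < i) = [] := by
        rw [List.filter_eq_nil_iff]
        intro b hb
        rcases List.mem_cons.1 hb with rfl | hb
        · simpa using ha
        · have := hp.1 b hb
          simp only [decide_eq_true_eq, not_lt] at ha ⊢
          exact ha.trans this.le
      rw [this]
      simp only [List.length_nil, not_lt_zero, iff_false, not_lt] at ha ⊢
      cases t with
      | zero => simpa using ha
      | succ t => simpa using ha.trans (hp.1 _ (List.getElem_mem _)).le

theorem q_lt_iff (I : Finset (Fin n)) (i : Fin n) (s : ℕ) (h1 : 1 ≤ s) (h2 : s < mval n I) :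
    qval n I s < i.1 + 1 ↔ s < sg I i := by
  have hl : s - 1 < ((Finset.univ \ I).sort (· ≤ ·)).length := by
    rw [mval_eq] at h2; rw [Finset.length_sort]; omega
  have := list_aux i ((Finset.univ \ I).sort (· ≤ ·)) (Finset.sortedLT_sort _).pairwise (s-1) hl
  have hq : qval n I s = (((Finset.univ \ I).sort (· ≤ ·))[s-1]'hl).1 + 1 := by
    unfold qval
    rw [if_neg (by omega), if_pos h2]
    unfold Qlist
    rw [List.getD_eq_getElem _ _ (by simpa using hl)]
    simp
  have hc : (((Finset.univ \ I).sort (· ≤ ·)).filter (fun k => k < i)).length = sg I i - 1 := by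
    have nd : (((Finset.univ \ I).sort (· ≤ ·)).filter (fun k => k < i)).Nodup :=
      (Finset.sort_nodup _ _).filter _
    rw [← List.toFinset_card_of_nodup nd, sg, Nat.add_sub_cancel_left]
    congr 1
    ext k
    simp
  rw [hc, Fin.lt_def] at this
  rw [hq]
  constructor
  · intro h
    have := this.1 (by omega)
    omega
  · intro h
    have := this.2 (by omega)
    omega

theorem inSeg_iff {ct : CType} {I : Finset (Fin n)} (hstd : StandardI n ct I) (i : Fin n) (s : ℕ)
    (h1 : 1 ≤ s) (h2 : s ≤ mval n I) : InSeg n ct I s i ↔ sg I i = s := by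
  have hv : ∀ t, qv n ct I t = qval n I t := by intro t; simp [qv, hstd]
  unfold InSeg
  rw [hv, hv]
  have a1 : qval n I (s - 1) < i.1 + 1 ↔ s - 1 < sg I i := by
    by_cases h : s = 1
    · subst h
      have := (sg_le I i).1
      simp only [qval, Nat.sub_self, if_true]
      omega
    · exact q_lt_iff I i (s-1) (by omega) (by omega)
  have a2 : i.1 + 1 ≤ qval n I s ↔ sg I i ≤ s := by
    by_cases h : s < mval n I
    · have := q_lt_iff I i s h1 h
      omega
    · have := (sg_le I i).2
      have h' : qval n I s = n := by simp [qval, h]; omega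
      rw [h']
      have := i.2
      omega
  rw [a1, a2]
  omega

theorem hiq_iff {ct : CType} {I : Finset (Fin n)} (hstd : StandardI n ct I) (i : Fin n) :
    i.1 + 1 ≤ qv n ct I (mval n I - 1) → sg I i ≠ mval n I := by
  intro h e
  have := (inSeg_iff hstd i (mval n I) (by rw [mval_eq]; omega) le_rfl).2 e
  unfold InSeg at this
  omega
end

section
variable {n : ℕ}

theorem inn_ee (x : V n) (i : Fin n) : inn x (ee i) = x i := by
  simp [inn, ee, Pi.single_apply]
theorem inn_add (x y z : V n) : inn x (y + z) = inn x y + inn x z := by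
  simp [inn, mul_add, Finset.sum_add_distrib]
theorem inn_sub (x y z : V n) : inn x (y - z) = inn x y - inn x z := by
  simp [inn, mul_sub, Finset.sum_sub_distrib]
theorem inn_neg (x y : V n) : inn x (-y) = - inn x y := by
  simp [inn]
theorem inn_smul (x y : V n) (c : ℝ) : inn x (c • y) = c * inn x y := by
  simp [inn, Finset.mul_sum]; congr 1; funext i; ring
theorem inn_zero (x : V n) : inn x 0 = 0 := by simp [inn]
theorem ee_ap (i k : Fin n) : (ee i : V n) k = if k = i then 1 else 0 := by
  simp [ee, Pi.single_apply]

theorem refl_sub {i j : Fin n} (h : i ≠ j) (x : V n) : sRefl (ee i - ee j) x = sw i j x := by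
  funext k
  simp only [sRefl, inn_sub, inn_ee, Pi.sub_apply, Pi.smul_apply, ee_ap, smul_eq_mul, sw]
  simp only [h, h.symm, if_true, if_false]
  split_ifs <;> simp_all <;> ring
theorem refl_add {i j : Fin n} (h : i ≠ j) (x : V n) : sRefl (ee i + ee j) x = nsw i j x := by
  funext k
  simp only [sRefl, inn_add, inn_ee, Pi.sub_apply, Pi.add_apply, Pi.smul_apply, ee_ap, smul_eq_mul, nsw]
  simp only [h, h.symm, if_true, if_false]
  split_ifs <;> simp_all <;> ring
theorem refl_ee (i : Fin n) (x : V n) : sRefl (ee i) x = ng i x := by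
  funext k
  simp only [sRefl, inn_ee, Pi.sub_apply, Pi.smul_apply, ee_ap, smul_eq_mul, ng]
  split_ifs <;> simp_all <;> ring
theorem refl_2ee (i : Fin n) (x : V n) : sRefl ((2:ℝ) • ee i) x = ng i x := by
  funext k
  simp only [sRefl, inn_smul, inn_ee, Pi.sub_apply, Pi.smul_apply, ee_ap, smul_eq_mul, ng]
  split_ifs <;> simp_all <;> ring

theorem alpha_lt (ct : CType) (k : Fin n) (h : k.1 + 1 < n) :
    alphaR n ct k = ee k - ee ⟨k.1 + 1, h⟩ := by simp [alphaR, h]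
theorem alpha_last (ct : CType) (hn : 2 ≤ n) :
    alphaR n ct ⟨n-1, by omega⟩ = match ct with
      | CType.B => ee ⟨n-1, by omega⟩
      | CType.C => (2:ℝ) • ee ⟨n-1, by omega⟩
      | CType.D => ee ⟨n - 2, by omega⟩ + ee ⟨n-1, by omega⟩ := by
  have : ¬ (n - 1 + 1 < n) := by omega
  cases ct <;> simp [alphaR, this]

/-- the span -/
abbrev Sp (ct : CType) (I : Finset (Fin n)) : Submodule ℝ (V n) :=
  Submodule.span ℝ (alphaR n ct '' (I : Set (Fin n)))

theorem sp_alpha (ct : CType) {I : Finset (Fin n)} {k : Fin n} (h : k ∈ I) :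
    alphaR n ct k ∈ Sp ct I := Submodule.subset_span ⟨k, by simpa using h, rfl⟩

theorem sp_sub_aux (ct : CType) (I : Finset (Fin n)) (i : Fin n) : ∀ (d : ℕ) (h : i.1 + d < n),
    sg I i = sg I ⟨i.1 + d, h⟩ → (ee i - ee ⟨i.1 + d, h⟩ : V n) ∈ Sp ct I := by
  intro d
  induction d with
  | zero => intro h _; simp
  | succ d ih =>
    intro h e
    rw [sg_eq_iff I (by simp [Fin.le_def])] at e
    have h' : i.1 + d < n := by omega
    have e1 := ih h' ((sg_eq_iff I (by simp [Fin.le_def])).2 (fun k a b => e k a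
      (lt_trans b (by simp [Fin.lt_def]))))
    have e2 := sp_alpha ct (e ⟨i.1 + d, h'⟩ (by simp [Fin.le_def]) (by simp [Fin.lt_def]))
    rw [alpha_lt ct _ h] at e2
    have := Submodule.add_mem _ e1 e2
    simpa [add_assoc] using this

theorem sp_sub (ct : CType) {I : Finset (Fin n)} {i j : Fin n} (h : sg I i = sg I j) :
    (ee i - ee j : V n) ∈ Sp ct I := by
  wlog hij : i ≤ j generalizing i j
  · have := Submodule.neg_mem _ (this h.symm (le_of_not_ge hij))
    simpa using this
  obtain ⟨j, hj⟩ := j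
  obtain ⟨d, rfl⟩ := Nat.exists_eq_add_of_le (show i.1 ≤ j from hij)
  exact sp_sub_aux ct I i d hj h

theorem last_m {I : Finset (Fin n)} {i : Fin n} (hn : 2 ≤ n) (h : sg I i = mval n I) :
    (⟨n-1, by omega⟩ : Fin n) ∈ I ∧ sg I ⟨n-1, by omega⟩ = mval n I := by
  rw [sg_m_iff] at h ⊢
  have := h ⟨n-1, by omega⟩ (by have := i.2; simp only [Fin.le_def]; omega)
  refine ⟨this, fun k hk => ?_⟩
  have e : k = ⟨n-1, by omega⟩ := by
    apply Fin.ext; have := k.2; simp only [Fin.le_def] at hk ⊢; omega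
  rw [e]; exact this

theorem last_m2 {I : Finset (Fin n)} (hn : 2 ≤ n) (hstd : StandardI n CType.D I)
    (h : (⟨n-1, by omega⟩ : Fin n) ∈ I) :
    sg I ⟨n-1, by omega⟩ = mval n I ∧ sg I ⟨n-2, by omega⟩ = mval n I := by
  have h2 : (⟨n-2, by omega⟩ : Fin n) ∈ I := (hstd rfl hn).resolve_right (fun g => g h)
  have : sg I ⟨n-2, by omega⟩ = mval n I := by
    rw [sg_m_iff]
    intro k hk
    have : k = ⟨n-1, by omega⟩ ∨ k = ⟨n-2, by omega⟩ := by
      have := k.2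
      simp only [Fin.le_def, Fin.ext_iff] at hk ⊢; omega
    rcases this with e | e
    · rw [e]; exact h
    · rw [e]; exact h2
  exact ⟨(last_m hn this).2, this⟩

theorem sp_ee {ct : CType} {I : Finset (Fin n)} {i : Fin n} (hn : 2 ≤ n) (hct : ct ≠ CType.D)
    (h : sg I i = mval n I) : (ee i : V n) ∈ Sp ct I := by
  obtain ⟨h1, h2⟩ := last_m hn h
  have e1 := sp_sub ct (h.trans h2.symm)
  have e2 := sp_alpha ct h1
  rw [alpha_last ct hn] at e2
  have e3 : (ee ⟨n-1, by omega⟩ : V n) ∈ Sp ct I := by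
    cases ct with
    | B => exact e2
    | C => simpa [smul_smul] using Submodule.smul_mem _ (2⁻¹ : ℝ) e2
    | D => exact absurd rfl hct
  simpa using Submodule.add_mem _ e1 e3

theorem sp_add {ct : CType} {I : Finset (Fin n)} {i j : Fin n} (hn : 2 ≤ n)
    (hstd : StandardI n ct I)
    (h : sg I i = mval n I) (h' : sg I j = mval n I) : (ee i + ee j : V n) ∈ Sp ct I := by
  by_cases hct : ct = CType.D
  · subst hct
    obtain ⟨h1, -⟩ := last_m hn h
    obtain ⟨g1, g2⟩ := last_m2 hn hstd h1
    have e1 := sp_sub CType.D (h.trans g2.symm)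
    have e2 := sp_sub CType.D (h'.trans g1.symm)
    have e3 := sp_alpha CType.D h1
    rw [alpha_last _ hn] at e3
    have := Submodule.add_mem _ (Submodule.add_mem _ e1 e2) e3
    convert this using 1
    simp only
    abel
  · exact Submodule.add_mem _ (sp_ee hn hct h) (sp_ee hn hct h')

/-- the segment sum -/
noncomputable def fs (I : Finset (Fin n)) (s : ℕ) (v : V n) : ℝ :=
  inn v (fun k => if sg I k = s then 1 else 0)

theorem inn_comm (x y : V n) : inn x y = inn y x := by
  simp [inn, mul_comm]

theorem fs_ee (I : Finset (Fin n)) (s : ℕ) (i : Fin n) :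
    fs I s (ee i) = if sg I i = s then 1 else 0 := by
  rw [fs, inn_comm, inn_ee]
theorem fs_add (I : Finset (Fin n)) (s : ℕ) (x y : V n) : fs I s (x + y) = fs I s x + fs I s y := by
  rw [fs, inn_comm, inn_add, inn_comm, inn_comm _ y]; rfl
theorem fs_sub (I : Finset (Fin n)) (s : ℕ) (x y : V n) : fs I s (x - y) = fs I s x - fs I s y := by
  rw [fs, inn_comm, inn_sub, inn_comm, inn_comm _ y]; rfl
theorem fs_neg (I : Finset (Fin n)) (s : ℕ) (x : V n) : fs I s (-x) = - fs I s x := by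
  rw [fs, inn_comm, inn_neg, inn_comm]; rfl
theorem fs_smul (I : Finset (Fin n)) (s : ℕ) (c : ℝ) (x : V n) : fs I s (c • x) = c * fs I s x := by
  rw [fs, inn_comm, inn_smul, inn_comm]; rfl

theorem fs_sp {ct : CType} {I : Finset (Fin n)} (hn : 2 ≤ n) (hstd : StandardI n ct I) {s : ℕ}
    (hs : s ≠ mval n I) {v : V n} (hv : v ∈ Sp ct I) : fs I s v = 0 := by
  induction hv using Submodule.span_induction with
  | zero => simp [fs, inn]
  | add x y _ _ h1 h2 => rw [fs_add, h1, h2, add_zero]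
  | smul c x _ h => rw [fs_smul, h, mul_zero]
  | mem x hx =>
    obtain ⟨k, hk, rfl⟩ := hx
    have hk : k ∈ I := by simpa using hk
    by_cases h : k.1 + 1 < n
    · rw [alpha_lt ct k h, fs_sub, fs_ee, fs_ee]
      have : sg I k = sg I ⟨k.1 + 1, h⟩ := by
        rw [sg_eq_iff I (by simp [Fin.le_def])]
        intro l h1 h2
        have : l = k := by apply Fin.ext; simp only [Fin.le_def, Fin.lt_def] at h1 h2; omega
        rw [this]; exact hk
      rw [this, sub_self]
    · have e : k = ⟨n-1, by omega⟩ := by apply Fin.ext; have := k.2; simp only; omega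
      rw [e] at hk ⊢
      have hm : sg I ⟨n-1, by omega⟩ = mval n I := by
        rw [sg_m_iff]
        intro k' hk'
        have e : k' = ⟨n-1, by omega⟩ := by
          apply Fin.ext; have := k'.2; simp only [Fin.le_def] at hk' ⊢; omega
        rw [e]; exact hk
      rw [alpha_last ct hn]
      cases ct with
      | B => simp only; rw [fs_ee, hm, if_neg hs.symm]
      | C => simp only; rw [fs_smul, fs_ee, hm, if_neg hs.symm, mul_zero]
      | D =>
        simp only
        rw [fs_add, fs_ee, fs_ee, hm, (last_m2 hn hstd hk).2, if_neg hs.symm, add_zero]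

theorem sp_sub_iff {ct : CType} {I : Finset (Fin n)} (hn : 2 ≤ n) (hstd : StandardI n ct I)
    {i j : Fin n} : (ee i - ee j : V n) ∈ Sp ct I ↔ sg I i = sg I j := by
  refine ⟨fun h => ?_, sp_sub ct⟩
  by_contra hc
  by_cases h1 : sg I i = mval n I
  · have := fs_sp hn hstd (s := sg I j) (fun e => hc (h1.trans e.symm)) h
    rw [fs_sub, fs_ee, fs_ee, if_neg hc, if_pos rfl] at this
    norm_num at this
  · have := fs_sp hn hstd (s := sg I i) h1 h
    rw [fs_sub, fs_ee, fs_ee, if_pos rfl, if_neg (Ne.symm hc)] at this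
    norm_num at this

theorem sp_add_iff {ct : CType} {I : Finset (Fin n)} (hn : 2 ≤ n) (hstd : StandardI n ct I)
    {i j : Fin n} : (ee i + ee j : V n) ∈ Sp ct I ↔ sg I i = mval n I ∧ sg I j = mval n I := by
  refine ⟨fun h => ?_, fun h => sp_add hn hstd h.1 h.2⟩
  constructor
  · by_contra hc
    have := fs_sp hn hstd (s := sg I i) hc h
    rw [fs_add, fs_ee, fs_ee, if_pos rfl] at this
    split_ifs at this <;> norm_num at this
  · by_contra hc
    have := fs_sp hn hstd (s := sg I j) hc h
    rw [fs_add, fs_ee, fs_ee, if_pos rfl] at this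
    split_ifs at this <;> norm_num at this

theorem sp_ee_of {ct : CType} {I : Finset (Fin n)} (hn : 2 ≤ n) (hstd : StandardI n ct I)
    {i : Fin n} (h : (ee i : V n) ∈ Sp ct I) : sg I i = mval n I := by
  by_contra hc
  have := fs_sp hn hstd (s := sg I i) hc h
  rw [fs_ee, if_pos rfl] at this
  norm_num at this

/-- the concrete system -/
noncomputable def sy (ct : CType) (I : Finset (Fin n)) : Sys n where
  seg := sg I
  m := mval n I
  isD := ct = CType.D
  C := fun x y => Conn n ct I x y ∧ Conn n ct I y x

/-- the root `e_i` or `2e_i` -/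
noncomputable def sh (ct : CType) (i : Fin n) : V n := match ct with
  | CType.C => (2:ℝ) • ee i
  | _ => ee i

theorem sh_refl (ct : CType) (i : Fin n) (x : V n) : sRefl (sh ct i) x = ng i x := by
  cases ct <;> simp only [sh, refl_ee, refl_2ee]

theorem phi_cases {ct : CType} {β : V n} (h : β ∈ Phi n ct) :
    (∃ i j, i ≠ j ∧ (β = ee i + ee j ∨ β = ee i - ee j ∨ β = -(ee i + ee j))) ∨
    (ct ≠ CType.D ∧ ∃ i, β = sh ct i ∨ β = - sh ct i) := by
  cases ct with
  | B =>
    rcases h with ⟨i, j, hij, h⟩ | ⟨i, h⟩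
    · left; refine ⟨i, j, hij, ?_⟩; rw [neg_add]; exact h
    · right; exact ⟨by simp, i, h⟩
  | C =>
    rcases h with ⟨i, j, hij, h⟩ | ⟨i, h⟩
    · left; refine ⟨i, j, hij, ?_⟩; rw [neg_add]; exact h
    · right; exact ⟨by simp, i, h⟩
  | D =>
    obtain ⟨i, j, hij, h⟩ := h
    left; refine ⟨i, j, hij, ?_⟩; rw [neg_add]; exact h

theorem phi_D {ct : CType} {β : V n} (h : β ∈ DRoots n) : β ∈ Phi n ct := by
  cases ct with
  | B => exact Or.inl h
  | C => exact Or.inl h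
  | D => exact h

theorem phi_add (ct : CType) {i j : Fin n} (h : i ≠ j) : (ee i + ee j : V n) ∈ Phi n ct :=
  phi_D ⟨i, j, h, Or.inl rfl⟩
theorem phi_sub (ct : CType) {i j : Fin n} (h : i ≠ j) : (ee i - ee j : V n) ∈ Phi n ct :=
  phi_D ⟨i, j, h, Or.inr (Or.inl rfl)⟩
theorem phi_sh {ct : CType} (hct : ct ≠ CType.D) (i : Fin n) : (sh ct i : V n) ∈ Phi n ct := by
  cases ct with
  | B => exact Or.inr ⟨i, Or.inl rfl⟩
  | C => exact Or.inr ⟨i, Or.inl rfl⟩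
  | D => exact absurd rfl hct
theorem inn_sh (ct : CType) (x : V n) (i : Fin n) : inn x (sh ct i) = 0 ↔ x i = 0 := by
  cases ct <;> simp [sh, inn_ee, inn_smul]
theorem sp_sh {ct : CType} {I : Finset (Fin n)} (i : Fin n) :
    sh ct i ∈ Sp ct I ↔ (ee i : V n) ∈ Sp ct I := by
  cases ct with
  | B => rfl
  | D => rfl
  | C =>
    refine ⟨fun h => ?_, fun h => Submodule.smul_mem _ _ h⟩
    simpa [sh, smul_smul] using Submodule.smul_mem _ (2⁻¹ : ℝ) h

theorem reg_iff {ct : CType} {I : Finset (Fin n)} (hn : 2 ≤ n) (hstd : StandardI n ct I) (x : V n) :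
    RegI n ct I x ↔ (sy ct I).Reg x := by
  constructor
  · intro h
    refine ⟨fun i j hij hs => ⟨fun e => ?_, fun hm e => ?_⟩, fun hD i hi e => ?_⟩
    · refine h _ ⟨phi_sub ct hij, sp_sub ct hs⟩ ?_
      rw [inn_sub, inn_ee, inn_ee, e, sub_self]
    · refine h _ ⟨phi_add ct hij, sp_add hn hstd hm (hs.symm.trans hm)⟩ ?_
      rw [inn_add, inn_ee, inn_ee, e, neg_add_cancel]
    · refine h _ ⟨phi_sh hD i, (sp_sh i).2 (sp_ee hn hD hi)⟩ ((inn_sh ct x i).2 e)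
  · rintro ⟨h1, h2⟩ β ⟨hβ, hsp⟩
    have hsp : β ∈ Sp ct I := hsp
    rcases phi_cases hβ with ⟨i, j, hij, rfl | rfl | rfl⟩ | ⟨hct, i, rfl | rfl⟩
    · rw [sp_add_iff hn hstd] at hsp
      have := (h1 i j hij (hsp.1.trans hsp.2.symm)).2 hsp.1
      rw [inn_add, inn_ee, inn_ee]
      intro e; exact this (by linarith)
    · rw [sp_sub_iff hn hstd] at hsp
      have := (h1 i j hij hsp).1
      rw [inn_sub, inn_ee, inn_ee]
      intro e; exact this (by linarith)
    · rw [Submodule.neg_mem_iff, sp_add_iff hn hstd] at hsp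
      have := (h1 i j hij (hsp.1.trans hsp.2.symm)).2 hsp.1
      rw [inn_neg, inn_add, inn_ee, inn_ee]
      intro e; exact this (by linarith)
    · intro e
      exact h2 hct i (sp_ee_of hn hstd ((sp_sh i).1 hsp)) ((inn_sh ct x i).1 e)
    · intro e
      rw [Submodule.neg_mem_iff] at hsp
      rw [inn_neg, neg_eq_zero] at e
      exact h2 hct i (sp_ee_of hn hstd ((sp_sh i).1 hsp)) ((inn_sh ct x i).1 e)
end

section
variable {n : ℕ} {ct : CType} {I : Finset (Fin n)}

theorem sw_comm (i j : Fin n) (x : V n) : sw i j x = sw j i x := by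
  funext k; simp only [sw]; grind
theorem sw_sw (i j : Fin n) (x : V n) : sw i j (sw i j x) = x := by
  funext k; simp only [sw]; grind
theorem nsw_nsw (i j : Fin n) (x : V n) : nsw i j (nsw i j x) = x := by
  funext k; simp only [nsw]; grind
theorem sw_self (i : Fin n) (x : V n) : sw i i x = x := by
  funext k; simp only [sw]; grind
theorem sw_conj {i j k : Fin n} (hij : i ≠ j) (hik : i ≠ k) (hjk : j ≠ k) (x : V n) :
    sw j k (sw i j (sw j k x)) = sw i k x := by
  funext a; simp only [sw]; grind

theorem wi_trans {x y z : V n} (h : WIOrb n ct I x y) (h' : WIOrb n ct I y z) :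
    WIOrb n ct I x z := Relation.ReflTransGen.trans h h'
theorem wi_refl (x : V n) : WIOrb n ct I x x := Relation.ReflTransGen.refl

theorem wi_sw_aux (i : Fin n) : ∀ (d : ℕ) (h : i.1 + d < n),
    sg I i = sg I ⟨i.1 + d, h⟩ → ∀ x, WIOrb n ct I x (sw i ⟨i.1 + d, h⟩ x) := by
  intro d
  induction d with
  | zero => intro h _ x; simp only [add_zero, Fin.eta, sw_self]; exact wi_refl x
  | succ d ih =>
    intro h e x
    rw [sg_eq_iff I (by simp [Fin.le_def])] at e
    have h' : i.1 + d < n := by omega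
    have e1 := ih h' ((sg_eq_iff I (by simp [Fin.le_def])).2 (fun k a b => e k a
      (lt_trans b (by simp [Fin.lt_def]))))
    have hmem := e ⟨i.1 + d, h'⟩ (by simp [Fin.le_def]) (by simp [Fin.lt_def])
    have hne : (⟨i.1 + d, h'⟩ : Fin n) ≠ ⟨i.1 + d + 1, h⟩ := by simp [Fin.ext_iff]
    have e2 : ∀ y, WIOrb n ct I y (sw ⟨i.1 + d, h'⟩ ⟨i.1 + d + 1, h⟩ y) := by
      intro y
      refine Relation.ReflTransGen.single ⟨_, hmem, ?_⟩
      rw [alpha_lt ct _ h, refl_sub hne]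
    by_cases hd : d = 0
    · subst hd
      exact e2 x
    · have := wi_trans (wi_trans (e2 x) (e1 _)) (e2 _)
      rwa [sw_conj (by simp [Fin.ext_iff]; omega) (by simp [Fin.ext_iff]; omega) hne] at this

theorem wi_sw {i j : Fin n} (h : sg I i = sg I j) (x : V n) : WIOrb n ct I x (sw i j x) := by
  wlog hij : i ≤ j generalizing i j
  · rw [sw_comm]; exact this h.symm (le_of_not_ge hij)
  obtain ⟨j, hj⟩ := j
  obtain ⟨d, rfl⟩ := Nat.exists_eq_add_of_le (show i.1 ≤ j from hij)
  exact wi_sw_aux i d hj h x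

theorem wi_ng (hn : 2 ≤ n) (hct : ct ≠ CType.D) {k : Fin n} (h : sg I k = mval n I) (x : V n) :
    WIOrb n ct I x (ng k x) := by
  obtain ⟨h1, h2⟩ := last_m hn h
  have e : ∀ y, WIOrb n ct I y (ng ⟨n-1, by omega⟩ y) := by
    intro y
    refine Relation.ReflTransGen.single ⟨_, h1, ?_⟩
    rw [alpha_last ct hn]
    cases ct with
    | B => exact (refl_ee _ _).symm
    | C => exact (refl_2ee _ _).symm
    | D => exact absurd rfl hct
  have := wi_trans (wi_trans (wi_sw (ct := ct) (h.trans h2.symm) x) (e _))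
    (wi_sw (h.trans h2.symm) _)
  convert this using 1
  funext a; simp only [sw, ng]; grind

theorem wi_nn (hn : 2 ≤ n) (hct : ct = CType.D) (hstd : StandardI n ct I) {k l : Fin n}
    (hkl : k ≠ l) (hk : sg I k = mval n I) (hl : sg I l = mval n I) (x : V n) :
    WIOrb n ct I x (ng k (ng l x)) := by
  subst hct
  obtain ⟨h1, -⟩ := last_m hn hk
  obtain ⟨g1, g2⟩ := last_m2 hn hstd h1
  obtain ⟨a, ha⟩ : ∃ a : Fin n, a = ⟨n-2, by omega⟩ := ⟨_, rfl⟩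
  obtain ⟨b, hb⟩ : ∃ b : Fin n, b = ⟨n-1, by omega⟩ := ⟨_, rfl⟩
  have hab : a ≠ b := by rw [ha, hb]; simp [Fin.ext_iff]; omega
  have e0 : ∀ y, WIOrb n CType.D I y (nsw a b y) := by
    intro y
    refine Relation.ReflTransGen.single ⟨_, h1, ?_⟩
    rw [alpha_last _ hn, ← refl_add hab, ha, hb]
  rw [← ha] at g2
  rw [← hb] at g1
  have e1 : ∀ y, WIOrb n CType.D I y (ng a (ng b y)) := by
    intro y
    have := wi_trans (e0 y) (wi_sw (g2.trans g1.symm) _)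
    convert this using 1
    funext c; simp only [sw, nsw, ng]; grind
  have e2 : ∀ k, k ≠ b → sg I k = mval n I → ∀ y, WIOrb n CType.D I y (ng k (ng b y)) := by
    intro k hkb hk y
    have := wi_trans (wi_trans (wi_sw (ct := CType.D) (hk.trans g2.symm) y) (e1 _))
      (wi_sw (hk.trans g2.symm) _)
    convert this using 1
    funext c; simp only [sw, ng]; grind
  by_cases hkb : k = b
  · subst hkb
    rw [ng_comm]
    exact e2 l hkl.symm hl x
  · by_cases hlb : l = b
    · subst hlb
      exact e2 k hkl hk x
    · have := wi_trans (e2 l hlb hl x) (e2 k hkb hk _)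
      convert this using 1
      funext c; simp only [ng]; grind

theorem conn_refl {x : V n} (h : RegI n ct I x) : Conn n ct I x x :=
  ⟨h, h, Relation.ReflTransGen.refl⟩
theorem conn_trans {x y z : V n} (h : Conn n ct I x y) (h' : Conn n ct I y z) : Conn n ct I x z :=
  ⟨h.1, h'.2.1, h.2.2.trans h'.2.2⟩
theorem conn_wi {x y : V n} (hx : RegI n ct I x) (hy : RegI n ct I y) (h : WIOrb n ct I x y) :
    Conn n ct I x y := ⟨hx, hy, Relation.ReflTransGen.single ⟨hx, hy, Or.inl h⟩⟩
theorem conn_root (hstd : StandardI n ct I) {x : V n} {β : V n} (hx : RegI n ct I x)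
    (hy : RegI n ct I (sRefl β x)) (h1 : β ∈ PhiPos n ct) (h2 : β ∉ Sp ct I)
    (h3 : ¬ Exc n ct I x β) : Conn n ct I x (sRefl β x) := by
  by_cases h : sRefl β x = x
  · rw [h]; exact conn_refl hx
  · refine ⟨hx, hy, Relation.ReflTransGen.single ⟨hx, hy, Or.inr ⟨β, ?_, wi_refl _⟩⟩⟩
    rw [LinkedRoot, if_pos hstd]
    exact ⟨hx, h1, fun h => h2 h.2, hy, h, h3⟩

theorem pos_sub {i j : Fin n} (h : i < j) : (ee i - ee j : V n) ∈ PhiPos n ct := by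
  refine ⟨phi_sub ct h.ne, i, ?_, fun k hk => ?_⟩
  · simp [ee_ap, h.ne]
  · simp [ee_ap, hk.ne, (hk.trans h).ne]
theorem pos_add {i j : Fin n} (h : i ≠ j) : (ee i + ee j : V n) ∈ PhiPos n ct := by
  wlog hij : i < j generalizing i j
  · rw [add_comm]; exact this h.symm (lt_of_le_of_ne (not_lt.1 hij) h.symm)
  refine ⟨phi_add ct h, i, ?_, fun k hk => ?_⟩
  · simp [ee_ap, h]
  · simp [ee_ap, hk.ne, (hk.trans hij).ne]
theorem pos_sh (hct : ct ≠ CType.D) (i : Fin n) : (sh ct i : V n) ∈ PhiPos n ct := by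
  refine ⟨phi_sh hct i, i, ?_, fun k hk => ?_⟩
  · cases ct <;> simp [sh, ee_ap]
  · cases ct <;> simp [sh, ee_ap, hk.ne]

theorem nsl_eq (hstd : StandardI n ct I) (x : V n) {s : ℕ} (h1 : 1 ≤ s) (h2 : s ≤ mval n I)
    (a : ℝ) : nsl n ct I x s a =
      (Finset.univ.filter (fun i : Fin n => sg I i = s ∧ |x i| = a)).card := by
  unfold nsl
  congr 1
  ext i
  simp only [Finset.mem_filter, inSeg_iff hstd i s h1 h2]

theorem nsl_has (hstd : StandardI n ct I) (x : V n) {s : ℕ} (h1 : 1 ≤ s) (h2 : s ≤ mval n I)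
    (a : ℝ) : 0 < nsl n ct I x s a ↔ (sy ct I).has (va x) s a := by
  rw [nsl_eq hstd x h1 h2, Finset.card_pos]
  constructor
  · rintro ⟨i, hi⟩
    simp only [Finset.mem_filter, Finset.mem_univ, true_and] at hi
    exact ⟨i, hi.1, hi.2⟩
  · rintro ⟨i, hi⟩
    exact ⟨i, by simp only [Finset.mem_filter, Finset.mem_univ, true_and]; exact hi⟩

theorem nsl_le1 (hstd : StandardI n ct I) {x : V n} (hx : (sy ct I).Reg x) {s : ℕ} (h1 : 1 ≤ s)
    (h2 : s ≤ mval n I) {a : ℝ} (h : s = mval n I ∨ a = 0) : nsl n ct I x s a ≤ 1 := by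
  rw [nsl_eq hstd x h1 h2, Finset.card_le_one]
  intro i hi j hj
  simp only [Finset.mem_filter, Finset.mem_univ, true_and] at hi hj
  by_contra hc
  have := hx.1 i j hc (hi.1.trans hj.1.symm)
  rcases h with rfl | rfl
  · rcases abs_eq_abs.1 (hi.2.trans hj.2.symm) with e | e
    · exact this.1 e
    · exact this.2 hi.1 e
  · exact this.1 ((abs_eq_zero.1 hi.2).trans (abs_eq_zero.1 hj.2).symm)

/-- possible forms of an exceptional root -/
def Ex (ct : CType) (I : Finset (Fin n)) (x β : V n) (i : Fin n) : Prop :=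
  sg I i ≠ mval n I ∧ x i ≠ 0 ∧
  ((ct ≠ CType.D ∧ ¬ ((sy ct I).has (va x) (sg I i) 0 ↔ (sy ct I).has (va x) (mval n I) |x i|)) ∨
   (ct = CType.D ∧ (sy ct I).has (va x) (mval n I) |x i| ∧ (sy ct I).has (va x) (sg I i) 0 ∧
      (sy ct I).has (va x) (mval n I) 0)) ∧
  (β = sh ct i ∨ (∃ j, sg I j = sg I i ∧ x j = 0 ∧ β = ee i + ee j) ∨
    (∃ j, sg I j = mval n I ∧ |x i| = |x j| ∧ (β = ee i + ee j ∨ β = ee i - ee j)))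

theorem ex_BC (hstd : StandardI n ct I) {x β : V n} (hx : (sy ct I).Reg x) (hct : ct ≠ CType.D)
    (h : ExcBC n ct I (sh ct) x β) : ∃ i, Ex ct I x β i := by
  obtain ⟨s, h1, h2, a, ha, -, h4, h⟩ := h
  have hs := fun i => inSeg_iff hstd i s h1 h2.le
  have hm := fun i => inSeg_iff hstd i (mval n I) (by omega) le_rfl
  have c1 := nsl_has hstd x h1 h2.le 0
  have c2 := nsl_has hstd x (s := mval n I) (by omega) le_rfl a
  have hiff : ¬ ((sy ct I).has (va x) s 0 ↔ (sy ct I).has (va x) (mval n I) a) := by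
    rw [← c1, ← c2]; omega
  simp only [hs, hm] at h
  have key : ∀ i, sg I i = s → |x i| = a → (β = sh ct i ∨
      (∃ j, sg I j = sg I i ∧ x j = 0 ∧ β = ee i + ee j) ∨
      (∃ j, sg I j = mval n I ∧ |x i| = |x j| ∧ (β = ee i + ee j ∨ β = ee i - ee j))) →
      ∃ i, Ex ct I x β i := by
    rintro i rfl rfl h
    exact ⟨i, h2.ne, abs_pos.1 ha, Or.inl ⟨hct, hiff⟩, h⟩
  rcases h with ⟨i, j, h1, h2, h3, h4, h | h⟩ | ⟨i, j, h1, h2, ⟨h3, h4⟩ | ⟨h3, h4⟩, h | h⟩ |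
      ⟨i, j, h1, h2, ⟨h3, h4⟩ | ⟨h3, h4⟩, h | h⟩
  · exact key i h1 h3 (Or.inl h)
  · exact key i h1 h3 (Or.inr (Or.inl ⟨j, h2.trans h1.symm, h4, h⟩))
  all_goals
    have h5 : |x i| = a := by rw [h3]; simp [abs_of_pos ha]
    have h6 : |x j| = a := by rw [h4]; simp [abs_of_pos ha]
    first
    | exact key i h1 h5 (Or.inl h)
    | exact key i h1 h5 (Or.inr (Or.inr ⟨j, h2, h5.trans h6.symm, Or.inl h⟩))
    | exact key i h1 h5 (Or.inr (Or.inr ⟨j, h2, h5.trans h6.symm, Or.inr h⟩))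

theorem ex_D {x β : V n} (hstd : StandardI n CType.D I)
    (h : ExcD n I x β) : ∃ i, Ex CType.D I x β i := by
  obtain ⟨s, h1, h2, a, ha, -, h4, h5, h6, i, j, k, l, hi, hj, hk, hl, xj, xl, h⟩ := h
  have c1 := (nsl_has hstd x h1 h2.le 0).1 (by omega)
  have c2 := (nsl_has hstd x (s := mval n I) (by omega) le_rfl a).1 (by omega)
  have c3 := (nsl_has hstd x (s := mval n I) (by omega) le_rfl 0).1 (by omega)
  rw [inSeg_iff hstd _ s h1 h2.le] at hi hj
  rw [inSeg_iff hstd _ _ (by omega) le_rfl] at hk hl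
  have hai : |x i| = a := by
    rcases h with ⟨h | h, _⟩ | ⟨h | h, _⟩ <;> rw [h.1] <;> simp [abs_of_pos ha]
  have hak : |x k| = a := by
    rcases h with ⟨h | h, _⟩ | ⟨h | h, _⟩ <;> rw [h.2] <;> simp [abs_of_pos ha]
  subst hai
  subst hi
  refine ⟨i, h2.ne, abs_pos.1 ha, Or.inr ⟨rfl, c2, c1, c3⟩, Or.inr ?_⟩
  rcases h with ⟨_, h | h⟩ | ⟨_, h | h⟩
  · exact Or.inl ⟨j, hj, xj, h⟩
  · exact Or.inr ⟨k, hk, hak.symm, Or.inl h⟩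
  · exact Or.inl ⟨j, hj, xj, h⟩
  · exact Or.inr ⟨k, hk, hak.symm, Or.inr h⟩

theorem ex_of (hstd : StandardI n ct I) {x β : V n} (hx : (sy ct I).Reg x)
    (h : Exc n ct I x β) : ∃ i, Ex ct I x β i := by
  cases ct with
  | B => exact ex_BC hstd hx (by simp) h
  | C => exact ex_BC hstd hx (by simp) h
  | D => exact ex_D hstd h
end

section
variable {n : ℕ} {ct : CType} {I : Finset (Fin n)}

theorem eq_add_add {i j a b : Fin n} (hij : i ≠ j) (h : (ee i + ee j : V n) = ee a + ee b) :
    (i = a ∧ j = b) ∨ (i = b ∧ j = a) := by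
  have h1 := congrFun h i
  have h2 := congrFun h j
  simp only [Pi.add_apply, ee_ap] at h1 h2
  grind
theorem ne_add_sub {i j a b : Fin n} (h : (ee i + ee j : V n) = ee a - ee b) : False := by
  have h1 := congrArg (fun v => ∑ k, v k) h
  simp [ee_ap, Finset.sum_add_distrib, Finset.sum_sub_distrib] at h1
theorem eq_sub_sub {i j a b : Fin n} (hij : i ≠ j) (h : (ee i - ee j : V n) = ee a - ee b) :
    i = a ∧ j = b := by
  have h1 := congrFun h i
  have h2 := congrFun h j
  simp only [Pi.sub_apply, ee_ap] at h1 h2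
  grind
theorem ne_add_sh {i j a : Fin n} (hij : i ≠ j) (h : (ee i + ee j : V n) = sh ct a) : False := by
  have h1 := congrFun h i
  have h2 := congrFun h j
  cases ct <;> simp only [sh, Pi.add_apply, Pi.smul_apply, smul_eq_mul, ee_ap] at h1 h2 <;> grind
theorem ne_sub_sh {i j a : Fin n} (hij : i ≠ j) (h : (ee i - ee j : V n) = sh ct a) : False := by
  have h1 := congrFun h i
  have h2 := congrFun h j
  cases ct <;> simp only [sh, Pi.sub_apply, Pi.smul_apply, smul_eq_mul, ee_ap] at h1 h2 <;> grind
theorem sh_inj {i a : Fin n} (h : (sh ct i : V n) = sh ct a) : i = a := by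
  have h1 := congrFun h i
  cases ct <;> simp only [sh, Pi.smul_apply, smul_eq_mul, ee_ap] at h1 <;> grind

theorem cn_M1 (hn : 2 ≤ n) (hstd : StandardI n ct I) (x : V n) (i j : Fin n) (hx : (sy ct I).Reg x)
    (hy : (sy ct I).Reg (sw i j x)) (hs : sg I i ≠ sg I j)
    (h : |x i| ≠ |x j| ∨ (sg I i ≠ mval n I ∧ sg I j ≠ mval n I)) : Conn n ct I x (sw i j x) := by
  wlog hij : i ≤ j generalizing i j
  · rw [sw_comm] at hy ⊢
    exact this j i hy hs.symm (by rw [ne_comm, and_comm]; exact h) (le_of_not_ge hij)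
  have hne : i ≠ j := fun e => hs (by rw [e])
  rw [← reg_iff hn hstd] at hy
  have hx' := (reg_iff hn hstd x).2 hx
  rw [← refl_sub hne] at hy ⊢
  refine conn_root hstd hx' hy (pos_sub (lt_of_le_of_ne hij hne))
    (fun g => hs ((sp_sub_iff hn hstd).1 g)) (fun g => ?_)
  obtain ⟨a, h1, h2, -, g | ⟨b, _, _, g⟩ | ⟨b, g1, g2, g | g⟩⟩ := ex_of hstd hx g
  · exact ne_sub_sh hne g
  · exact ne_add_sub g.symm
  · exact ne_add_sub g.symm
  · obtain ⟨rfl, rfl⟩ := eq_sub_sub hne g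
    tauto

theorem cn_M1' (hn : 2 ≤ n) (hstd : StandardI n ct I) (x : V n) (i j : Fin n)
    (hx : (sy ct I).Reg x) (hy : (sy ct I).Reg (nsw i j x)) (hs : sg I i ≠ sg I j)
    (h : |x i| ≠ |x j| ∨ (sg I i ≠ mval n I ∧ sg I j ≠ mval n I)) :
    Conn n ct I x (nsw i j x) := by
  have hne : i ≠ j := fun e => hs (by rw [e])
  rw [← reg_iff hn hstd] at hy
  have hx' := (reg_iff hn hstd x).2 hx
  rw [← refl_add hne] at hy ⊢
  refine conn_root hstd hx' hy (pos_add hne)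
    (fun g => hs ?_) (fun g => ?_)
  · rw [sp_add_iff hn hstd] at g
    exact g.1.trans g.2.symm
  obtain ⟨a, h1, h2, -, g | ⟨b, g1, _, g⟩ | ⟨b, g1, g2, g | g⟩⟩ := ex_of hstd hx g
  · exact ne_add_sh hne g
  · obtain ⟨rfl, rfl⟩ | ⟨rfl, rfl⟩ := eq_add_add hne g
    · exact hs g1.symm
    · exact hs g1
  · obtain ⟨rfl, rfl⟩ | ⟨rfl, rfl⟩ := eq_add_add hne g
    · tauto
    · rw [eq_comm] at g2; tauto
  · exact ne_add_sub g

theorem cn_M2 (hn : 2 ≤ n) (hstd : StandardI n ct I) (x : V n) (i j : Fin n)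
    (hx : (sy ct I).Reg x) (hy : (sy ct I).Reg (ng i (ng j x))) (hne : i ≠ j)
    (hs : sg I i = sg I j) (hm : sg I i ≠ mval n I) (hi : x i ≠ 0) (hj : x j ≠ 0) :
    Conn n ct I x (ng i (ng j x)) := by
  have e : ng i (ng j x) = sw i j (nsw i j x) := by
    funext a; simp only [sw, nsw, ng]; grind
  have e' : nsw i j x = sw i j (ng i (ng j x)) := by
    rw [e, sw_sw]
  have hz : (sy ct I).Reg (nsw i j x) := by
    rw [e']; exact reg_sw1 hy hs
  rw [← reg_iff hn hstd] at hy hz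
  have hx' := (reg_iff hn hstd x).2 hx
  refine conn_trans ?_ (conn_wi hz hy (by rw [e]; exact wi_sw hs _))
  rw [← refl_add hne] at hz ⊢
  refine conn_root hstd hx' hz (pos_add hne)
    (fun g => hm ?_) (fun g => ?_)
  · rw [sp_add_iff hn hstd] at g
    exact g.1
  have hm' : sg I j ≠ mval n I := by rw [← hs]; exact hm
  obtain ⟨a, h1, h2, -, g | ⟨b, _, g1, g⟩ | ⟨b, g1, g2, g | g⟩⟩ := ex_of hstd hx g
  · exact ne_add_sh hne g
  · obtain ⟨rfl, rfl⟩ | ⟨rfl, rfl⟩ := eq_add_add hne g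
    · exact hj g1
    · exact hi g1
  · obtain ⟨rfl, rfl⟩ | ⟨rfl, rfl⟩ := eq_add_add hne g
    · exact hm' g1
    · exact hm g1
  · exact ne_add_sub g

theorem cn_F1 (hn : 2 ≤ n) (hstd : StandardI n ct I) (x : V n) (i : Fin n) (hct : ct ≠ CType.D)
    (hx : (sy ct I).Reg x) (hy : (sy ct I).Reg (ng i x))
    (hm : sg I i ≠ mval n I)
    (h : (sy ct I).has (va x) (sg I i) 0 ↔ (sy ct I).has (va x) (mval n I) |x i|) :
    Conn n ct I x (ng i x) := by
  rw [← reg_iff hn hstd] at hy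
  have hx' := (reg_iff hn hstd x).2 hx
  rw [← sh_refl ct] at hy ⊢
  refine conn_root hstd hx' hy (pos_sh hct i)
    (fun g => hm (sp_ee_of hn hstd ((sp_sh i).1 g))) (fun g => ?_)
  obtain ⟨a, h1, h2, h3, g | ⟨b, _, g1, g⟩ | ⟨b, g1, g2, g | g⟩⟩ := ex_of hstd hx g
  · have := sh_inj g
    subst this
    tauto
  · refine ne_add_sh ?_ g.symm
    rintro rfl
    exact h2 g1
  · refine ne_add_sh ?_ g.symm
    rintro rfl
    exact h1 g1
  · refine ne_sub_sh ?_ g.symm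
    rintro rfl
    exact h1 g1

theorem cn_F2 (hn : 2 ≤ n) (hstd : StandardI n ct I) (x : V n) (i j : Fin n) (hct : ct = CType.D)
    (hx : (sy ct I).Reg x) (hy : (sy ct I).Reg (ng i x))
    (hs : sg I i = sg I j) (hm : sg I i ≠ mval n I) (hj : x j = 0) (hi : x i ≠ 0)
    (h : ¬ ((sy ct I).has (va x) (mval n I) |x i| ∧ (sy ct I).has (va x) (mval n I) 0)) :
    Conn n ct I x (ng i x) := by
  have hne : i ≠ j := by rintro rfl; exact hi hj
  have e : ng i x = sw i j (nsw i j x) := by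
    funext a; simp only [sw, nsw, ng]; grind
  have e' : nsw i j x = sw i j (ng i x) := by
    rw [e, sw_sw]
  have hz : (sy ct I).Reg (nsw i j x) := by
    rw [e']; exact reg_sw1 hy hs
  rw [← reg_iff hn hstd] at hy hz
  have hx' := (reg_iff hn hstd x).2 hx
  refine conn_trans ?_ (conn_wi hz hy (by rw [e]; exact wi_sw hs _))
  rw [← refl_add hne] at hz ⊢
  refine conn_root hstd hx' hz (pos_add hne)
    (fun g => hm ?_) (fun g => ?_)
  · rw [sp_add_iff hn hstd] at g
    exact g.1
  have hm' : sg I j ≠ mval n I := by rw [← hs]; exact hm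
  obtain ⟨a, h1, h2, h3, g | ⟨b, _, g1, g⟩ | ⟨b, g1, g2, g | g⟩⟩ := ex_of hstd hx g
  · exact ne_add_sh hne g
  · obtain ⟨rfl, rfl⟩ | ⟨rfl, rfl⟩ := eq_add_add hne g
    · tauto
    · exact hi g1
  · obtain ⟨rfl, rfl⟩ | ⟨rfl, rfl⟩ := eq_add_add hne g
    · exact hm' g1
    · exact hm g1
  · exact ne_add_sub g

theorem cn_F3 (hn : 2 ≤ n) (hstd : StandardI n ct I) (x : V n) (i k : Fin n) (hct : ct = CType.D)
    (hx : (sy ct I).Reg x) (hy : (sy ct I).Reg (ng i (ng k x)))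
    (hm : sg I i ≠ mval n I) (hk : sg I k = mval n I) (hik : |x i| = |x k|)
    (h : ¬ ((sy ct I).has (va x) (sg I i) 0 ∧ (sy ct I).has (va x) (mval n I) 0)) :
    Conn n ct I x (ng i (ng k x)) := by
  have hne : i ≠ k := by rintro rfl; exact hm hk
  have hlt : i < k := by
    by_contra hc
    have := sg_mono I (not_lt.1 hc)
    have := (sg_le I i).2
    omega
  have hx' := (reg_iff hn hstd x).2 hx
  rw [← reg_iff hn hstd] at hy
  rcases abs_eq_abs.1 hik with e | e
  · have e1 : ng i (ng k x) = sRefl (ee i + ee k) x := by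
      rw [refl_add hne]; funext a; simp only [nsw, ng]; grind
    rw [e1] at hy ⊢
    refine conn_root hstd hx' hy (pos_add hne) (fun g => hm ((sp_add_iff hn hstd).1 g).1)
      (fun g => ?_)
    obtain ⟨a, h1, h2, h3, g | ⟨b, g0, g1, g⟩ | ⟨b, g1, g2, g | g⟩⟩ := ex_of hstd hx g
    · exact ne_add_sh hne g
    · obtain ⟨rfl, rfl⟩ | ⟨rfl, rfl⟩ := eq_add_add hne g
      · exact h1 (g0.symm.trans hk)
      · exact h1 hk
    · obtain ⟨rfl, rfl⟩ | ⟨rfl, rfl⟩ := eq_add_add hne g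
      · tauto
      · exact h1 hk
    · exact ne_add_sub g
  · have e1 : ng i (ng k x) = sRefl (ee i - ee k) x := by
      rw [refl_sub hne]; funext a; simp only [sw, ng]; grind
    rw [e1] at hy ⊢
    refine conn_root hstd hx' hy (pos_sub hlt)
      (fun g => hm (((sp_sub_iff hn hstd).1 g).trans hk)) (fun g => ?_)
    obtain ⟨a, h1, h2, h3, g | ⟨b, g0, g1, g⟩ | ⟨b, g1, g2, g | g⟩⟩ := ex_of hstd hx g
    · exact ne_sub_sh hne g
    · exact ne_add_sub g.symm
    · exact ne_add_sub g.symm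
    · obtain ⟨rfl, rfl⟩ := eq_sub_sub hne g
      tauto

theorem sy_ax (hn : 2 ≤ n) (hstd : StandardI n ct I) : Ax (sy ct I) where
  refl x hx := ⟨conn_refl ((reg_iff hn hstd x).2 hx), conn_refl ((reg_iff hn hstd x).2 hx)⟩
  symm x y h := ⟨h.2, h.1⟩
  trans x y z h h' := ⟨conn_trans h.1 h'.1, conn_trans h'.2 h.2⟩
  w1 x i j hx hs _ := by
    have hy := (reg_iff hn hstd _).2 (reg_sw1 hx hs)
    have hx := (reg_iff hn hstd _).2 hx
    refine ⟨conn_wi hx hy (wi_sw hs x), conn_wi hy hx ?_⟩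
    have := wi_sw (ct := ct) hs (sw i j x)
    rwa [sw_sw] at this
  w2 x k hD hx hs := by
    have hy := (reg_iff hn hstd _).2 (reg_ngm hx hs)
    have hx := (reg_iff hn hstd _).2 hx
    refine ⟨conn_wi hx hy (wi_ng hn hD hs x), conn_wi hy hx ?_⟩
    have := wi_ng hn hD hs (ng k x)
    rwa [ng_ng] at this
  w3 x k l hD hx hkl hk hl := by
    have hy := (reg_iff hn hstd _).2 (reg_ngm (reg_ngm hx hl) hk)
    have hx := (reg_iff hn hstd _).2 hx
    refine ⟨conn_wi hx hy (wi_nn hn hD hstd hkl hk hl x), conn_wi hy hx ?_⟩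
    have := wi_nn hn hD hstd hkl hk hl (ng k (ng l x))
    have e : ng k (ng l (ng k (ng l x))) = x := by rw [ng_comm k l x, ng_ng, ng_ng]
    rwa [e] at this
  M1 x i j hx hy hs h := by
    have hne : i ≠ j := fun e => hs (by rw [e])
    refine ⟨cn_M1 hn hstd x i j hx hy hs h, ?_⟩
    have := cn_M1 hn hstd (sw i j x) i j hy (by rwa [sw_sw]) hs
      (by simp only [sw, if_true, if_neg hne.symm]; rw [ne_comm]; exact h)
    rwa [sw_sw] at this
  M1' x i j hx hy hs h := by
    have hne : i ≠ j := fun e => hs (by rw [e])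
    refine ⟨cn_M1' hn hstd x i j hx hy hs h, ?_⟩
    have := cn_M1' hn hstd (nsw i j x) i j hy (by rwa [nsw_nsw]) hs
      (by simp only [nsw, if_true, if_neg hne.symm, abs_neg]; rw [ne_comm]; exact h)
    rwa [nsw_nsw] at this
  M2 x i j hx hy hne hs hm hi hj := by
    refine ⟨cn_M2 hn hstd x i j hx hy hne hs hm hi hj, ?_⟩
    have e : ng i (ng j (ng i (ng j x))) = x := by rw [ng_comm i j x, ng_ng, ng_ng]
    have := cn_M2 hn hstd (ng i (ng j x)) i j hy (by rwa [e]) hne hs hm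
      (by simpa [ng, hne] using hi) (by simpa [ng, hne.symm] using hj)
    rwa [e] at this
  F1 x i hD hx hy hm hi h := by
    have e2 : |ng i x i| = |x i| := by simp [ng]
    refine ⟨cn_F1 hn hstd x i hD hx hy hm h, ?_⟩
    have := cn_F1 hn hstd (ng i x) i hD hy (by rwa [ng_ng]) hm
      (by rw [va_ng, e2]; exact h)
    rwa [ng_ng] at this
  F2 x i j hD hx hy hs hm hj hi h := by
    have e2 : |ng i x i| = |x i| := by simp [ng]
    refine ⟨cn_F2 hn hstd x i j hD hx hy hs hm hj hi h, ?_⟩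
    have := cn_F2 hn hstd (ng i x) i j hD hy (by rwa [ng_ng]) hs hm
      (by simp only [ng]; split_ifs <;> simp [hj]) (by simpa [ng] using hi)
      (by rw [va_ng, e2]; exact h)
    rwa [ng_ng] at this
  F3 x i k hD hx hy hm hk hik hi h := by
    have hne : i ≠ k := by rintro rfl; exact hm hk
    refine ⟨cn_F3 hn hstd x i k hD hx hy hm hk hik h, ?_⟩
    have e : ng i (ng k (ng i (ng k x))) = x := by rw [ng_comm i k x, ng_ng, ng_ng]
    have := cn_F3 hn hstd (ng i (ng k x)) i k hD hy (by rwa [e]) hm hk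
      (by simpa [ng, hne, hne.symm] using hik)
      (by rw [va_ng, va_ng]; exact h)
    rwa [e] at this
end

section
variable {n : ℕ} {ct : CType} {I : Finset (Fin n)}

theorem dec_aux {x : V n} (h : ∀ k ∈ I, 0 < inn x (alphaR n ct k)) (i : Fin n) :
    ∀ (d : ℕ) (hd : i.1 + d < n), sg I i = sg I ⟨i.1 + d, hd⟩ → (0 < d → x ⟨i.1 + d, hd⟩ < x i) := by
  intro d
  induction d with
  | zero => intro _ _ h0; omega
  | succ d ih =>
    intro hd hs _
    have hd' : i.1 + d < n := by omega
    have l1 : i ≤ ⟨i.1 + d, hd'⟩ := by simp [Fin.le_def]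
    have l2 : (⟨i.1 + d, hd'⟩ : Fin n) < ⟨i.1 + (d+1), hd⟩ := by simp only [Fin.lt_def]; omega
    have hs' : sg I i = sg I ⟨i.1 + d, hd'⟩ := by
      have a := sg_mono I l1
      have b := sg_mono I l2.le
      omega
    have hk : (⟨i.1 + d, hd'⟩ : Fin n) ∈ I :=
      (sg_eq_iff I (l1.trans l2.le)).1 hs _ l1 l2
    have hp := h _ hk
    rw [alpha_lt ct _ (by simp only; omega), inn_sub, inn_ee, inn_ee] at hp
    have hp : x ⟨i.1 + (d+1), hd⟩ < x ⟨i.1 + d, hd'⟩ := by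
      exact sub_pos.1 hp
    rcases Nat.eq_zero_or_pos d with rfl | h0
    · simpa using hp
    · exact hp.trans (ih hd' hs' h0)

theorem dec_lt {x : V n} (h : ∀ k ∈ I, 0 < inn x (alphaR n ct k)) {i j : Fin n} (hij : i < j)
    (hs : sg I i = sg I j) : x j < x i := by
  obtain ⟨j, hj⟩ := j
  obtain ⟨d, rfl⟩ := Nat.exists_eq_add_of_lt (show i.1 < j from hij)
  exact dec_aux h i (d+1) hj hs (by omega)

theorem dec_le {x : V n} (h : ∀ k ∈ I, 0 < inn x (alphaR n ct k)) {i j : Fin n} (hij : i ≤ j)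
    (hs : sg I i = sg I j) : x j ≤ x i := by
  rcases eq_or_lt_of_le hij with rfl | h'
  · exact le_rfl
  · exact (dec_lt h h' hs).le

theorem reg_plus (hn : 2 ≤ n) (hstd : StandardI n ct I) {x : V n}
    (h : ∀ k ∈ I, 0 < inn x (alphaR n ct k)) : (sy ct I).Reg x := by
  have key : ct ≠ CType.D → ∀ i, sg I i = mval n I → 0 < x i := by
    intro hct i hi
    obtain ⟨h1, h2⟩ := last_m hn hi
    have a := h _ h1
    have b := dec_le h (i := i) (j := ⟨n-1, by omega⟩)
      (by have := i.2; simp only [Fin.le_def]; omega) (hi.trans h2.symm)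
    have c : 0 < x ⟨n-1, by omega⟩ := by
      rw [alpha_last ct hn] at a
      cases ct with
      | B => simpa [inn_ee] using a
      | C => simpa [inn_ee, inn_smul] using a
      | D => exact absurd rfl hct
    linarith
  have key2 : ∀ i j, i < j → sg I i = mval n I → sg I j = mval n I → 0 < x i + x j := by
    intro i j hij hi hj
    by_cases hct : ct = CType.D
    · subst hct
      obtain ⟨h1, h2⟩ := last_m hn hi
      obtain ⟨-, h3⟩ := last_m2 hn hstd h1
      have a := h _ h1
      rw [alpha_last _ hn] at a
      simp only [inn_add, inn_ee] at a
      have l := j.2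
      have l' : i.1 < j.1 := hij
      have b := dec_le h (i := i) (j := ⟨n-2, by omega⟩)
        (by simp only [Fin.le_def]; omega) (hi.trans h3.symm)
      have c := dec_le h (i := j) (j := ⟨n-1, by omega⟩)
        (by simp only [Fin.le_def]; omega) (hj.trans h2.symm)
      linarith
    · exact add_pos (key hct i hi) (key hct j hj)
  refine ⟨fun i j hij hs => ⟨?_, fun hm e => ?_⟩, fun hD i hi => (key hD i hi).ne'⟩
  · rcases lt_or_gt_of_ne hij with l | l
    · exact (dec_lt h l hs).ne'
    · exact (dec_lt h l (Eq.symm hs)).ne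
  · have hm' : sg I j = mval n I := (Eq.symm hs).trans hm
    rcases lt_or_gt_of_ne hij with l | l
    · have := key2 i j l hm hm'; linarith
    · have := key2 j i l hm' hm; linarith

theorem vp_sw (i j : Fin n) (x : V n) : va (sw i j x) = va x ∘ Equiv.swap i j := by
  funext k
  simp only [va, sw, Function.comp, Equiv.swap_apply_def]
  split_ifs <;> rfl
theorem vp_nsw (i j : Fin n) (x : V n) : va (nsw i j x) = va x ∘ Equiv.swap i j := by
  funext k
  simp only [va, nsw, Function.comp, Equiv.swap_apply_def]
  split_ifs <;> simp

theorem step_perm (hn : 2 ≤ n) (k : Fin n) (x : V n) :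
    ∃ σ : Equiv.Perm (Fin n), va (sRefl (alphaR n ct k) x) = va x ∘ σ := by
  by_cases h : k.1 + 1 < n
  · rw [alpha_lt ct k h, refl_sub (by intro e; simpa using congrArg Fin.val e)]
    exact ⟨_, vp_sw _ _ _⟩
  · have : k = ⟨n-1, by omega⟩ := by ext; simp; have := k.2; omega
    rw [this, alpha_last ct hn]
    cases ct with
    | B => simp only [refl_ee, va_ng]; exact ⟨1, rfl⟩
    | C => simp only [refl_2ee, va_ng]; exact ⟨1, rfl⟩
    | D =>
      simp only
      rw [refl_add (by intro e; have := congrArg Fin.val e; simp at this; omega)]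
      exact ⟨_, vp_nsw _ _ _⟩

theorem orb_perm (hn : 2 ≤ n) {x y : V n} (h : WOrb n ct x y) :
    ∃ σ : Equiv.Perm (Fin n), va y = va x ∘ σ := by
  unfold WOrb WIOrb at h
  induction h with
  | refl => exact ⟨1, rfl⟩
  | tail _ hs ih =>
    obtain ⟨σ, e⟩ := ih
    obtain ⟨k, -, rfl⟩ := hs
    obtain ⟨τ, e'⟩ := step_perm (ct := ct) hn k _
    refine ⟨τ.trans σ, ?_⟩
    rw [e', e]; rfl

theorem qval_sg {J : Finset (Fin n)} {k : Fin n} (hk : k ∉ J) :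
    sg J k < mval n J ∧ qval n J (sg J k) = k.1 + 1 := by
  have h1 : sg J k < mval n J := by
    refine lt_of_le_of_ne (sg_le J k).2 fun e => hk ?_
    exact sg_m_iff J |>.1 e k le_rfl
  refine ⟨h1, ?_⟩
  have h0 := (sg_le J k).1
  have a : k.1 + 1 ≤ qval n J (sg J k) := by
    by_contra hc
    exact absurd ((q_lt_iff J k (sg J k) h0 h1).1 (by omega)) (lt_irrefl _)
  have hb : qval n J (sg J k) ≤ n := by
    have hl : sg J k - 1 < ((Finset.univ \ J).sort (· ≤ ·)).length := by
      rw [mval_eq] at h1; rw [Finset.length_sort]; omega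
    unfold qval
    rw [if_neg (by omega), if_pos h1, Qlist, List.getD_eq_getElem _ _ (by simpa using hl)]
    rw [List.getElem_map]
    exact (Fin.is_lt _)
  by_cases hl : k.1 + 1 < n
  · have b := (q_lt_iff J ⟨k.1+1, hl⟩ (sg J k) h0 h1).2 (by
      have l : k < ⟨k.1+1, hl⟩ := by simp [Fin.lt_def]
      refine lt_of_le_of_ne (sg_mono J l.le) fun e => hk ?_
      exact (sg_eq_iff J l.le).1 e k le_rfl l)
    simp only at b
    omega
  · have := k.2; omega

theorem aval_sg {J : Finset (Fin n)} {lbar : V n} (hJ : StandardI n ct J) {k : Fin n} (hk : k ∉ J) :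
    sg J k < mval n J ∧ aval n ct J lbar (sg J k) = lbar k := by
  obtain ⟨h1, h2⟩ := qval_sg hk
  refine ⟨h1, ?_⟩
  have hv : qv n ct J (sg J k) = k.1 + 1 := by simp [qv, hJ, h2]
  simp [aval, h1, hv]

theorem sg_last (hn : 2 ≤ n) {J : Finset (Fin n)} (h : (⟨n-1, by omega⟩ : Fin n) ∉ J) :
    sg J ⟨n-1, by omega⟩ = mval n J - 1 := by
  have h1 := (qval_sg h).1
  have h2 : (Finset.univ \ J) ⊆ insert (⟨n-1, by omega⟩ : Fin n)
      ((Finset.univ \ J).filter (fun k => k < ⟨n-1, by omega⟩)) := by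
    intro k hk
    rw [Finset.mem_insert, Finset.mem_filter]
    by_cases e : k = ⟨n-1, by omega⟩
    · exact Or.inl e
    · refine Or.inr ⟨hk, ?_⟩
      have := k.2
      rw [Fin.ext_iff] at e
      simp only [Fin.lt_def] at *; omega
  have h3 := (Finset.card_le_card h2).trans (Finset.card_insert_le _ _)
  rw [mval_eq] at *
  unfold sg at *
  omega

theorem cover (hn : 2 ≤ n) {J : Finset (Fin n)} {lbar : V n} (hdom : DominantW n ct lbar)
    (hJ : ∀ i : Fin n, i ∈ J ↔ inn lbar (alphaR n ct i) = 0)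
    (hA : 0 < aval n ct J lbar (mval n J - 1)) (k : Fin n) (hk : lbar k ≠ 0) :
    ∃ t, 1 ≤ t ∧ t < mval n J ∧ aval n ct J lbar t = |lbar k| := by
  have hmv := mval_eq J
  have last := alpha_last ct hn
  have step : ∀ (i : ℕ) (h : i + 1 < n), lbar ⟨i+1, h⟩ ≤ lbar ⟨i, by omega⟩ := by
    intro i h
    have := hdom ⟨i, by omega⟩
    rw [alpha_lt ct _ h, inn_sub, inn_ee, inn_ee] at this
    simpa using this
  have en : (⟨n-2+1, by omega⟩ : Fin n) = ⟨n-1, by omega⟩ := by ext; simp; omega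
  have step2 := step (n-2) (by omega)
  rw [en] at step2
  have hsubJ : (⟨n-2, by omega⟩ : Fin n) ∈ J ↔ lbar ⟨n-2, by omega⟩ = lbar ⟨n-1, by omega⟩ := by
    rw [hJ, alpha_lt ct _ (by simp only; omega), inn_sub, inn_ee, inn_ee, sub_eq_zero]
    simp only [en]
  have hst : StandardI n ct J := by
    intro hD h2
    by_contra hc
    push Not at hc
    have hns : ¬ StandardI n ct J := by
      intro hs
      rcases hs hD h2 with h | h
      · exact hc.1 h
      · exact h hc.2
    have hq : qv n ct J (mval n J - 1) = n := by simp [qv, hns]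
    have hA' := hA
    unfold aval at hA'
    rw [if_pos (by omega)] at hA'
    simp only [hq] at hA'
    rw [dif_pos (by omega)] at hA'
    have h3 := (hJ _).1 hc.2
    rw [last] at h3
    subst hD
    simp only [inn_add, inn_ee] at h3
    linarith
  have nn : 0 ≤ lbar ⟨n-1, by omega⟩ := by
    have h3 := hdom ⟨n-1, by omega⟩
    rw [last] at h3
    cases ct with
    | B => simpa [inn_ee] using h3
    | C => simpa [inn_ee, inn_smul] using h3
    | D =>
      simp only [inn_add, inn_ee] at h3
      by_contra hneg
      push Not at hneg
      have h4 : (⟨n-2, by omega⟩ : Fin n) ∉ J := by rw [hsubJ]; intro e; linarith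
      have h5 := (hst rfl hn).resolve_left h4
      have h6 := (aval_sg (lbar := lbar) hst h5).2
      rw [sg_last hn h5] at h6
      linarith
  have anti : ∀ (d i : ℕ) (h : i + d < n), lbar ⟨i+d, h⟩ ≤ lbar ⟨i, by omega⟩ := by
    intro d
    induction d with
    | zero => intro i h; exact le_rfl
    | succ d ih => intro i h; exact (step (i+d) h).trans (ih i (by omega))
  have pos : ∀ i, 0 ≤ lbar i := by
    intro i
    have l := i.2
    have := anti (n-1-i.1) i.1 (by omega)
    have e : (⟨i.1 + (n-1-i.1), by omega⟩ : Fin n) = ⟨n-1, by omega⟩ := by ext; simp; omega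
    rw [e] at this
    exact nn.trans this
  rw [abs_of_nonneg (pos k)]
  obtain ⟨k', hk', hmax⟩ := Finset.exists_max_image
    (Finset.univ.filter (fun i => lbar i = lbar k)) (fun i => i) ⟨k, by simp⟩
  simp only [Finset.mem_filter, Finset.mem_univ, true_and] at hk' hmax
  have hnJ : k' ∉ J := by
    intro hj
    rw [hJ] at hj
    by_cases hl : k'.1 + 1 < n
    · rw [alpha_lt ct _ hl, inn_sub, inn_ee, inn_ee, sub_eq_zero] at hj
      have := hmax _ (hj.symm.trans hk')
      simp only [Fin.le_def] at this
      omega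
    · have e : k' = ⟨n-1, by omega⟩ := by ext; simp; have := k'.2; omega
      rw [e] at hk'
      rw [e, last] at hj
      apply hk
      rw [← hk']
      cases ct with
      | B => simpa [inn_ee] using hj
      | C => simpa [inn_ee, inn_smul] using hj
      | D =>
        simp only [inn_add, inn_ee] at hj
        linarith
  obtain ⟨a, b⟩ := aval_sg (lbar := lbar) hst hnJ
  exact ⟨sg J k', (sg_le J k').1, a, b.trans hk'⟩
end

section
variable {n : ℕ} {ct : CType} {I : Finset (Fin n)}

/-- multiplicity -/
noncomputable def cn (S : Sys n) (w : V n) (s : ℕ) (a : ℝ) : ℕ :=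
  (Finset.univ.filter (fun i : Fin n => S.seg i = s ∧ w i = a)).card
/-- capacity -/
noncomputable def cap (S : Sys n) (s : ℕ) (a : ℝ) : ℕ := if s = S.m ∨ a = 0 then 1 else 2

theorem cn_le {S : Sys n} {x : V n} (hx : S.Reg x) (s : ℕ) (a : ℝ) : cn S (va x) s a ≤ cap S s a := by
  unfold cn cap
  have two : ∀ i j, i ≠ j → S.seg i = S.seg j → |x i| = |x j| → x i = - x j := by
    intro i j h hs e
    rcases abs_eq_abs.1 e with e | e
    · exact absurd e (hx.1 i j h hs).1
    · exact e
  split_ifs with h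
  · rw [Finset.card_le_one]
    intro i hi j hj
    simp only [Finset.mem_filter, Finset.mem_univ, true_and] at hi hj
    simp only [va] at hi hj
    by_contra hne
    have e := two i j hne (hi.1.trans hj.1.symm) (hi.2.trans hj.2.symm)
    rcases h with h | h
    · exact (hx.1 i j hne (hi.1.trans hj.1.symm)).2 (hi.1.trans h) e
    · rw [h] at hi hj
      exact (hx.1 i j hne (hi.1.trans hj.1.symm)).1
        ((abs_eq_zero.1 hi.2).trans (abs_eq_zero.1 hj.2).symm)
  · by_contra hc
    push Not at hc
    obtain ⟨i, j, k, hi, hj, hk, hij, hik, hjk⟩ := Finset.two_lt_card_iff.1 hc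
    simp only [Finset.mem_filter, Finset.mem_univ, true_and] at hi hj hk
    simp only [va] at hi hj hk
    have e1 := two i j hij (hi.1.trans hj.1.symm) (hi.2.trans hj.2.symm)
    have e2 := two i k hik (hi.1.trans hk.1.symm) (hi.2.trans hk.2.symm)
    exact (hx.1 j k hjk (hj.1.trans hk.1.symm)).1 (by linarith)

theorem cn_ge {S : Sys n} {w : V n} {s : ℕ} {a : ℝ} (h : S.full w s a) : cap S s a ≤ cn S w s a := by
  unfold cn cap
  unfold Sys.full at h
  split_ifs at h ⊢ with hc
  · obtain ⟨i, h1, h2⟩ := h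
    exact Finset.card_pos.2 ⟨i, by simp [h1, h2]⟩
  · obtain ⟨i, j, hij, h1, h2, h3, h4⟩ := h
    exact Finset.one_lt_card.2 ⟨i, by simp [h1, h3], j, by simp [h2, h4], hij⟩

theorem count {S : Sys n} {x y : V n} (hx : S.Reg x) (hy : S.Reg y) {σ : Equiv.Perm (Fin n)}
    (hσ : va x = va y ∘ σ) {R : ℕ → Prop} {T : ℝ → Prop}
    (h1 : ∀ s a, R s → ¬ T a → S.full (va y) s a)
    (h2 : ∀ s a, ¬ R s → T a → ¬ S.has (va y) s a) :
    (∀ s a, R s → ¬ T a → cn S (va x) s a = cap S s a) ∧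
    (∀ s a, ¬ R s → T a → ¬ S.has (va x) s a) := by
  have hA : ∀ w : V n,
      (Finset.univ.filter (fun i => R (S.seg i) ∧ ¬ T (w i))).card +
        (Finset.univ.filter (fun i => T (w i))).card =
      (Finset.univ.filter (fun i => R (S.seg i))).card +
        (Finset.univ.filter (fun i => ¬ R (S.seg i) ∧ T (w i))).card := by
    intro w
    simp only [Finset.card_filter, ← Finset.sum_add_distrib]
    apply Finset.sum_congr rfl
    intro i _
    by_cases a : R (S.seg i) <;> by_cases b : T (w i) <;> simp [a, b]
  have hT : (Finset.univ.filter (fun i => T (va x i))).card =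
      (Finset.univ.filter (fun i => T (va y i))).card := by
    rw [hσ]
    simp only [Finset.card_filter, Function.comp]
    exact Equiv.sum_comp σ (fun i => if T (va y i) then 1 else 0)
  have hBy : (Finset.univ.filter (fun i => ¬ R (S.seg i) ∧ T (va y i))).card = 0 := by
    rw [Finset.card_eq_zero, Finset.filter_eq_empty_iff]
    rintro i - ⟨a, b⟩
    exact h2 _ _ a b ⟨i, rfl, rfl⟩
  let P : Finset (ℕ × ℝ) :=
    (Finset.univ.filter (fun i => R (S.seg i) ∧ ¬ T (va y i))).image (fun i => (S.seg i, va y i))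
  have hP : ∀ s a, R s → ¬ T a → (s, a) ∈ P := by
    intro s a hs ha
    obtain ⟨i, rfl, rfl⟩ := has_of_full (h1 s a hs ha)
    exact Finset.mem_image.2 ⟨i, by simp [hs, ha], rfl⟩
  have hPR : ∀ p ∈ P, R p.1 ∧ ¬ T p.2 := by
    intro p hp
    obtain ⟨i, hi, rfl⟩ := Finset.mem_image.1 hp
    simpa using hi
  have hsum : ∀ w : V n, (Finset.univ.filter (fun i => R (S.seg i) ∧ ¬ T (w i))).card =
      ∑ p ∈ P, cn S w p.1 p.2 := by
    intro w
    rw [Finset.card_eq_sum_card_fiberwise (f := fun i => (S.seg i, w i)) (t := P)]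
    · apply Finset.sum_congr rfl
      intro p hp
      unfold cn
      congr 1
      ext i
      simp only [Finset.mem_filter, Finset.mem_univ, true_and]
      constructor
      · rintro ⟨_, rfl⟩; exact ⟨rfl, rfl⟩
      · rintro ⟨e1, e2⟩
        have := hPR p hp
        rw [e1, e2]
        exact ⟨this, rfl⟩
    · intro i hi
      simp only [Finset.coe_filter, Finset.mem_univ, true_and, Set.mem_ofPred_eq] at hi
      exact hP _ _ hi.1 hi.2
  have hle : ∀ p ∈ P, cn S (va x) p.1 p.2 ≤ cn S (va y) p.1 p.2 := fun p hp =>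
    (cn_le hx _ _).trans (cn_ge (h1 _ _ (hPR p hp).1 (hPR p hp).2))
  have hAx := hA (va x)
  have hAy := hA (va y)
  rw [hsum] at hAx hAy
  have hS := Finset.sum_le_sum hle
  have hBx : (Finset.univ.filter (fun i => ¬ R (S.seg i) ∧ T (va x i))).card = 0 := by omega
  have hE : ∑ p ∈ P, cn S (va x) p.1 p.2 = ∑ p ∈ P, cn S (va y) p.1 p.2 := by omega
  constructor
  · intro s a hs ha
    have := (Finset.sum_eq_sum_iff_of_le hle).1 hE _ (hP s a hs ha)
    have g := cn_ge (h1 s a hs ha)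
    have g' := cn_le hx s a
    simp only at this
    omega
  · rintro s a hs ha ⟨i, rfl, rfl⟩
    rw [Finset.card_eq_zero, Finset.filter_eq_empty_iff] at hBx
    exact hBx (Finset.mem_univ i) ⟨hs, ha⟩

theorem odd_aux {S : Sys n} {x : V n} {i j : Fin n} (hij : i ≠ j) (hx : S.Reg x)
    (hy : S.Reg (ng i (ng j x))) (hne : ng i (ng j x) = sw i j x → S.seg i = S.seg j → False)
    (hi : S.seg i ≠ S.m) (h0 : x i ≠ 0) : S.odd (va x) i := by
  refine ⟨hi, by simpa [va] using h0, fun k hk hs e => ?_⟩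
  have e' : x k = - x i := by
    rcases abs_eq_abs.1 e with e | e
    · exact absurd e (hx.1 k i hk hs).1
    · exact e
  by_cases hkj : k = j
  · subst hkj
    apply hne _ hs.symm
    funext a
    simp only [ng, sw]
    split_ifs with c1 c2 c2
    · exact absurd (c1.symm.trans c2) hij
    · rw [c1, e']
    · rw [c2, e', neg_neg]
    · rfl
  · have := (hy.1 k i hk hs).1
    apply this
    simp [ng, hk, hkj, hij, e']

theorem final (hn : 2 ≤ n) {J : Finset (Fin n)} {lam lbar : V n} (hstd : StandardI n ct I)
    (horb : WOrb n ct lam lbar) (hdom : DominantW n ct lbar)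
    (hJ : ∀ i : Fin n, i ∈ J ↔ inn lbar (alphaR n ct i) = 0)
    (hA : 0 < aval n ct J lbar (mval n J - 1)) {w' : V n} {σ : Equiv.Perm (Fin n)}
    (hw : w' = va lam ∘ σ) (hr : ∃ x, (sy ct I).Reg x ∧ va x = w') (hc : (sy ct I).Cut w') :
    StronglySepSys n ct I J lbar := by
  obtain ⟨y, hy, rfl⟩ := hr
  obtain ⟨R, T, c1, c2, c3, ⟨u, u0, uT⟩, z, zm, zR⟩ := hc
  obtain ⟨σ1, e1⟩ := orb_perm hn horb
  have hm1 := mval_eq I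
  have hmJ := mval_eq J
  have hz := sg_le I z
  have zm' : sg I z ≠ mval n I := zm
  have zR' : R (sg I z) := zR
  -- the value at u occurs
  obtain ⟨t, t1, t2, t3⟩ : ∃ t, 1 ≤ t ∧ t < mval n J ∧ aval n ct J lbar t = va y u := by
    have h : va y u = va lbar (σ1.symm (σ u)) := by
      rw [hw, e1]; simp
    rw [h] at u0 ⊢
    exact cover hn hdom hJ hA _ (by simpa [va] using u0)
  have am : aval n ct J lbar (mval n J) = 0 := by simp [aval]
  have orbs : ∀ {mu}, (∃ τ : Equiv.Perm (Fin n), va mu = va lbar ∘ τ) →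
      ∃ τ : Equiv.Perm (Fin n), va mu = va y ∘ τ := by
    rintro mu ⟨τ, e⟩
    refine ⟨(τ.trans σ1).trans σ.symm, ?_⟩
    rw [e, e1, hw]
    funext k
    simp
  refine ⟨((Finset.Icc 1 (mval n I)).filter R,
    (Finset.Icc 1 (mval n J)).filter (fun t => ¬ T (aval n ct J lbar t))), ?_, ?_⟩
  · intro mu hmu
    obtain ⟨hmo, -, hmp⟩ := hmu
    have rmu := reg_plus hn hstd hmp
    obtain ⟨τ0, eτ0⟩ := orb_perm hn hmo
    obtain ⟨τ, eτ⟩ := orbs ⟨τ0, eτ0⟩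
    obtain ⟨k1, k2⟩ := count rmu hy eτ c1 c2
    have ncn : ∀ (x : V n) s a, 1 ≤ s → s ≤ mval n I → nsl n ct I x s a = cn (sy ct I) (va x) s a := by
      intro x s a g1 g2
      rw [nsl_eq hstd x g1 g2]; rfl
    refine ⟨⟨sg I z, ?_⟩, ⟨t, ?_⟩, Finset.filter_subset _ _, Finset.filter_subset _ _, ?_, ?_, ?_, ?_, ?_⟩
    · exact Finset.mem_filter.2 ⟨Finset.mem_Icc.2 hz, zR'⟩
    · exact Finset.mem_filter.2 ⟨Finset.mem_Icc.2 ⟨t1, t2.le⟩, by rw [t3]; exact uT⟩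
    · omega
    · omega
    · intro s hs t ht nu hnu rnu
      simp only [Finset.mem_filter, Finset.mem_Icc] at hs ht
      rw [ncn _ _ _ hs.1.1 hs.1.2, ncn _ _ _ hs.1.1 hs.1.2, k1 _ _ hs.2 ht.2]
      exact cn_le ((reg_iff hn hstd _).1 rnu) _ _
    · intro s hs hs' t ht ht'
      rw [Finset.mem_filter, not_and] at hs' ht'
      have b := k2 s _ (hs' hs) (not_not.1 (ht' ht))
      rw [Finset.mem_Icc] at hs
      rw [← nsl_has hstd mu hs.1 hs.2] at b
      omega
    · have q1 : mval n I ∈ (Finset.Icc 1 (mval n I)).filter R ↔ R (mval n I) := by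
        rw [Finset.mem_filter, Finset.mem_Icc]
        exact ⟨fun h => h.2, fun h => ⟨⟨by omega, le_rfl⟩, h⟩⟩
      have q2 : mval n J ∈ (Finset.Icc 1 (mval n J)).filter (fun t => ¬ T (aval n ct J lbar t)) ↔
          ¬ T 0 := by
        rw [Finset.mem_filter, Finset.mem_Icc, am]
        exact ⟨fun h => h.2, fun h => ⟨⟨by omega, le_rfl⟩, h⟩⟩
      have c3' : (¬ ct = CType.D ∧ (R (mval n I) ↔ T 0)) ∨ (ct = CType.D ∧ (R (mval n I) ↔ ¬ T 0)) := c3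
      cases ct with
      | B => simp only at q1 q2 ⊢; rw [q1, q2]; simpa using c3'
      | C => simp only at q1 q2 ⊢; rw [q1, q2]; simpa using c3'
      | D => simp only at q1 q2 ⊢; rw [q1, q2]; simpa using c3'
  · have q1 : sg I z ∈ (Finset.Icc 1 (mval n I)).filter R :=
      Finset.mem_filter.2 ⟨Finset.mem_Icc.2 hz, zR'⟩
    have q2 : t ∈ (Finset.Icc 1 (mval n J)).filter (fun t => ¬ T (aval n ct J lbar t)) :=
      Finset.mem_filter.2 ⟨Finset.mem_Icc.2 ⟨t1, t2.le⟩, by rw [t3]; exact uT⟩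
    rintro (h | h | h | h)
    · rw [(Prod.mk.inj h).2, Finset.mem_singleton] at q2; omega
    · rw [(Prod.mk.inj h).2, Finset.mem_singleton] at q2; omega
    · rw [(Prod.mk.inj h).1, Finset.mem_singleton] at q1; omega
    · rw [(Prod.mk.inj h).1, Finset.mem_singleton] at q1; omega
end

/-- Proposition 5.8 / `ssprop3`. -/
theorem statement6 (n : ℕ) (ct : CType) (I J : Finset (Fin n)) (lam lbar : V n)
    (hstd : StandardI n ct I)
    (hint : IntegralW n ct lam) (hreg : RegI n ct I lam)
    (horb : WOrb n ct lam lbar) (hdom : DominantW n ct lbar)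
    (hJ : ∀ i : Fin n, i ∈ J ↔ inn lbar (alphaR n ct i) = 0)
    (hA : 0 < aval n ct J lbar (mval n J - 1))
    (i j : Fin n)
    (hiq : i.1 + 1 ≤ qv n ct I (mval n I - 1))
    (hjq : j.1 + 1 ≤ qv n ct I (mval n I - 1))
    (hij0 : lam i * lam j ≠ 0)
    (hregij : RegI n ct I (sRefl (ee i) (sRefl (ee j) lam)))
    (hnc : ¬ Conn n ct I lam (sRefl (ee i) (sRefl (ee j) lam))) :
    StronglySepSys n ct I J lbar := by
  rw [refl_ee, refl_ee] at hregij hnc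
  have hij : i ≠ j := by
    rintro rfl
    rw [ng_ng] at hnc
    exact hnc (conn_refl hreg)
  have hn : 2 ≤ n := by
    have := i.2; have := j.2
    have : i.1 ≠ j.1 := fun e => hij (Fin.ext e)
    omega
  have hx := (reg_iff hn hstd _).1 hreg
  have hy := (reg_iff hn hstd _).1 hregij
  have hne : ng i (ng j lam) = sw i j lam → (sy ct I).seg i = (sy ct I).seg j → False := by
    intro e hs
    exact hnc (conn_wi hreg hregij (by rw [e]; exact wi_sw hs lam))
  have oi : (sy ct I).odd (va lam) i :=
    odd_aux hij hx hy hne (hiq_iff hstd i hiq) (left_ne_zero_of_mul hij0)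
  have oj : (sy ct I).odd (va lam) j := by
    refine odd_aux hij.symm hx (by rw [ng_comm]; exact hy) (fun e hs => ?_)
      (hiq_iff hstd j hjq) (right_ne_zero_of_mul hij0)
    rw [ng_comm, sw_comm] at e
    exact hne e hs.symm
  obtain ⟨w', σ, hw, hr, hc⟩ := cut_main (sy_ax hn hstd)
    (show (sy ct I).Cex (va lam) i j from ⟨oi, oj, lam, hx, rfl, fun h => hnc h.1⟩)
  exact final hn hstd horb hdom hJ hA hw hr hc


end JantzenBlocks
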